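/- For every positive integer d and every real c > 0 there is a constant C depending only on c and d such that: for every n and every degree-d polynomial threshold function f : ℝⁿ → {−1,1} in n variables, the average sensitivity satisfies as(f) ≤ C·n^{5/6+c}. -/

import Mathlib

open MeasureTheory ProbabilityTheory
open scoped ENNReal

/-- The uniform (Bernoulli) measure on `{-1, 1}`. -/
noncomputable def bernoulliPM : Measure ℝ :=
  ((1 : ℝ≥0∞) / 2) • Measure.dirac (1 : ℝ) + ((1 : ℝ≥0∞) / 2) • Measure.dirac (-1 : ℝ)

/-- The uniform measure on `{-1, 1}ⁿ`. -/
noncomputable def bernoulliCube (n : ℕ) : Measure (Fin n → ℝ) :=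
  Measure.pi fun _ => bernoulliPM

/-- The sign function, with value `1` at `0`. -/
noncomputable def psign (r : ℝ) : ℝ := if 0 ≤ r then 1 else -1

/-- The average sensitivity `as(f) = ∑ᵢ Pr_A(f(A) ≠ f(A⁽ⁱ⁾))`, where `A⁽ⁱ⁾` is obtained from
`A` by flipping the sign of the `i`-th coordinate. -/
noncomputable def avgSensitivity (n : ℕ) (f : (Fin n → ℝ) → ℝ) : ℝ :=
  ∑ i : Fin n,
    ((bernoulliCube n) {a | f a ≠ f (Function.update a i (-(a i)))}).toReal

namespace PTFas

noncomputable section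

/-- expectation over a finite type -/
def ex {Ω : Type*} [Fintype Ω] (f : Ω → ℝ) : ℝ := (∑ x, f x) / (Fintype.card Ω : ℝ)

def ind (P : Prop) : ℝ := by classical exact if P then 1 else 0

lemma ind_of {P : Prop} (h : P) : ind P = 1 := by simp [ind, h]
lemma ind_not {P : Prop} (h : ¬ P) : ind P = 0 := by simp [ind, h]
lemma ind_nonneg (P : Prop) : 0 ≤ ind P := by unfold ind; split_ifs <;> norm_num
lemma ind_le_one (P : Prop) : ind P ≤ 1 := by unfold ind; split_ifs <;> norm_num
lemma ind_mono {P R : Prop} (h : P → R) : ind P ≤ ind R := by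
  by_cases hP : P
  · rw [ind_of hP, ind_of (h hP)]
  · rw [ind_not hP]; exact ind_nonneg _
lemma ind_add_not (P : Prop) : ind P + ind (¬ P) = 1 := by
  by_cases hP : P
  · rw [ind_of hP, ind_not (by simpa using hP)]; norm_num
  · rw [ind_not hP, ind_of hP]; norm_num
lemma ind_or_le (P R : Prop) : ind (P ∨ R) ≤ ind P + ind R := by
  by_cases hP : P
  · rw [ind_of hP, ind_of (Or.inl hP)]; linarith [ind_nonneg R]
  · by_cases hR : R
    · rw [ind_of hR, ind_of (Or.inr hR)]; linarith [ind_nonneg P]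
    · rw [ind_not (by tauto)]; linarith [ind_nonneg P, ind_nonneg R]
lemma ind_congr {P R : Prop} (h : P ↔ R) : ind P = ind R := by rw [propext h]
lemma ind_sq (P : Prop) : ind P ^ 2 = ind P := by unfold ind; split_ifs <;> norm_num

section ex
variable {Ω Ω' : Type*} [Fintype Ω] [Fintype Ω']

lemma ex_add (f g : Ω → ℝ) : ex (fun x => f x + g x) = ex f + ex g := by
  simp [ex, Finset.sum_add_distrib, add_div]
lemma ex_sub (f g : Ω → ℝ) : ex (fun x => f x - g x) = ex f - ex g := by
  simp [ex, Finset.sum_sub_distrib, sub_div]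
lemma ex_neg (f : Ω → ℝ) : ex (fun x => - f x) = - ex f := by
  simp [ex, Finset.sum_neg_distrib, neg_div]
lemma ex_mul_left (a : ℝ) (f : Ω → ℝ) : ex (fun x => a * f x) = a * ex f := by
  simp [ex, ← Finset.mul_sum, mul_div_assoc]
lemma ex_mul_right (a : ℝ) (f : Ω → ℝ) : ex (fun x => f x * a) = ex f * a := by
  simp only [mul_comm _ a, ex_mul_left]
lemma ex_div (a : ℝ) (f : Ω → ℝ) : ex (fun x => f x / a) = ex f / a := by
  simp only [div_eq_mul_inv, ex_mul_right]
lemma ex_sum {κ : Type*} (s : Finset κ) (f : κ → Ω → ℝ) :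
    ex (fun x => ∑ k ∈ s, f k x) = ∑ k ∈ s, ex (f k) := by
  simp only [ex]; rw [Finset.sum_comm, Finset.sum_div]
lemma ex_mono {f g : Ω → ℝ} (h : ∀ x, f x ≤ g x) : ex f ≤ ex g := by
  unfold ex; gcongr; exact h _
lemma ex_nonneg {f : Ω → ℝ} (h : ∀ x, 0 ≤ f x) : 0 ≤ ex f := by
  unfold ex; exact div_nonneg (Finset.sum_nonneg fun x _ => h x) (by positivity)
lemma ex_const [Nonempty Ω] (a : ℝ) : ex (fun _ : Ω => a) = a := by
  have : (Fintype.card Ω : ℝ) ≠ 0 := by exact_mod_cast Fintype.card_ne_zero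
  simp [ex]
lemma ex_le_const [Nonempty Ω] {f : Ω → ℝ} {a : ℝ} (h : ∀ x, f x ≤ a) : ex f ≤ a := by
  rw [← ex_const (Ω := Ω) a]; exact ex_mono h
lemma abs_ex_le (f : Ω → ℝ) : |ex f| ≤ ex (fun x => |f x|) := by
  unfold ex
  rw [abs_div, abs_of_nonneg (by positivity : (0:ℝ) ≤ (Fintype.card Ω : ℝ))]
  gcongr
  exact Finset.abs_sum_le_sum_abs _ _
lemma ex_equiv (e : Ω ≃ Ω') (f : Ω' → ℝ) : ex (fun x => f (e x)) = ex f := by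
  unfold ex; rw [Fintype.card_congr e, Equiv.sum_comp]
lemma ex_prod (f : Ω × Ω' → ℝ) : ex f = ex (fun x => ex (fun y => f (x, y))) := by
  simp only [ex, Fintype.sum_prod_type, Fintype.card_prod, Nat.cast_mul, ← Finset.sum_div,
    div_div]
  rw [mul_comm]
lemma ex_comm (f : Ω → Ω' → ℝ) :
    ex (fun x => ex (fun y => f x y)) = ex (fun y => ex (fun x => f x y)) := by
  simp only [ex, ← Finset.sum_div, div_div]
  rw [Finset.sum_comm, mul_comm]
lemma exists_ex_le [Nonempty Ω] (f : Ω → ℝ) : ∃ x, ex f ≤ f x := by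
  by_contra h
  push Not at h
  have hc : (0:ℝ) < Fintype.card Ω := by exact_mod_cast Fintype.card_pos
  have : ∑ x, f x < ∑ x : Ω, ex f := by
    apply Finset.sum_lt_sum_of_nonempty Finset.univ_nonempty
    intro x _; exact h x
  simp only [Finset.sum_const, nsmul_eq_mul, Finset.card_univ] at this
  unfold ex at this
  rw [mul_div_cancel₀ _ hc.ne'] at this
  exact lt_irrefl _ this
lemma ex_cs (f g : Ω → ℝ) :
    (ex (fun x => f x * g x)) ^ 2 ≤ ex (fun x => f x ^ 2) * ex (fun x => g x ^ 2) := by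
  unfold ex
  rw [div_pow, div_mul_div_comm, ← sq]
  gcongr
  exact Finset.sum_mul_sq_le_sq_mul_sq _ _ _
lemma ex_sq_le [Nonempty Ω] (f : Ω → ℝ) : (ex f) ^ 2 ≤ ex (fun x => f x ^ 2) := by
  have := ex_cs f (fun _ => 1)
  simpa [ex_const] using this

def pr (P : Ω → Prop) : ℝ := ex (fun x => ind (P x))

lemma pr_nonneg (P : Ω → Prop) : 0 ≤ pr P := ex_nonneg fun _ => ind_nonneg _
lemma pr_le_one [Nonempty Ω] (P : Ω → Prop) : pr P ≤ 1 := ex_le_const fun _ => ind_le_one _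
lemma pr_mono {P R : Ω → Prop} (h : ∀ x, P x → R x) : pr P ≤ pr R :=
  ex_mono fun x => ind_mono (h x)
lemma pr_or_le (P R : Ω → Prop) : pr (fun x => P x ∨ R x) ≤ pr P + pr R := by
  unfold pr; rw [← ex_add]; exact ex_mono fun x => ind_or_le _ _
lemma pr_not [Nonempty Ω] (P : Ω → Prop) : pr (fun x => ¬ P x) = 1 - pr P := by
  have : pr P + pr (fun x => ¬ P x) = 1 := by
    unfold pr; rw [← ex_add]; simp [ind_add_not, ex_const]
  linarith
lemma pr_and_ge [Nonempty Ω] (P R : Ω → Prop) :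
    pr P - pr (fun x => ¬ R x) ≤ pr (fun x => P x ∧ R x) := by
  have : pr P ≤ pr (fun x => (P x ∧ R x) ∨ ¬ R x) := pr_mono fun x h => by tauto
  have := pr_or_le (fun x => P x ∧ R x) (fun x => ¬ R x)
  linarith
lemma exists_of_pr_pos {P : Ω → Prop} (h : 0 < pr P) : ∃ x, P x := by
  by_contra hn
  push Not at hn
  have : pr P ≤ 0 := by
    unfold pr ex
    rw [Finset.sum_eq_zero fun x _ => ind_not (hn x)]; simp
  linarith
/-- Markov -/
lemma markov {f : Ω → ℝ} (hf : ∀ x, 0 ≤ f x) {a : ℝ} :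
    a * pr (fun x => a ≤ f x) ≤ ex f := by
  unfold pr
  rw [← ex_mul_left]
  apply ex_mono
  intro x
  by_cases h : a ≤ f x
  · rw [ind_of h]; simpa using h
  · rw [ind_not h]; simpa using hf x
/-- Paley-Zygmund -/
lemma paley [Nonempty Ω] {Z : Ω → ℝ} (hZ : ∀ x, 0 ≤ Z x) {K : ℝ} (hK : 1 ≤ K)
    (h : ex (fun x => Z x ^ 2) ≤ K * (ex Z) ^ 2) :
    1 / (4 * K) ≤ pr (fun x => ex Z / 2 ≤ Z x) := by
  have hK0 : 0 < K := by linarith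
  have hm : 0 ≤ ex Z := ex_nonneg hZ
  rcases hm.eq_or_lt with h0 | h0
  · have : pr (fun x => ex Z / 2 ≤ Z x) = 1 := by
      unfold pr
      rw [← h0]
      simp only [zero_div, ind_of (hZ _), ex_const]
    rw [this, div_le_one (by positivity)]; linarith
  · have h1 : ex Z ≤ ex Z / 2 + ex (fun x => Z x * ind (ex Z / 2 ≤ Z x)) := by
      conv_lhs => rw [show ex Z = ex (fun x => Z x) from rfl]
      rw [← ex_const (Ω := Ω) (ex Z / 2), ← ex_add]
      simp only [ex_const]
      apply ex_mono
      intro x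
      by_cases hx : ex Z / 2 ≤ Z x
      · rw [ind_of hx]; linarith
      · rw [ind_not hx]; push Not at hx; linarith
    have h2 := ex_cs Z (fun x => ind (ex Z / 2 ≤ Z x))
    simp only [ind_sq] at h2
    set p := ex (fun x => ind (ex Z / 2 ≤ Z x)) with hp
    have hp0 : 0 ≤ p := ex_nonneg fun _ => ind_nonneg _
    change 1 / (4 * K) ≤ p
    have h3 : (ex Z / 2) ^ 2 ≤ K * (ex Z) ^ 2 * p := by
      calc (ex Z / 2) ^ 2 ≤ (ex (fun x => Z x * ind (ex Z / 2 ≤ Z x))) ^ 2 := by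
            apply pow_le_pow_left₀ (by linarith); linarith
        _ ≤ _ := h2
        _ ≤ _ := by gcongr
    rw [div_le_iff₀ (by positivity)]
    have h4 : 0 < (ex Z) ^ 2 := by positivity
    nlinarith
end ex

end

end PTFas

namespace PTFas
noncomputable section

def sg (b : Bool) : ℝ := if b then 1 else -1
lemma sg_not (b : Bool) : sg (!b) = - sg b := by cases b <;> simp [sg]
lemma sg_sq (b : Bool) : sg b ^ 2 = 1 := by cases b <;> simp [sg]
lemma sg_mul_self (b : Bool) : sg b * sg b = 1 := by cases b <;> simp [sg]
lemma abs_sg (b : Bool) : |sg b| = 1 := by cases b <;> simp [sg]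

section cube
variable {κ : Type*} [Fintype κ] [DecidableEq κ]

def sv {κ : Type*} (x : κ → Bool) : κ → ℝ := fun i => sg (x i)

def flip (i : κ) (x : κ → Bool) : κ → Bool := Function.update x i (!x i)

lemma flip_flip (i : κ) (x : κ → Bool) : flip i (flip i x) = x := by
  unfold flip; simp

def flipEquiv (i : κ) : (κ → Bool) ≃ (κ → Bool) :=
  ⟨flip i, flip i, flip_flip i, flip_flip i⟩

lemma ex_flip (i : κ) (f : (κ → Bool) → ℝ) : ex (fun x => f (flip i x)) = ex f :=
  ex_equiv (flipEquiv i) f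

lemma ex_odd (i : κ) (f : (κ → Bool) → ℝ) (h : ∀ x, f (flip i x) = - f x) : ex f = 0 := by
  have := ex_flip i f
  simp only [h, ex_neg] at this
  linarith

def chi (S : Finset κ) (x : κ → Bool) : ℝ := ∏ i ∈ S, sg (x i)

lemma chi_flip_mem {S : Finset κ} {i : κ} (h : i ∈ S) (x : κ → Bool) :
    chi S (flip i x) = - chi S x := by
  unfold chi
  rw [← Finset.mul_prod_erase _ _ h, ← Finset.mul_prod_erase S (fun j => sg (x j)) h]
  rw [show flip i x i = !x i by simp [flip], sg_not, neg_mul]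
  congr 2
  apply Finset.prod_congr rfl
  intro j hj
  rw [flip, Function.update_of_ne (Finset.ne_of_mem_erase hj)]

lemma chi_flip_notMem {S : Finset κ} {i : κ} (h : i ∉ S) (x : κ → Bool) :
    chi S (flip i x) = chi S x := by
  unfold chi
  apply Finset.prod_congr rfl
  intro j hj
  rw [flip, Function.update_of_ne (by rintro rfl; exact h hj)]

lemma chi_mul (S T : Finset κ) (x : κ → Bool) : chi S x * chi T x = chi (symmDiff S T) x := by
  unfold chi
  have h1 : ∏ i ∈ S, sg (x i) = (∏ i ∈ S \ T, sg (x i)) * ∏ i ∈ S ∩ T, sg (x i) := by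
    rw [mul_comm]; exact (Finset.prod_inter_mul_prod_sdiff S T _).symm
  have h2 : ∏ i ∈ T, sg (x i) = (∏ i ∈ T \ S, sg (x i)) * ∏ i ∈ S ∩ T, sg (x i) := by
    rw [mul_comm, Finset.inter_comm]; exact (Finset.prod_inter_mul_prod_sdiff T S _).symm
  have h3 : (∏ i ∈ S ∩ T, sg (x i)) * ∏ i ∈ S ∩ T, sg (x i) = 1 := by
    rw [← Finset.prod_mul_distrib]; simp [sg_mul_self]
  rw [h1, h2, symmDiff_def, Finset.sup_eq_union, Finset.prod_union]
  · linear_combination (∏ i ∈ S \ T, sg (x i)) * (∏ i ∈ T \ S, sg (x i)) * h3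
  · rw [Finset.disjoint_left]; intro a; simp; tauto

lemma ex_chi (S : Finset κ) : ex (chi S) = if S = ∅ then 1 else 0 := by
  split_ifs with h
  · subst h; simp [chi, ex_const, show chi (∅ : Finset κ) = fun _ => 1 by ext; simp [chi]]
  · obtain ⟨i, hi⟩ := Finset.nonempty_iff_ne_empty.2 h
    exact ex_odd i _ (chi_flip_mem hi)

lemma ex_chi_mul (S T : Finset κ) :
    ex (fun x => chi S x * chi T x) = if S = T then 1 else 0 := by
  simp only [chi_mul]
  rw [show ex (fun x => chi (symmDiff S T) x) = ex (chi (symmDiff S T)) from rfl, ex_chi]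
  congr 1
  simp

/-- generic Parseval from an orthonormal family -/
lemma ex_sq_orth {Ω I : Type*} [Fintype Ω] (s : Finset I) (w : I → ℝ) (m : I → Ω → ℝ)
    (h1 : ∀ a ∈ s, ex (fun x => m a x * m a x) = 1)
    (h2 : ∀ a ∈ s, ∀ b ∈ s, a ≠ b → ex (fun x => m a x * m b x) = 0) :
    ex (fun x => (∑ a ∈ s, w a * m a x) ^ 2) = ∑ a ∈ s, w a ^ 2 := by
  classical
  have : ∀ x, (∑ a ∈ s, w a * m a x) ^ 2
      = ∑ a ∈ s, ∑ b ∈ s, (w a * w b) * (m a x * m b x) := by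
    intro x
    rw [sq, Finset.sum_mul_sum]
    refine Finset.sum_congr rfl fun a _ => Finset.sum_congr rfl fun b _ => by ring
  simp only [this, ex_sum, ex_mul_left]
  apply Finset.sum_congr rfl
  intro a ha
  rw [Finset.sum_eq_single a]
  · rw [h1 a ha]; ring
  · intro b hb hne; rw [h2 a ha b hb hne.symm]; ring
  · intro h; exact absurd ha h

lemma ex_sq_chi {I : Type*} (s : Finset I) (w : I → ℝ) (t : I → Finset κ)
    (ht : Set.InjOn t s) :
    ex (fun x => (∑ a ∈ s, w a * chi (t a) x) ^ 2) = ∑ a ∈ s, w a ^ 2 := by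
  apply ex_sq_orth s w (fun a => chi (t a))
  · intro a _; rw [ex_chi_mul]; simp
  · intro a ha b hb hne; rw [ex_chi_mul, if_neg]; exact fun h => hne (ht ha hb h)

/-! degree -/
def degSub (κ : Type*) [Fintype κ] (d : ℕ) : Submodule ℝ ((κ → Bool) → ℝ) :=
  Submodule.span ℝ (Set.image chi {S | S.card ≤ d})

lemma chi_mem {S : Finset κ} {d : ℕ} (h : S.card ≤ d) : chi S ∈ degSub κ d :=
  Submodule.subset_span ⟨S, h, rfl⟩

lemma degSub_mono {d e : ℕ} (h : d ≤ e) : degSub κ d ≤ degSub κ e := by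
  apply Submodule.span_mono
  rintro _ ⟨S, hS, rfl⟩
  exact ⟨S, le_trans hS h, rfl⟩

lemma const_mem (d : ℕ) (a : ℝ) : (fun _ => a) ∈ degSub κ d := by
  have : (fun _ : κ → Bool => a) = a • chi (∅ : Finset κ) := by ext; simp [chi]
  rw [this]; exact Submodule.smul_mem _ _ (chi_mem (by simp))

lemma coord_mem (i : κ) : (fun x => sg (x i)) ∈ degSub κ 1 := by
  have : (fun x : κ → Bool => sg (x i)) = chi {i} := by ext; simp [chi]
  rw [this]; exact chi_mem (by simp)

lemma mul_mem {d e : ℕ} {f g : (κ → Bool) → ℝ} (hf : f ∈ degSub κ d) (hg : g ∈ degSub κ e) :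
    f * g ∈ degSub κ (d + e) := by
  have : f * g ∈ degSub κ d * degSub κ e := Submodule.mul_mem_mul hf hg
  unfold degSub at this
  rw [Submodule.span_mul_span] at this
  refine Submodule.span_mono ?_ this
  rintro _ ⟨_, ⟨S, hS, rfl⟩, _, ⟨T, hT, rfl⟩, rfl⟩
  refine ⟨symmDiff S T, ?_, ?_⟩
  · simp only [Set.mem_ofPred_eq] at *
    have : symmDiff S T ⊆ S ∪ T := by intro a; simp [Finset.mem_symmDiff]; tauto
    have := Finset.card_le_card this
    have := Finset.card_union_le S T
    omega
  · ext x; simp [chi_mul]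

lemma prod_mem {I : Type*} [DecidableEq I] (s : Finset I) (f : I → (κ → Bool) → ℝ)
    (h : ∀ i ∈ s, f i ∈ degSub κ 1) : (∏ i ∈ s, f i) ∈ degSub κ s.card := by
  induction s using Finset.induction_on with
  | empty => rw [Finset.prod_empty, Finset.card_empty]; exact const_mem (κ := κ) 0 1
  | insert a s ha ih =>
    rw [Finset.prod_insert ha, Finset.card_insert_of_notMem ha, add_comm]
    exact mul_mem (h a (by simp)) (ih fun i hi => h i (by simp [hi]))

lemma degSub_coef {d : ℕ} {f : (κ → Bool) → ℝ} (hf : f ∈ degSub κ d) :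
    ∃ c : Finset κ → ℝ, (∀ S, d < S.card → c S = 0) ∧ ∀ x, f x = ∑ S, c S * chi S x := by
  unfold degSub at hf
  induction hf using Submodule.span_induction with
  | mem f h =>
    obtain ⟨S, hS, rfl⟩ := h
    refine ⟨fun T => if T = S then 1 else 0, ?_, ?_⟩
    · intro T hT; refine if_neg ?_; rintro rfl; exact absurd hS (not_le.2 hT)
    · intro x; simp
  | zero => exact ⟨0, by simp, by simp⟩
  | add f g _ _ hf hg =>
    obtain ⟨c, hc, hc'⟩ := hf
    obtain ⟨e, he, he'⟩ := hg
    refine ⟨c + e, fun S hS => by simp [hc S hS, he S hS], fun x => ?_⟩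
    simp [hc', he', add_mul, Finset.sum_add_distrib]
  | smul a f _ hf =>
    obtain ⟨c, hc, hc'⟩ := hf
    refine ⟨a • c, fun S hS => by simp [hc S hS], fun x => ?_⟩
    simp [hc', Finset.mul_sum, mul_assoc]

lemma hc_aux (K : Finset κ) : ∀ (d : ℕ) (c : Finset κ → ℝ), (∀ S, d < S.card → c S = 0) →
    ex (fun x => (∑ S ∈ K.powerset, c S * chi S x) ^ 4)
      ≤ 9 ^ d * (ex (fun x => (∑ S ∈ K.powerset, c S * chi S x) ^ 2)) ^ 2 := by
  induction K using Finset.induction_on with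
  | empty =>
    intro d c _
    simp only [Finset.powerset_empty, Finset.sum_singleton]
    have : ∀ x : κ → Bool, chi (∅ : Finset κ) x = 1 := by intro x; simp [chi]
    simp only [this, ex_const, mul_one]
    have h9 : (1:ℝ) ≤ 9 ^ d := one_le_pow₀ (by norm_num)
    nlinarith [sq_nonneg (c ∅ ^ 2)]
  | insert i K hi ih =>
    intro d c hc
    set f0 : (κ → Bool) → ℝ := fun x => ∑ S ∈ K.powerset, c S * chi S x with hf0
    set f1 : (κ → Bool) → ℝ := fun x => ∑ S ∈ K.powerset, c (insert i S) * chi S x with hf1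
    have hnot : ∀ S ∈ K.powerset, i ∉ S := fun S hS h => hi (Finset.mem_powerset.1 hS h)
    have hdec : ∀ x, ∑ S ∈ (insert i K).powerset, c S * chi S x = f0 x + sg (x i) * f1 x := by
      intro x
      rw [Finset.sum_powerset_insert hi, hf0, hf1]
      simp only [Finset.mul_sum]
      congr 1
      apply Finset.sum_congr rfl
      intro S hS
      unfold chi
      rw [Finset.prod_insert (hnot S hS)]; ring
    have hfl0 : ∀ x, f0 (flip i x) = f0 x := by
      intro x; apply Finset.sum_congr rfl; intro S hS; rw [chi_flip_notMem (hnot S hS)]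
    have hfl1 : ∀ x, f1 (flip i x) = f1 x := by
      intro x; apply Finset.sum_congr rfl; intro S hS; rw [chi_flip_notMem (hnot S hS)]
    have hfli : ∀ x : κ → Bool, sg (flip i x i) = - sg (x i) := by
      intro x; rw [← sg_not]; simp [flip]
    have hodd : ∀ (g : ℝ → ℝ → ℝ), ex (fun x => sg (x i) * g (f0 x) (f1 x)) = 0 := by
      intro g
      apply ex_odd i
      intro x; rw [hfli, hfl0, hfl1]; ring
    simp only [hdec]
    have h2 : ex (fun x => (f0 x + sg (x i) * f1 x) ^ 2)
        = ex (fun x => f0 x ^ 2) + ex (fun x => f1 x ^ 2) := by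
      have : ∀ x, (f0 x + sg (x i) * f1 x) ^ 2
          = (f0 x ^ 2 + f1 x ^ 2) + sg (x i) * (2 * f0 x * f1 x) := by
        intro x; linear_combination (f1 x ^ 2) * sg_sq (x i)
      simp only [this]
      rw [ex_add, ex_add, hodd (fun a b => 2 * a * b), add_zero]
    have h4 : ex (fun x => (f0 x + sg (x i) * f1 x) ^ 4)
        = ex (fun x => f0 x ^ 4) + 6 * ex (fun x => f0 x ^ 2 * f1 x ^ 2)
          + ex (fun x => f1 x ^ 4) := by
      have : ∀ x, (f0 x + sg (x i) * f1 x) ^ 4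
          = (f0 x ^ 4 + 6 * (f0 x ^ 2 * f1 x ^ 2) + f1 x ^ 4)
            + sg (x i) * (4 * f0 x ^ 3 * f1 x + 4 * f0 x * f1 x ^ 3) := by
        intro x
        linear_combination (6 * f0 x ^ 2 * f1 x ^ 2 + f1 x ^ 4 * (sg (x i) ^ 2 + 1)
          + 4 * f0 x * f1 x ^ 3 * sg (x i)) * sg_sq (x i)
      simp only [this]
      rw [ex_add, ex_add, ex_add, ex_mul_left,
        hodd (fun a b => 4 * a ^ 3 * b + 4 * a * b ^ 3), add_zero]
    rw [h2, h4]
    set a := ex (fun x => f0 x ^ 2) with ha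
    set b := ex (fun x => f1 x ^ 2) with hb
    have ha0 : 0 ≤ a := ex_nonneg fun x => by positivity
    have hb0 : 0 ≤ b := ex_nonneg fun x => by positivity
    have i0 : ex (fun x => f0 x ^ 4) ≤ 9 ^ d * a ^ 2 := ih d c hc
    rcases d with _ | d
    · have hz : ∀ x, f1 x = 0 := by
        intro x; apply Finset.sum_eq_zero; intro S hS
        rw [hc]; · ring
        · rw [Finset.card_insert_of_notMem (hnot S hS)]; omega
      have hb' : b = 0 := by rw [hb]; simp only [hz]; simp [ex_const]
      have e1 : ex (fun x => f0 x ^ 2 * f1 x ^ 2) = 0 := by simp only [hz]; simp [ex_const]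
      have e2 : ex (fun x => f1 x ^ 4) = 0 := by simp only [hz]; simp [ex_const]
      rw [e1, e2, hb']; simpa using i0
    · have i1 : ex (fun x => f1 x ^ 4) ≤ 9 ^ d * b ^ 2 := by
        have := ih d (fun S => if i ∈ S then 0 else c (insert i S)) (by
          intro S hS
          by_cases h : i ∈ S
          · simp [h]
          · simp only [h, if_false]; apply hc; rw [Finset.card_insert_of_notMem h]; omega)
        have e : ∀ x, ∑ S ∈ K.powerset, (if i ∈ S then 0 else c (insert i S)) * chi S x = f1 x := by
          intro x; apply Finset.sum_congr rfl; intro S hS; rw [if_neg (hnot S hS)]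
        simpa only [e] using this
      have cs := ex_cs (fun x => f0 x ^ 2) (fun x => f1 x ^ 2)
      simp only [← pow_mul] at cs
      norm_num at cs
      have hx : ex (fun x => f0 x ^ 2 * f1 x ^ 2) ≤ 3 * 9 ^ d * (a * b) := by
        apply le_of_sq_le_sq _ (by positivity)
        calc _ ≤ _ := cs
          _ ≤ (9 ^ (d+1) * a ^ 2) * (9 ^ d * b ^ 2) := by
              apply mul_le_mul i0 i1 (ex_nonneg fun x => by positivity) (by positivity)
          _ = _ := by ring
      have : (0:ℝ) < 9 ^ d := by positivity
      calc _ ≤ 9 ^ (d+1) * a ^ 2 + 6 * (3 * 9 ^ d * (a * b)) + 9 ^ d * b ^ 2 := by linarith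
        _ ≤ _ := by
          rw [pow_succ]
          nlinarith [mul_nonneg this.le (sq_nonneg b)]

/-- hypercontractivity -/
lemma hc {d : ℕ} {f : (κ → Bool) → ℝ} (hf : f ∈ degSub κ d) :
    ex (fun x => f x ^ 4) ≤ 9 ^ d * (ex (fun x => f x ^ 2)) ^ 2 := by
  obtain ⟨c, hc, hc'⟩ := degSub_coef hf
  have := hc_aux Finset.univ d c hc
  simpa [hc'] using this

lemma sos {I : Type*} (s : Finset I) (a : I → ℝ) (ha : ∀ j ∈ s, 0 ≤ a j) {d : ℕ}
    (f : I → (κ → Bool) → ℝ) (hf : ∀ j ∈ s, f j ∈ degSub κ d) :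
    ex (fun x => (∑ j ∈ s, a j * f j x ^ 2) ^ 2)
      ≤ 9 ^ d * (ex (fun x => ∑ j ∈ s, a j * f j x ^ 2)) ^ 2 := by
  have e : ∀ x, (∑ j ∈ s, a j * f j x ^ 2) ^ 2
      = ∑ j ∈ s, ∑ k ∈ s, a j * a k * (f j x ^ 2 * f k x ^ 2) := by
    intro x
    rw [sq, Finset.sum_mul_sum]
    refine Finset.sum_congr rfl fun a _ => Finset.sum_congr rfl fun b _ => by ring
  simp only [e, ex_sum, ex_mul_left]
  rw [sq (∑ j ∈ s, _), Finset.sum_mul_sum, Finset.mul_sum]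
  apply Finset.sum_le_sum
  intro j hj
  rw [Finset.mul_sum]
  apply Finset.sum_le_sum
  intro k hk
  have h1 : ex (fun x => f j x ^ 2 * f k x ^ 2)
      ≤ 9 ^ d * (ex (fun x => f j x ^ 2) * ex (fun x => f k x ^ 2)) := by
    have cs := ex_cs (fun x => f j x ^ 2) (fun x => f k x ^ 2)
    simp only [← pow_mul] at cs
    norm_num at cs
    have hj0 : 0 ≤ ex (fun x => f j x ^ 2) := ex_nonneg fun x => by positivity
    have hk0 : 0 ≤ ex (fun x => f k x ^ 2) := ex_nonneg fun x => by positivity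
    apply le_of_sq_le_sq _ (by positivity)
    calc _ ≤ _ := cs
      _ ≤ _ := mul_le_mul (hc (hf j hj)) (hc (hf k hk)) (ex_nonneg fun x => by positivity)
          (by positivity)
      _ = _ := by ring
  calc _ ≤ a j * a k * (9 ^ d * (ex (fun x => f j x ^ 2) * ex (fun x => f k x ^ 2))) :=
        mul_le_mul_of_nonneg_left h1 (mul_nonneg (ha j hj) (ha k hk))
    _ = _ := by ring

lemma sos_pz {I : Type*} (s : Finset I) (a : I → ℝ) (ha : ∀ j ∈ s, 0 ≤ a j) {d : ℕ}
    (f : I → (κ → Bool) → ℝ) (hf : ∀ j ∈ s, f j ∈ degSub κ d) :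
    1 / (4 * 9 ^ d) ≤ pr (fun x => ex (fun x => ∑ j ∈ s, a j * f j x ^ 2) / 2
      ≤ ∑ j ∈ s, a j * f j x ^ 2) :=
  paley (fun x => Finset.sum_nonneg fun j hj => mul_nonneg (ha j hj) (sq_nonneg _))
    (one_le_pow₀ (by norm_num)) (sos s a ha f hf)

end cube
end
end PTFas

namespace PTFas
noncomputable section
section coef
variable {ι : Type*} [Fintype ι] [DecidableEq ι]

def ev (c : Finset ι → ℝ) (x : ι → ℝ) : ℝ := ∑ S, c S * ∏ i ∈ S, x i
def pd (i : ι) (c : Finset ι → ℝ) : Finset ι → ℝ := fun S => if i ∈ S then 0 else c (insert i S)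
def rm (i : ι) (c : Finset ι → ℝ) : Finset ι → ℝ := fun S => if i ∈ S then 0 else c S
def dv (c : Finset ι → ℝ) (x y : ι → ℝ) : ℝ := ∑ i, y i * ev (pd i c) x
def DB (B : ι → ℝ) (c : Finset ι → ℝ) : Finset ι → ℝ := fun T => ∑ i, B i * pd i c T
def dg (d : ℕ) (c : Finset ι → ℝ) : Prop := ∀ S, d < S.card → c S = 0
def E2 (c : Finset ι → ℝ) : ℝ := ∑ S, c S ^ 2
def Vr (c : Finset ι → ℝ) : ℝ := ∑ S, if S = ∅ then 0 else c S ^ 2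
def Inf (c : Finset ι → ℝ) (i : ι) : ℝ := ∑ S, if i ∈ S then c S ^ 2 else 0
def N2 (c : Finset ι → ℝ) : ℝ := ∑ i, Inf c i
def N4 (c : Finset ι → ℝ) : ℝ := ∑ i, Inf c i ^ 2

lemma sum_ins (i : ι) (g : Finset ι → Finset ι → ℝ) :
    ∑ T, (if i ∈ T then 0 else g (insert i T) T) = ∑ S, if i ∈ S then g S (S.erase i) else 0 := by
  rw [← Finset.sum_filter, ← Finset.sum_filter_add_sum_filter_not _ (fun T => i ∈ T)]
  rw [Finset.sum_eq_zero (s := Finset.univ.filter fun T => i ∈ T), zero_add]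
  · refine Finset.sum_bij' (fun T _ => insert i T) (fun S _ => S.erase i) ?_ ?_ ?_ ?_ ?_
    · intro T hT; simp
    · intro S hS; simp
    · intro T hT; simp at hT; exact Finset.erase_insert hT
    · intro S hS; simp at hS; exact Finset.insert_erase hS
    · intro T hT; simp at hT; simp [hT]
  · intro T hT; simp at hT; simp [hT]

lemma E2_nonneg (c : Finset ι → ℝ) : 0 ≤ E2 c := Finset.sum_nonneg fun _ _ => sq_nonneg _
lemma Inf_nonneg (c : Finset ι → ℝ) (i : ι) : 0 ≤ Inf c i :=
  Finset.sum_nonneg fun _ _ => by split_ifs <;> positivity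
lemma Vr_nonneg (c : Finset ι → ℝ) : 0 ≤ Vr c :=
  Finset.sum_nonneg fun _ _ => by split_ifs <;> positivity
lemma N2_nonneg (c : Finset ι → ℝ) : 0 ≤ N2 c := Finset.sum_nonneg fun _ _ => Inf_nonneg _ _
lemma N4_nonneg (c : Finset ι → ℝ) : 0 ≤ N4 c := Finset.sum_nonneg fun _ _ => sq_nonneg _

lemma E2_eq (c : Finset ι → ℝ) : E2 c = c ∅ ^ 2 + Vr c := by
  unfold E2 Vr
  rw [← Finset.add_sum_erase _ _ (Finset.mem_univ (∅ : Finset ι)),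
    ← Finset.add_sum_erase _ (fun S => if S = ∅ then 0 else c S ^ 2) (Finset.mem_univ (∅ : Finset ι))]
  simp only [if_true, zero_add]
  congr 1
  apply Finset.sum_congr rfl
  intro S hS
  rw [if_neg (Finset.ne_of_mem_erase hS)]

lemma N2_eq (c : Finset ι → ℝ) : N2 c = ∑ S, (S.card : ℝ) * c S ^ 2 := by
  unfold N2 Inf
  rw [Finset.sum_comm]
  apply Finset.sum_congr rfl
  intro S _
  rw [← Finset.sum_filter]; simp

lemma Vr_le_N2 (c : Finset ι → ℝ) : Vr c ≤ N2 c := by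
  rw [N2_eq]; unfold Vr
  apply Finset.sum_le_sum
  intro S _
  split_ifs with h
  · positivity
  · have : (1:ℝ) ≤ S.card := by
      exact_mod_cast Finset.card_pos.2 (Finset.nonempty_iff_ne_empty.2 h)
    nlinarith [sq_nonneg (c S)]

lemma N2_le_Vr {d : ℕ} {c : Finset ι → ℝ} (h : dg d c) : N2 c ≤ d * Vr c := by
  rw [N2_eq]; unfold Vr
  rw [Finset.mul_sum]
  apply Finset.sum_le_sum
  intro S _
  split_ifs with h0
  · simp [h0]
  · by_cases hS : d < S.card
    · simp [h S hS]
    · have : (S.card : ℝ) ≤ d := by exact_mod_cast not_lt.1 hS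
      gcongr

lemma Vr_le_E2 (c : Finset ι → ℝ) : Vr c ≤ E2 c := by rw [E2_eq]; nlinarith [sq_nonneg (c ∅)]

lemma N2_le_E2 {d : ℕ} {c : Finset ι → ℝ} (h : dg d c) : N2 c ≤ d * E2 c :=
  (N2_le_Vr h).trans (mul_le_mul_of_nonneg_left (Vr_le_E2 c) (by positivity))

lemma E2_pd (i : ι) (c : Finset ι → ℝ) : E2 (pd i c) = Inf c i := by
  unfold E2 Inf
  rw [← sum_ins i (fun S _ => c S ^ 2)]
  apply Finset.sum_congr rfl
  intro S _
  unfold pd; split_ifs <;> simp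

lemma dg_mono {d e : ℕ} (h : d ≤ e) {c : Finset ι → ℝ} (hc : dg d c) : dg e c :=
  fun S hS => hc S (lt_of_le_of_lt h hS)

lemma dg_pd {d : ℕ} {c : Finset ι → ℝ} (hc : dg (d+1) c) (i : ι) : dg d (pd i c) := by
  intro S hS
  unfold pd
  split_ifs with h
  · rfl
  · apply hc; rw [Finset.card_insert_of_notMem h]; omega

lemma dg_pd' {d : ℕ} {c : Finset ι → ℝ} (hc : dg d c) (i : ι) : dg d (pd i c) :=
  dg_pd (dg_mono (Nat.le_succ d) hc) i

lemma dg_DB {d : ℕ} {c : Finset ι → ℝ} (hc : dg (d+1) c) (B : ι → ℝ) : dg d (DB B c) := by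
  intro S hS
  unfold DB
  apply Finset.sum_eq_zero
  intro i _
  rw [dg_pd hc i S hS, mul_zero]

lemma N2_pd {d : ℕ} {c : Finset ι → ℝ} (hc : dg d c) (i : ι) : N2 (pd i c) ≤ d * Inf c i := by
  rw [← E2_pd]; exact N2_le_E2 (dg_pd' hc i)

lemma ev_DB (B : ι → ℝ) (c : Finset ι → ℝ) (x : ι → ℝ) : ev (DB B c) x = dv c x B := by
  unfold ev DB dv ev
  simp only [Finset.sum_mul, Finset.mul_sum]
  rw [Finset.sum_comm]
  refine Finset.sum_congr rfl fun i _ => Finset.sum_congr rfl fun S _ => by ring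

lemma ev_add (c e : Finset ι → ℝ) (x : ι → ℝ) : ev (fun S => c S + e S) x = ev c x + ev e x := by
  simp [ev, add_mul, Finset.sum_add_distrib]
lemma ev_smul (a : ℝ) (c : Finset ι → ℝ) (x : ι → ℝ) : ev (fun S => a * c S) x = a * ev c x := by
  simp [ev, Finset.mul_sum, mul_assoc]
lemma pd_smul (a : ℝ) (i : ι) (c : Finset ι → ℝ) :
    pd i (fun S => a * c S) = fun S => a * pd i c S := by
  ext S; unfold pd; split_ifs <;> simp
lemma dv_smul (a : ℝ) (c : Finset ι → ℝ) (x y : ι → ℝ) :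
    dv (fun S => a * c S) x y = a * dv c x y := by
  unfold dv; simp only [pd_smul, ev_smul, Finset.mul_sum]
  refine Finset.sum_congr rfl fun i _ => by ring
lemma Inf_smul (a : ℝ) (c : Finset ι → ℝ) (i : ι) : Inf (fun S => a * c S) i = a ^ 2 * Inf c i := by
  unfold Inf; rw [Finset.mul_sum]
  refine Finset.sum_congr rfl fun S _ => by split_ifs <;> ring
lemma E2_smul (a : ℝ) (c : Finset ι → ℝ) : E2 (fun S => a * c S) = a ^ 2 * E2 c := by
  unfold E2; rw [Finset.mul_sum]
  refine Finset.sum_congr rfl fun S _ => by ring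
lemma Vr_smul (a : ℝ) (c : Finset ι → ℝ) : Vr (fun S => a * c S) = a ^ 2 * Vr c := by
  unfold Vr; rw [Finset.mul_sum]
  refine Finset.sum_congr rfl fun S _ => by split_ifs <;> ring
lemma N2_smul (a : ℝ) (c : Finset ι → ℝ) : N2 (fun S => a * c S) = a ^ 2 * N2 c := by
  unfold N2; simp only [Inf_smul, Finset.mul_sum]
lemma N4_smul (a : ℝ) (c : Finset ι → ℝ) : N4 (fun S => a * c S) = a ^ 4 * N4 c := by
  unfold N4; simp only [Inf_smul, Finset.mul_sum]
  refine Finset.sum_congr rfl fun i _ => by ring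
lemma dg_smul {d : ℕ} (a : ℝ) {c : Finset ι → ℝ} (hc : dg d c) : dg d (fun S => a * c S) :=
  fun S hS => by simp [hc S hS]

lemma ev_split (i : ι) (c : Finset ι → ℝ) (x : ι → ℝ) :
    ev c x = ev (rm i c) x + x i * ev (pd i c) x := by
  have h : x i * ev (pd i c) x = ∑ S, if i ∈ S then c S * ∏ j ∈ S, x j else 0 := by
    have := sum_ins i (fun S T => c S * (x i * ∏ j ∈ T, x j))
    unfold ev pd
    rw [Finset.mul_sum]
    trans (∑ T, if i ∈ T then 0 else c (insert i T) * (x i * ∏ j ∈ T, x j))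
    · refine Finset.sum_congr rfl fun S _ => by split_ifs <;> ring
    · rw [this]
      refine Finset.sum_congr rfl fun S _ => ?_
      split_ifs with hS
      · rw [Finset.mul_prod_erase _ _ hS]
      · rfl
  rw [h]; unfold ev rm
  rw [← Finset.sum_add_distrib]
  refine Finset.sum_congr rfl fun S _ => by split_ifs <;> ring

lemma ev_congr {i : ι} {c : Finset ι → ℝ} (hc : ∀ S, i ∈ S → c S = 0) {x x' : ι → ℝ}
    (h : ∀ j, j ≠ i → x j = x' j) : ev c x = ev c x' := by
  unfold ev
  refine Finset.sum_congr rfl fun S _ => ?_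
  by_cases hS : i ∈ S
  · simp [hc S hS]
  · congr 1
    refine Finset.prod_congr rfl fun j hj => h j ?_
    rintro rfl; exact hS hj

lemma rm_zero (i : ι) (c : Finset ι → ℝ) : ∀ S, i ∈ S → rm i c S = 0 := fun S h => by simp [rm, h]
lemma pd_zero (i : ι) (c : Finset ι → ℝ) : ∀ S, i ∈ S → pd i c S = 0 := fun S h => by simp [pd, h]
lemma pd_of_zero {i : ι} {c : Finset ι → ℝ} (hc : ∀ S, i ∈ S → c S = 0) : pd i c = fun _ => 0 := by
  ext S; unfold pd; split_ifs; · rfl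
  · exact hc _ (by simp)
lemma pd_pres {i : ι} {c : Finset ι → ℝ} (hc : ∀ S, i ∈ S → c S = 0) (j : ι) :
    ∀ S, i ∈ S → pd j c S = 0 := by
  intro S hS; unfold pd; split_ifs; · rfl
  · exact hc _ (by simp [hS])
lemma ev_zero (x : ι → ℝ) : ev (fun _ => 0) x = 0 := by simp [ev]

lemma dv_congr {i : ι} {c : Finset ι → ℝ} (hc : ∀ S, i ∈ S → c S = 0) {x x' y y' : ι → ℝ}
    (h : ∀ j, j ≠ i → x j = x' j) (h' : ∀ j, j ≠ i → y j = y' j) : dv c x y = dv c x' y' := by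
  unfold dv
  refine Finset.sum_congr rfl fun j _ => ?_
  by_cases hj : j = i
  · subst hj; simp [pd_of_zero hc, ev_zero]
  · rw [h' j hj, ev_congr (pd_pres hc j) h]

lemma pd_rm {i j : ι} (h : j ≠ i) (c : Finset ι → ℝ) : pd j (rm i c) = rm i (pd j c) := by
  ext S; unfold pd rm
  by_cases h1 : i ∈ S <;> by_cases h2 : j ∈ S <;> simp [h1, h2, h.symm]
lemma pd_comm (i j : ι) (c : Finset ι → ℝ) : pd j (pd i c) = pd i (pd j c) := by
  ext S; unfold pd
  by_cases h : i = j
  · subst h; rfl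
  · by_cases h1 : i ∈ S <;> by_cases h2 : j ∈ S <;> simp [h1, h2, h, Ne.symm h, Finset.insert_comm]

lemma dv_split (i : ι) (c : Finset ι → ℝ) (x y : ι → ℝ) :
    dv c x y = dv (rm i c) x y + x i * dv (pd i c) x y + y i * ev (pd i c) x := by
  unfold dv
  rw [← Finset.add_sum_erase _ _ (Finset.mem_univ i),
    ← Finset.add_sum_erase _ (fun j => y j * ev (pd j (rm i c)) x) (Finset.mem_univ i),
    ← Finset.add_sum_erase _ (fun j => y j * ev (pd j (pd i c)) x) (Finset.mem_univ i)]
  rw [pd_of_zero (rm_zero i c), pd_of_zero (pd_zero i c), ev_zero]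
  have : ∑ j ∈ Finset.univ.erase i, y j * ev (pd j c) x
      = ∑ j ∈ Finset.univ.erase i, y j * ev (pd j (rm i c)) x
        + x i * ∑ j ∈ Finset.univ.erase i, y j * ev (pd j (pd i c)) x := by
    rw [Finset.mul_sum, ← Finset.sum_add_distrib]
    refine Finset.sum_congr rfl fun j hj => ?_
    rw [pd_rm (Finset.ne_of_mem_erase hj), pd_comm i j, ev_split i (pd j c)]; ring
  rw [this]; ring

lemma dv_eq (c : Finset ι → ℝ) (x y : ι → ℝ) :
    dv c x y = ∑ S, c S * ∑ i ∈ S, (∏ j ∈ S.erase i, x j) * y i := by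
  unfold dv ev
  have : ∀ i, y i * ∑ S, pd i c S * ∏ j ∈ S, x j
      = ∑ S, if i ∈ S then c S * ((∏ j ∈ S.erase i, x j) * y i) else 0 := by
    intro i
    rw [← sum_ins i (fun S T => c S * ((∏ j ∈ T, x j) * y i)), Finset.mul_sum]
    refine Finset.sum_congr rfl fun S _ => ?_
    unfold pd; split_ifs <;> ring
  simp only [this]
  rw [Finset.sum_comm]
  refine Finset.sum_congr rfl fun S _ => ?_
  rw [Finset.mul_sum, ← Finset.sum_filter]; simp

lemma ev_hasDerivAt (c : Finset ι → ℝ) {x : ℝ → ι → ℝ} {y : ι → ℝ} {t : ℝ}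
    (h : ∀ i, HasDerivAt (fun s => x s i) (y i) t) :
    HasDerivAt (fun s => ev c (x s)) (dv c (x t) y) t := by
  rw [dv_eq]
  unfold ev
  apply HasDerivAt.fun_sum
  intro S _
  apply HasDerivAt.const_mul
  have := HasDerivAt.fun_finset_prod (u := S) (f := fun i s => x s i) (f' := y) (x := t)
    (fun i _ => h i)
  simpa [smul_eq_mul] using this

lemma ev_sv (c : Finset ι → ℝ) (x : ι → Bool) : ev c (sv x) = ∑ S, c S * chi S x := rfl

lemma ex_ev_sq (c : Finset ι → ℝ) : ex (fun x => ev c (sv x) ^ 2) = E2 c := by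
  simp only [ev_sv]
  exact ex_sq_chi Finset.univ c id (Function.injective_id.injOn)
lemma ex_ev (c : Finset ι → ℝ) : ex (fun x => ev c (sv x)) = c ∅ := by
  simp only [ev_sv, ex_sum, ex_mul_left]
  rw [Finset.sum_eq_single ∅]
  · rw [ex_chi]; simp
  · intro S _ hS; rw [ex_chi]; simp [hS]
  · simp
lemma ex_lin_sq (g : ι → ℝ) : ex (fun x => (∑ i, sv x i * g i) ^ 2) = ∑ i, g i ^ 2 := by
  rw [← ex_sq_chi Finset.univ g (fun i => {i}) (fun a _ b _ h => by simpa using h)]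
  congr 1; ext x; congr 1
  refine Finset.sum_congr rfl fun i _ => ?_
  simp [chi, sv, mul_comm]

/-- degree of `ev` along degree-one substitutions -/
lemma ev_deg {κ : Type*} [Fintype κ] [DecidableEq κ] {d : ℕ} {c : Finset ι → ℝ} (hc : dg d c)
    (X : ι → (κ → Bool) → ℝ) (hX : ∀ i, X i ∈ degSub κ 1) :
    (fun z => ev c (fun i => X i z)) ∈ degSub κ d := by
  have : (fun z => ev c (fun i => X i z)) = ∑ S, c S • ∏ i ∈ S, X i := by
    ext z; simp [ev, Finset.sum_apply, Finset.prod_apply]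
  rw [this]
  apply Submodule.sum_mem
  intro S _
  by_cases hS : d < S.card
  · rw [hc S hS, zero_smul]; exact Submodule.zero_mem _
  · exact Submodule.smul_mem _ _ (degSub_mono (not_lt.1 hS) (prod_mem S X fun i _ => hX i))

lemma dv_deg {κ : Type*} [Fintype κ] [DecidableEq κ] {d : ℕ} {c : Finset ι → ℝ} (hc : dg d c)
    (X Y : ι → (κ → Bool) → ℝ) (hX : ∀ i, X i ∈ degSub κ 1) (hY : ∀ i, Y i ∈ degSub κ 1) :
    (fun z => dv c (fun i => X i z) (fun i => Y i z)) ∈ degSub κ (1 + d) := by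
  have : (fun z => dv c (fun i => X i z) (fun i => Y i z))
      = ∑ i, Y i * (fun z => ev (pd i c) (fun i => X i z)) := by
    ext z; simp [dv, Finset.sum_apply]
  rw [this]
  apply Submodule.sum_mem
  intro i _
  exact mul_mem (hY i) (ev_deg (dg_pd' hc i) X hX)

end coef
end
end PTFas

namespace PTFas
noncomputable section
section lind
variable {ι : Type*} [Fintype ι] [DecidableEq ι]

/-- rotated points -/
def XR (θ : ι → ℝ × ℝ) (z : ι ⊕ ι → Bool) : ι → ℝ :=
  fun i => (θ i).1 * sg (z (Sum.inl i)) + (θ i).2 * sg (z (Sum.inr i))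
def YR (θ : ι → ℝ × ℝ) (z : ι ⊕ ι → Bool) : ι → ℝ :=
  fun i => -(θ i).2 * sg (z (Sum.inl i)) + (θ i).1 * sg (z (Sum.inr i))
def unit (t : ℝ × ℝ) : Prop := t.1 ^ 2 + t.2 ^ 2 = 1

lemma XR_mem (θ : ι → ℝ × ℝ) (i : ι) : (fun z => XR θ z i) ∈ degSub (ι ⊕ ι) 1 := by
  have : (fun z : ι ⊕ ι → Bool => XR θ z i)
    = (θ i).1 • (fun z : ι ⊕ ι → Bool => sg (z (Sum.inl i)))
      + (θ i).2 • (fun z : ι ⊕ ι → Bool => sg (z (Sum.inr i))) := by ext z; simp [XR]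
  rw [this]
  exact Submodule.add_mem _ (Submodule.smul_mem _ _ (coord_mem _))
    (Submodule.smul_mem _ _ (coord_mem _))
lemma YR_mem (θ : ι → ℝ × ℝ) (i : ι) : (fun z => YR θ z i) ∈ degSub (ι ⊕ ι) 1 := by
  have : (fun z : ι ⊕ ι → Bool => YR θ z i)
    = (-(θ i).2) • (fun z : ι ⊕ ι → Bool => sg (z (Sum.inl i)))
      + (θ i).1 • (fun z : ι ⊕ ι → Bool => sg (z (Sum.inr i))) := by ext z; simp [YR]
  rw [this]
  exact Submodule.add_mem _ (Submodule.smul_mem _ _ (coord_mem _))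
    (Submodule.smul_mem _ _ (coord_mem _))

/-- quarter rotation in coordinate i -/
def rho (i : ι) (z : ι ⊕ ι → Bool) : ι ⊕ ι → Bool :=
  fun k => if k = Sum.inl i then !z (Sum.inr i) else if k = Sum.inr i then z (Sum.inl i) else z k

def rhoEquiv (i : ι) : (ι ⊕ ι → Bool) ≃ (ι ⊕ ι → Bool) where
  toFun := rho i
  invFun := fun z => rho i (rho i (rho i z))
  left_inv := by
    intro z; ext k
    by_cases h1 : k = Sum.inl i
    · subst h1; simp [rho]
    · by_cases h2 : k = Sum.inr i
      · subst h2; simp [rho]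
      · simp [rho, h1, h2]
  right_inv := by
    intro z; ext k
    by_cases h1 : k = Sum.inl i
    · subst h1; simp [rho]
    · by_cases h2 : k = Sum.inr i
      · subst h2; simp [rho]
      · simp [rho, h1, h2]

lemma ex_rho (i : ι) (f : (ι ⊕ ι → Bool) → ℝ) : ex (fun z => f (rho i z)) = ex f :=
  ex_equiv (rhoEquiv i) f

lemma XR_rho (θ : ι → ℝ × ℝ) (i : ι) (z : ι ⊕ ι → Bool) : XR θ (rho i z) i = - YR θ z i := by
  simp [XR, YR, rho, sg_not]
lemma YR_rho (θ : ι → ℝ × ℝ) (i : ι) (z : ι ⊕ ι → Bool) : YR θ (rho i z) i = XR θ z i := by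
  simp [XR, YR, rho, sg_not]; ring
lemma XR_rho_ne (θ : ι → ℝ × ℝ) {i j : ι} (h : j ≠ i) (z : ι ⊕ ι → Bool) :
    XR θ (rho i z) j = XR θ z j := by simp [XR, rho, h]
lemma YR_rho_ne (θ : ι → ℝ × ℝ) {i j : ι} (h : j ≠ i) (z : ι ⊕ ι → Bool) :
    YR θ (rho i z) j = YR θ z j := by simp [YR, rho, h]
lemma XY_sq {θ : ι → ℝ × ℝ} {i : ι} (h : unit (θ i)) (z : ι ⊕ ι → Bool) :
    XR θ z i ^ 2 + YR θ z i ^ 2 = 2 := by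
  unfold XR YR unit at *
  have h1 := sg_sq (z (Sum.inl i))
  have h2 := sg_sq (z (Sum.inr i))
  linear_combination 2 * h + ((θ i).1 ^ 2 + (θ i).2 ^ 2) * (h1 + h2)

/-- third-order Taylor-like bound -/
def TE (F : ℝ → ℝ → ℝ) (K : ℝ) : Prop := ∀ u v : ℝ, ∃ q0 q1 q2 q11 q12 q22 : ℝ, ∀ h k : ℝ,
  |F (u + h) (v + k) - (q0 + q1 * h + q2 * k + q11 * h ^ 2 + q12 * (h * k) + q22 * k ^ 2)|
    ≤ K * (|h| + |k|) ^ 3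

lemma cube_bound {K : ℝ} (hK : 0 ≤ K) {x y r s : ℝ} (h : x ^ 2 + y ^ 2 = 2) :
    K * (|x * r| + |x * s + y * r|) ^ 3 ≤ 64 * (K * (|r| + |s|) ^ 3) := by
  have hx : |x| ≤ 2 := abs_le_of_sq_le_sq (by nlinarith [sq_nonneg y]) (by norm_num)
  have hy : |y| ≤ 2 := abs_le_of_sq_le_sq (by nlinarith [sq_nonneg x]) (by norm_num)
  have h1 : |x * r| ≤ 2 * |r| := by rw [abs_mul]; gcongr
  have h2 : |x * s + y * r| ≤ 2 * |s| + 2 * |r| := by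
    refine (abs_add_le _ _).trans ?_
    rw [abs_mul, abs_mul]; gcongr
  calc K * (|x * r| + |x * s + y * r|) ^ 3 ≤ K * (4 * (|r| + |s|)) ^ 3 := by
        gcongr; linarith [abs_nonneg s]
    _ = _ := by ring

lemma step_mid {F : ℝ → ℝ → ℝ} {K : ℝ} (hK : 0 ≤ K) (hF : TE F K) (i : ι) :
    ∃ M : ℝ → ℝ → ℝ → ℝ → ℝ, ∀ (c : Finset ι → ℝ) (θ : ι → ℝ × ℝ), unit (θ i) →
      |ex (fun z => F (ev c (XR θ z)) (dv c (XR θ z) (YR θ z)))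
        - ex (fun z => M (ev (rm i c) (XR θ z)) (dv (rm i c) (XR θ z) (YR θ z))
            (ev (pd i c) (XR θ z)) (dv (pd i c) (XR θ z) (YR θ z)))|
      ≤ 64 * (K * ex (fun z => (|ev (pd i c) (XR θ z)| + |dv (pd i c) (XR θ z) (YR θ z)|) ^ 3)) := by
  choose q0 q1 q2 q11 q12 q22 hq using hF
  refine ⟨fun u v r s => q0 u v + q11 u v * r ^ 2 + q12 u v * (r * s) + q22 u v * (s ^ 2 + r ^ 2),
    fun c θ hθ => ?_⟩
  set G : (ι ⊕ ι → Bool) → ℝ := fun z => F (ev c (XR θ z)) (dv c (XR θ z) (YR θ z)) with hG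
  have hav : ex G = ex (fun z => (G z + G (rho i z) + G (rho i (rho i z))
      + G (rho i (rho i (rho i z)))) / 4) := by
    rw [ex_div, ex_add, ex_add, ex_add, ex_rho i (fun z => G (rho i (rho i z))),
      ex_rho i (fun z => G (rho i z)), ex_rho i G]
    change ex G = (ex G + ex G + ex G + ex G) / 4
    ring
  rw [hav, ← ex_sub, ← ex_mul_left, ← ex_mul_left]
  refine (abs_ex_le _).trans (ex_mono fun z => ?_)
  set u := ev (rm i c) (XR θ z) with hu
  set v := dv (rm i c) (XR θ z) (YR θ z) with hv
  set r := ev (pd i c) (XR θ z) with hr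
  set s := dv (pd i c) (XR θ z) (YR θ z) with hs
  set x := XR θ z i with hx
  set y := YR θ z i with hy
  have hxy : x ^ 2 + y ^ 2 = 2 := XY_sq hθ z
  -- value at any point agreeing off i
  have key : ∀ z', (∀ j, j ≠ i → XR θ z' j = XR θ z j) → (∀ j, j ≠ i → YR θ z' j = YR θ z j) →
      G z' = F (u + XR θ z' i * r) (v + (XR θ z' i * s + YR θ z' i * r)) := by
    intro z' h1 h2
    rw [hG]
    simp only
    rw [ev_split i c, dv_split i c, ev_congr (rm_zero i c) h1, ev_congr (pd_zero i c) h1,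
      dv_congr (rm_zero i c) h1 h2, dv_congr (pd_zero i c) h1 h2, add_assoc]
  have g0 := key z (fun _ _ => rfl) (fun _ _ => rfl)
  have g1 := key (rho i z) (fun j hj => XR_rho_ne θ hj z) (fun j hj => YR_rho_ne θ hj z)
  have g2 := key (rho i (rho i z)) (fun j hj => by rw [XR_rho_ne θ hj, XR_rho_ne θ hj])
    (fun j hj => by rw [YR_rho_ne θ hj, YR_rho_ne θ hj])
  have g3 := key (rho i (rho i (rho i z)))
    (fun j hj => by rw [XR_rho_ne θ hj, XR_rho_ne θ hj, XR_rho_ne θ hj])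
    (fun j hj => by rw [YR_rho_ne θ hj, YR_rho_ne θ hj, YR_rho_ne θ hj])
  simp only [XR_rho, YR_rho, neg_neg] at g1 g2 g3
  rw [← hx, ← hy] at g0 g1 g2 g3
  have b : ∀ x' y' : ℝ, x' ^ 2 + y' ^ 2 = 2 →
      |F (u + x' * r) (v + (x' * s + y' * r)) - (q0 u v + q1 u v * (x' * r)
        + q2 u v * (x' * s + y' * r) + q11 u v * (x' * r) ^ 2
        + q12 u v * ((x' * r) * (x' * s + y' * r)) + q22 u v * (x' * s + y' * r) ^ 2)|
      ≤ 64 * (K * (|r| + |s|) ^ 3) := fun x' y' h => (hq u v _ _).trans (cube_bound hK h)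
  have b0 := abs_le.1 (b x y hxy)
  have b1 := abs_le.1 (b (-y) x (by linarith))
  have b2 := abs_le.1 (b (-x) (-y) (by linarith))
  have b3 := abs_le.1 (b y (-x) (by linarith))
  rw [← g0] at b0
  rw [← g1] at b1
  rw [← g2] at b2
  rw [← g3] at b3
  have hy2 : y ^ 2 = 2 - x ^ 2 := by linarith
  have e : (q0 u v + q11 u v * r ^ 2 + q12 u v * (r * s) + q22 u v * (s ^ 2 + r ^ 2)) * 4
    = (q0 u v + q1 u v * (x * r)
        + q2 u v * (x * s + y * r) + q11 u v * (x * r) ^ 2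
        + q12 u v * ((x * r) * (x * s + y * r)) + q22 u v * (x * s + y * r) ^ 2)
     + (q0 u v + q1 u v * (-y * r)
        + q2 u v * (-y * s + x * r) + q11 u v * (-y * r) ^ 2
        + q12 u v * ((-y * r) * (-y * s + x * r)) + q22 u v * (-y * s + x * r) ^ 2)
     + (q0 u v + q1 u v * (-x * r)
        + q2 u v * (-x * s + -y * r) + q11 u v * (-x * r) ^ 2
        + q12 u v * ((-x * r) * (-x * s + -y * r)) + q22 u v * (-x * s + -y * r) ^ 2)
     + (q0 u v + q1 u v * (y * r)
        + q2 u v * (y * s + -x * r) + q11 u v * (y * r) ^ 2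
        + q12 u v * ((y * r) * (y * s + -x * r)) + q22 u v * (y * s + -x * r) ^ 2) := by
    linear_combination (-2 * q11 u v * r ^ 2 - 2 * q12 u v * r * s - 2 * q22 u v * (s ^ 2 + r ^ 2)) * hxy
  rw [abs_le]
  constructor <;> linarith [b0.1, b0.2, b1.1, b1.2, b2.1, b2.2, b3.1, b3.2]

lemma step {F : ℝ → ℝ → ℝ} {K : ℝ} (hK : 0 ≤ K) (hF : TE F K) (i : ι)
    (c : Finset ι → ℝ) (θ : ι → ℝ × ℝ) (h : unit (θ i)) (t : ℝ × ℝ) (ht : unit t) :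
      |ex (fun z => F (ev c (XR (Function.update θ i t) z))
          (dv c (XR (Function.update θ i t) z) (YR (Function.update θ i t) z)))
        - ex (fun z => F (ev c (XR θ z)) (dv c (XR θ z) (YR θ z)))|
      ≤ 128 * (K * ex (fun z => (|ev (pd i c) (XR θ z)| + |dv (pd i c) (XR θ z) (YR θ z)|) ^ 3)) := by
  obtain ⟨M, hM⟩ := step_mid hK hF i
  have h1 := hM c θ h
  have h2 := hM c (Function.update θ i t) (by simpa using ht)
  have hx : ∀ z j, j ≠ i → XR (Function.update θ i t) z j = XR θ z j := by
    intro z j hj; simp [XR, hj]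
  have hy : ∀ z j, j ≠ i → YR (Function.update θ i t) z j = YR θ z j := by
    intro z j hj; simp [YR, hj]
  simp only [ev_congr (rm_zero i c) (hx _), ev_congr (pd_zero i c) (hx _),
    dv_congr (rm_zero i c) (hx _) (hy _), dv_congr (pd_zero i c) (hx _) (hy _)] at h2
  rw [abs_le] at *
  constructor <;> linarith [h1.1, h1.2, h2.1, h2.2]

/-- full Lindeberg -/
lemma lind {F : ℝ → ℝ → ℝ} {K : ℝ} (hK : 0 ≤ K) (hF : TE F K) (c : Finset ι → ℝ) (R : ι → ℝ)
    (hR : ∀ i (θ : ι → ℝ × ℝ), (∀ j, unit (θ j)) →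
      K * ex (fun z => (|ev (pd i c) (XR θ z)| + |dv (pd i c) (XR θ z) (YR θ z)|) ^ 3) ≤ R i)
    (θ θ' : ι → ℝ × ℝ) (h : ∀ j, unit (θ j)) (h' : ∀ j, unit (θ' j)) :
    |ex (fun z => F (ev c (XR θ' z)) (dv c (XR θ' z) (YR θ' z)))
        - ex (fun z => F (ev c (XR θ z)) (dv c (XR θ z) (YR θ z)))| ≤ 128 * ∑ i, R i := by
  have main : ∀ I : Finset ι,
    |ex (fun z => F (ev c (XR (I.piecewise θ' θ) z))
        (dv c (XR (I.piecewise θ' θ) z) (YR (I.piecewise θ' θ) z)))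
        - ex (fun z => F (ev c (XR θ z)) (dv c (XR θ z) (YR θ z)))| ≤ 128 * ∑ i ∈ I, R i := by
    intro I
    induction I using Finset.induction_on with
    | empty => simp
    | insert a I ha ih =>
      rw [Finset.sum_insert ha]
      have hu : ∀ j, unit (I.piecewise θ' θ j) := by
        intro j; by_cases hj : j ∈ I <;> simp [hj, h, h']
      have := step hK hF a c (I.piecewise θ' θ) (hu a) (θ' a) (h' a)
      rw [← Finset.piecewise_insert] at this
      have h3 := hR a _ hu
      rw [abs_le] at *
      constructor <;> linarith [this.1, this.2, ih.1, ih.2]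
  simpa using main Finset.univ

lemma TE_usq : TE (fun u _ => u ^ 2) 0 := by
  intro u v
  refine ⟨u ^ 2, 2 * u, 0, 1, 0, 0, fun h k => ?_⟩
  simp only [zero_mul, add_zero]
  rw [abs_nonpos_iff]; ring
lemma TE_vsq : TE (fun _ v => v ^ 2) 0 := by
  intro u v
  refine ⟨v ^ 2, 0, 2 * v, 0, 0, 1, fun h k => ?_⟩
  simp only [zero_mul, add_zero]
  rw [abs_nonpos_iff]; ring

def id0 : ι → ℝ × ℝ := fun _ => (1, 0)
lemma unit_id0 (j : ι) : unit ((id0 : ι → ℝ × ℝ) j) := by simp [unit, id0]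
lemma XR_id0 (z : ι ⊕ ι → Bool) : XR id0 z = sv (fun i => z (Sum.inl i)) := by
  ext i; simp [XR, id0, sv]
lemma YR_id0 (z : ι ⊕ ι → Bool) : YR id0 z = sv (fun i => z (Sum.inr i)) := by
  ext i; simp [YR, id0, sv]

lemma ex_sum_cube (f : (ι → Bool) → (ι → Bool) → ℝ) :
    ex (fun z : ι ⊕ ι → Bool => f (fun i => z (Sum.inl i)) (fun i => z (Sum.inr i)))
      = ex (fun x => ex (fun y => f x y)) := by
  rw [← ex_prod (fun p : (ι → Bool) × (ι → Bool) => f p.1 p.2)]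
  rw [← ex_equiv (Equiv.sumArrowEquivProdArrow ι ι Bool)]
  rfl

lemma ex_dv_sq0 (c : Finset ι → ℝ) :
    ex (fun x : ι → Bool => ex (fun y : ι → Bool => dv c (sv x) (sv y) ^ 2)) = N2 c := by
  unfold dv
  simp only [ex_lin_sq, ex_sum, ex_ev_sq, E2_pd]
  rfl

lemma ex_evR_sq (c : Finset ι → ℝ) (θ : ι → ℝ × ℝ) (h : ∀ j, unit (θ j)) :
    ex (fun z => ev c (XR θ z) ^ 2) = E2 c := by
  have := lind le_rfl TE_usq c (fun _ => 0) (by simp) id0 θ unit_id0 h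
  simp only [Finset.sum_const_zero, mul_zero] at this
  rw [abs_nonpos_iff, sub_eq_zero] at this
  rw [this]
  simp only [XR_id0]
  rw [ex_sum_cube (fun x _ => ev c (sv x) ^ 2)]
  simp only [ex_const, ex_ev_sq]

lemma ex_dvR_sq (c : Finset ι → ℝ) (θ : ι → ℝ × ℝ) (h : ∀ j, unit (θ j)) :
    ex (fun z => dv c (XR θ z) (YR θ z) ^ 2) = N2 c := by
  have := lind le_rfl TE_vsq c (fun _ => 0) (by simp) id0 θ unit_id0 h
  simp only [Finset.sum_const_zero, mul_zero] at this
  rw [abs_nonpos_iff, sub_eq_zero] at this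
  rw [this]
  simp only [XR_id0, YR_id0]
  rw [ex_sum_cube (fun x y => dv c (sv x) (sv y) ^ 2)]
  exact ex_dv_sq0 c

/-- constant of the cubic error -/
def KL (d : ℕ) : ℝ := 8 * 9 ^ (1 + d) * ((d:ℝ) + 1) ^ 2

lemma KL_pos (d : ℕ) : 0 < KL d := by unfold KL; positivity

lemma cube_young {γ : ℝ} (hγ : 0 < γ) {a b : ℝ} (ha : 0 ≤ a) (hb : 0 ≤ b) :
    (a + b) ^ 3 ≤ γ * (a ^ 2 + b ^ 2) + γ⁻¹ * (4 * (a ^ 4 + b ^ 4)) := by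
  have h1 : (a + b) ^ 3 ≤ (γ * (a + b) ^ 2 + γ⁻¹ * (a + b) ^ 4) / 2 := by
    have : 0 ≤ γ⁻¹ * ((a + b) * (γ - (a + b))) ^ 2 := by positivity
    have e : γ⁻¹ * ((a + b) * (γ - (a + b))) ^ 2
        = γ * (a + b) ^ 2 + γ⁻¹ * (a + b) ^ 4 - 2 * (a + b) ^ 3 := by
      field_simp; ring
    linarith
  have h2 : (a + b) ^ 2 ≤ 2 * (a ^ 2 + b ^ 2) := by nlinarith [sq_nonneg (a - b)]
  have h4 : (a + b) ^ 4 ≤ 8 * (a ^ 4 + b ^ 4) := by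
    nlinarith [sq_nonneg (a - b), sq_nonneg (a ^ 2 - b ^ 2), sq_nonneg (a + b), mul_nonneg ha hb,
      pow_le_pow_left₀ (sq_nonneg (a + b)) h2 2]
  have h5 : γ * (a + b) ^ 2 ≤ γ * (2 * (a ^ 2 + b ^ 2)) := by gcongr
  have h6 : γ⁻¹ * (a + b) ^ 4 ≤ γ⁻¹ * (8 * (a ^ 4 + b ^ 4)) := by gcongr
  linarith

lemma cube_err {d : ℕ} {c : Finset ι → ℝ} (hc : dg d c) {γ : ℝ} (hγ : 0 < γ) (i : ι)
    (θ : ι → ℝ × ℝ) (h : ∀ j, unit (θ j)) :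
    ex (fun z => (|ev (pd i c) (XR θ z)| + |dv (pd i c) (XR θ z) (YR θ z)|) ^ 3)
      ≤ KL d * (γ * Inf c i + γ⁻¹ * Inf c i ^ 2) := by
  set w := Inf c i with hw
  have hw0 : 0 ≤ w := Inf_nonneg c i
  have r2 := ex_evR_sq (pd i c) θ h
  have s2 := ex_dvR_sq (pd i c) θ h
  rw [E2_pd] at r2
  have s2' := N2_pd hc i
  rw [← s2] at s2'
  have r4 := PTFas.hc (ev_deg (dg_pd' hc i) (fun i z => XR θ z i) (XR_mem θ))
  have s4 := PTFas.hc (dv_deg (dg_pd' hc i) (fun i z => XR θ z i) (fun i z => YR θ z i)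
    (XR_mem θ) (YR_mem θ))
  have hs0 : 0 ≤ ex (fun z => dv (pd i c) (XR θ z) (YR θ z) ^ 2) :=
    ex_nonneg fun z => sq_nonneg _
  change ex (fun z => ev (pd i c) (XR θ z) ^ 4) ≤ 9 ^ d * ex (fun z => ev (pd i c) (XR θ z) ^ 2) ^ 2 at r4
  change ex (fun z => dv (pd i c) (XR θ z) (YR θ z) ^ 4)
    ≤ 9 ^ (1 + d) * ex (fun z => dv (pd i c) (XR θ z) (YR θ z) ^ 2) ^ 2 at s4
  rw [r2, ← hw] at r4
  rw [← hw] at s2' r2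
  have s4' : ex (fun z => dv (pd i c) (XR θ z) (YR θ z) ^ 4) ≤ 9 ^ (1 + d) * (d * w) ^ 2 :=
    s4.trans (by gcongr)
  calc _ ≤ ex (fun z => γ * (ev (pd i c) (XR θ z) ^ 2 + dv (pd i c) (XR θ z) (YR θ z) ^ 2)
        + γ⁻¹ * (4 * (ev (pd i c) (XR θ z) ^ 4 + dv (pd i c) (XR θ z) (YR θ z) ^ 4))) := by
        apply ex_mono; intro z
        have := cube_young hγ (abs_nonneg (ev (pd i c) (XR θ z)))
          (abs_nonneg (dv (pd i c) (XR θ z) (YR θ z)))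
        have e4 : ∀ a : ℝ, |a| ^ 4 = a ^ 4 := fun a => by
          rw [show 4 = 2 * 2 by norm_num, pow_mul, sq_abs, pow_mul]
        simpa only [sq_abs, e4] using this
    _ = γ * (w + ex (fun z => dv (pd i c) (XR θ z) (YR θ z) ^ 2))
        + γ⁻¹ * (4 * (ex (fun z => ev (pd i c) (XR θ z) ^ 4)
          + ex (fun z => dv (pd i c) (XR θ z) (YR θ z) ^ 4))) := by
        rw [ex_add, ex_mul_left, ex_mul_left, ex_mul_left, ex_add, ex_add, r2]
    _ ≤ γ * (w + d * w) + γ⁻¹ * (4 * (9 ^ d * w ^ 2 + 9 ^ (1 + d) * (d * w) ^ 2)) := by gcongr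
    _ ≤ γ * (KL d * w) + γ⁻¹ * (KL d * w ^ 2) := by
        have hd0 : (0:ℝ) ≤ d := by positivity
        have h9 : (1:ℝ) ≤ 9 ^ d := one_le_pow₀ (by norm_num)
        have hK1 : 1 + (d:ℝ) ≤ KL d := by
          unfold KL; rw [pow_add]; nlinarith [mul_le_mul h9 (sq_nonneg ((d:ℝ)+1)) , sq_nonneg ((d:ℝ))]
        have hK2 : 4 * (9 ^ d + 9 ^ (1 + d) * (d:ℝ) ^ 2) ≤ KL d := by
          unfold KL; rw [pow_add]; nlinarith [mul_nonneg (by linarith : (0:ℝ) ≤ 9 ^ d) hd0, mul_nonneg (by linarith : (0:ℝ) ≤ 9 ^ d) (sq_nonneg (d:ℝ))]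
        have e1 : w + d * w ≤ KL d * w := by nlinarith
        have e2 : 4 * (9 ^ d * w ^ 2 + 9 ^ (1 + d) * (d * w) ^ 2) ≤ KL d * w ^ 2 := by
          nlinarith [sq_nonneg w]
        gcongr
    _ = _ := by ring

/-- Lindeberg with Young error -/
lemma lind_err {F : ℝ → ℝ → ℝ} {K : ℝ} (hK : 0 ≤ K) (hF : TE F K) {d : ℕ} {c : Finset ι → ℝ}
    (hc : dg d c) {γ : ℝ} (hγ : 0 < γ) (θ : ι → ℝ × ℝ) (h : ∀ j, unit (θ j)) :
    ex (fun x : ι → Bool => ex (fun y : ι → Bool => F (ev c (sv x)) (dv c (sv x) (sv y))))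
      ≤ ex (fun z => F (ev c (XR θ z)) (dv c (XR θ z) (YR θ z)))
        + 128 * K * KL d * (γ * N2 c + γ⁻¹ * N4 c) := by
  have := lind hK hF c (fun i => K * (KL d * (γ * Inf c i + γ⁻¹ * Inf c i ^ 2)))
    (fun i θ h => mul_le_mul_of_nonneg_left (cube_err hc hγ i θ h) hK) id0 θ unit_id0 h
  simp only [XR_id0, YR_id0] at this
  rw [ex_sum_cube (fun x y => F (ev c (sv x)) (dv c (sv x) (sv y)))] at this
  have e : 128 * ∑ i, K * (KL d * (γ * Inf c i + γ⁻¹ * Inf c i ^ 2))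
      = 128 * K * KL d * (γ * N2 c + γ⁻¹ * N4 c) := by
    unfold N2 N4
    simp only [Finset.mul_sum, ← Finset.sum_add_distrib]
    refine Finset.sum_congr rfl fun i _ => by ring
  rw [e] at this
  linarith [(abs_le.1 this).1]

end lind
end
end PTFas

namespace PTFas
noncomputable section

lemma te_core {F N0 n1 n2 e1 e2 w : ℝ} (hw : 0 ≤ w) (hF : |F| ≤ 1) (hN : |N0| ≤ 1)
    (h1 : |n1| ≤ w) (h2 : |n2| ≤ w ^ 2) (he1 : |e1| ≤ w) (he2 : |e2| ≤ w ^ 2)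
    (hid : F * (1 + (e1 + e2)) = N0 + n1 + n2) :
    |F - (N0 + n1 + n2 - N0 * (e1 + e2) - n1 * e1 + N0 * e1 ^ 2)| ≤ 22 * w ^ 3 := by
  have mb : ∀ {a b A B : ℝ}, |a| ≤ A → |b| ≤ B → |a * b| ≤ A * B := by
    intro a b A B ha hb
    rw [abs_mul]; exact mul_le_mul ha hb (abs_nonneg _) ((abs_nonneg _).trans ha)
  have ab : ∀ {a b A B : ℝ}, |a| ≤ A → |b| ≤ B → |a + b| ≤ A + B := fun ha hb =>
    (abs_add_le _ _).trans (add_le_add ha hb)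
  have sb : ∀ {a b A B : ℝ}, |a| ≤ A → |b| ≤ B → |a - b| ≤ A + B := fun ha hb =>
    (abs_sub _ _).trans (add_le_add ha hb)
  rcases le_total w 1 with hw1 | hw1
  · have he : |e1 + e2| ≤ 2 * w := by
      refine (ab he1 he2).trans ?_
      nlinarith
    have hee : |(e1 + e2) * (e1 + e2)| ≤ 2 * w * (2 * w) := mb he he
    have t1 : |N0 * (e1 * e2 + e1 * e2 + e2 * e2)| ≤ 1 * (w * w ^ 2 + w * w ^ 2 + w ^ 2 * w ^ 2) :=
      mb hN (ab (ab (mb he1 he2) (mb he1 he2)) (mb he2 he2))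
    have t2 : |n1 * ((e1 + e2) * (e1 + e2) - e2)| ≤ w * (2 * w * (2 * w) + w ^ 2) :=
      mb h1 (sb hee he2)
    have t3 : |n2 * ((e1 + e2) * (e1 + e2) - (e1 + e2))| ≤ w ^ 2 * (2 * w * (2 * w) + 2 * w) :=
      mb h2 (sb hee he)
    have t4 : |F * ((e1 + e2) * ((e1 + e2) * (e1 + e2)))| ≤ 1 * (2 * w * (2 * w * (2 * w))) :=
      mb hF (mb he hee)
    have := sb (ab (ab t1 t2) t3) t4
    have e : F - (N0 + n1 + n2 - N0 * (e1 + e2) - n1 * e1 + N0 * e1 ^ 2)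
      = N0 * (e1 * e2 + e1 * e2 + e2 * e2) + n1 * ((e1 + e2) * (e1 + e2) - e2)
        + n2 * ((e1 + e2) * (e1 + e2) - (e1 + e2)) - F * ((e1 + e2) * ((e1 + e2) * (e1 + e2))) := by
      linear_combination (1 - (e1 + e2) + (e1 + e2) ^ 2) * hid
    rw [e]
    refine this.trans ?_
    have : w ^ 4 ≤ w ^ 3 := by nlinarith [pow_nonneg hw 3]
    nlinarith
  · have t : |N0 + n1 + n2 - N0 * (e1 + e2) - n1 * e1 + N0 * (e1 * e1)|
        ≤ 1 + w + w ^ 2 + 1 * (w + w ^ 2) + w * w + 1 * (w * w) :=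
      ab (sb (sb (ab (ab hN h1) h2) (mb hN (ab he1 he2))) (mb h1 he1)) (mb hN (mb he1 he1))
    rw [← sq] at t
    refine (sb hF t).trans ?_
    have a1 : 1 ≤ w ^ 2 := by nlinarith
    have a2 : w ≤ w ^ 3 := by nlinarith
    have a3 : w ^ 2 ≤ w ^ 3 := by nlinarith
    nlinarith

lemma TE_Fn : TE (fun u v => v ^ 2 / (1 + u ^ 2 + v ^ 2)) 22 := by
  intro u v
  set D := 1 + u ^ 2 + v ^ 2 with hD
  have hD1 : 1 ≤ D := by nlinarith [sq_nonneg u, sq_nonneg v]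
  have hD0 : 0 < D := by linarith
  set N := v ^ 2 / D with hN
  set a := 2 * u / D with ha
  set b := 2 * v / D with hb
  set g := 1 / D with hg
  refine ⟨N, -N * a, b - N * b, -N * g + N * a ^ 2, -a * b + 2 * N * a * b,
    g - N * g - b ^ 2 + N * b ^ 2, fun h k => ?_⟩
  have hq : N + -N * a * h + (b - N * b) * k + (-N * g + N * a ^ 2) * h ^ 2
      + (-a * b + 2 * N * a * b) * (h * k) + (g - N * g - b ^ 2 + N * b ^ 2) * k ^ 2
      = N + b * k + g * k ^ 2 - N * ((a * h + b * k) + g * (h ^ 2 + k ^ 2)) - b * k * (a * h + b * k)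
        + N * (a * h + b * k) ^ 2 := by ring
  rw [hq]
  have hE : 0 < 1 + (u + h) ^ 2 + (v + k) ^ 2 := by positivity
  have ha1 : |a| ≤ 1 := by
    rw [ha, abs_div, abs_of_pos hD0, div_le_one hD0, abs_le]
    constructor <;> nlinarith [sq_nonneg (u + 1), sq_nonneg (u - 1), sq_nonneg v]
  have hb1 : |b| ≤ 1 := by
    rw [hb, abs_div, abs_of_pos hD0, div_le_one hD0, abs_le]
    constructor <;> nlinarith [sq_nonneg (v + 1), sq_nonneg (v - 1), sq_nonneg u]
  have hg1 : |g| ≤ 1 := by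
    rw [hg, abs_div, abs_of_pos hD0, div_le_one hD0, abs_one]; exact hD1
  have hh := abs_nonneg h
  have hk := abs_nonneg k
  apply te_core
  · positivity
  · rw [abs_div, abs_of_pos hE, div_le_one hE, abs_of_nonneg (sq_nonneg _)]
    nlinarith [sq_nonneg (u + h)]
  · rw [hN, abs_div, abs_of_pos hD0, div_le_one hD0, abs_of_nonneg (sq_nonneg _)]
    nlinarith [sq_nonneg u]
  · rw [abs_mul]; nlinarith
  · rw [abs_mul, abs_of_nonneg (sq_nonneg k), ← sq_abs k]
    nlinarith [mul_nonneg hh hk, sq_nonneg |k|, sq_nonneg |h|]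
  · refine (abs_add_le _ _).trans ?_
    rw [abs_mul, abs_mul]; nlinarith
  · rw [abs_mul, abs_of_nonneg (by positivity : 0 ≤ h ^ 2 + k ^ 2), ← sq_abs k, ← sq_abs h]
    nlinarith [mul_nonneg hh hk, sq_nonneg |k|, sq_nonneg |h|]
  · rw [hN, ha, hb, hg]
    field_simp
    rw [hD]; ring

lemma TE_scale {F : ℝ → ℝ → ℝ} {K : ℝ} (hK : 0 ≤ K) (hF : TE F K) {α β : ℝ} (hα : 0 ≤ α)
    (hβ : 0 ≤ β) : TE (fun u v => F (α * u) (β * v)) (K * (α + β) ^ 3) := by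
  intro u v
  obtain ⟨q0, q1, q2, q11, q12, q22, hq⟩ := hF (α * u) (β * v)
  refine ⟨q0, q1 * α, q2 * β, q11 * α ^ 2, q12 * α * β, q22 * β ^ 2, fun h k => ?_⟩
  have := hq (α * h) (β * k)
  calc _ = |F (α * u + α * h) (β * v + β * k) - (q0 + q1 * (α * h) + q2 * (β * k)
        + q11 * (α * h) ^ 2 + q12 * ((α * h) * (β * k)) + q22 * (β * k) ^ 2)| := by
        congr 2
        · show F (α * (u + h)) (β * (v + k)) = _
          rw [mul_add, mul_add]
        · ring
    _ ≤ _ := this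
    _ ≤ K * ((α + β) * (|h| + |k|)) ^ 3 := by
        gcongr
        rw [abs_mul, abs_mul, abs_of_nonneg hα, abs_of_nonneg hβ]
        nlinarith [mul_nonneg hα (abs_nonneg k), mul_nonneg hβ (abs_nonneg h)]
    _ = _ := by ring

def Psi (l η u v : ℝ) : ℝ := l * v ^ 2 / (l * v ^ 2 + u ^ 2 + η ^ 2)

def KP (l η : ℝ) : ℝ := 22 * (1 / η + Real.sqrt l / η) ^ 3

lemma TE_Psi {l η : ℝ} (hl : 0 ≤ l) (hη : 0 < η) : TE (Psi l η) (KP l η) := by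
  have := TE_scale (by norm_num) TE_Fn (α := 1 / η) (β := Real.sqrt l / η) (by positivity)
    (by positivity)
  suffices hfe : Psi l η = fun u v => (Real.sqrt l / η * v) ^ 2 / (1 + (1 / η * u) ^ 2 + (Real.sqrt l / η * v) ^ 2) by
    rw [hfe]; exact this
  ext u v
  unfold Psi
  have : (Real.sqrt l / η * v) ^ 2 = l * v ^ 2 / η ^ 2 := by
    rw [mul_pow, div_pow, Real.sq_sqrt hl]; ring
  rw [this]
  have h1 : 0 < l * v ^ 2 + u ^ 2 + η ^ 2 := by positivity
  have h2 : 0 < 1 + (1 / η * u) ^ 2 + l * v ^ 2 / η ^ 2 := by positivity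
  rw [div_eq_div_iff h1.ne' h2.ne']
  field_simp
  ring

lemma KP_nonneg {l η : ℝ} (hη : 0 < η) : 0 ≤ KP l η := by unfold KP; positivity

lemma Psi_nonneg {l η : ℝ} (hl : 0 ≤ l) (u v : ℝ) : 0 ≤ Psi l η u v := by
  unfold Psi; positivity
lemma Psi_le_one {l η : ℝ} (hl : 0 ≤ l) (u v : ℝ) : Psi l η u v ≤ 1 := by
  unfold Psi; apply div_le_one_of_le₀ <;> nlinarith [sq_nonneg u, sq_nonneg η, mul_nonneg hl (sq_nonneg v)]

end
end PTFas

namespace PTFas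
noncomputable section

open Polynomial in
lemma poly_log (H : ℝ[X]) (hH : H ≠ 0) : ∃ k : ℕ, k ≤ H.natDegree ∧ ∃ a : Fin k → ℝ, ∀ s : ℝ,
    (∀ i, s ≠ a i) → H.eval s ≠ 0 ∧ |H.derivative.eval s| ≤ |H.eval s| * ∑ i, 1 / |s - a i| := by
  set G : ℂ[X] := H.map (algebraMap ℝ ℂ) with hG
  have hinj : Function.Injective (algebraMap ℝ ℂ) := (algebraMap ℝ ℂ).injective
  have hG0 : G ≠ 0 := (Polynomial.map_ne_zero_iff hinj).2 hH
  have hsp : G.Splits := IsAlgClosed.splits G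
  set L := G.roots.toList with hL
  have hsum : ∀ f : ℂ → ℂ, (G.roots.map f).sum = ∑ i : Fin L.length, f (L.get i) := by
    intro f
    conv_lhs => rw [← Multiset.coe_toList G.roots, ← hL]
    rw [Multiset.map_coe, Multiset.sum_coe]
    conv_lhs => rw [← List.ofFn_get L]
    rw [List.map_ofFn, List.sum_ofFn]
    rfl
  refine ⟨L.length, ?_, fun i => (L.get i).re, ?_⟩
  · rw [hL, Multiset.length_toList]
    refine (Polynomial.card_roots' G).trans ?_
    rw [hG, Polynomial.natDegree_map]
  · intro s hs
    have he : ∀ P : ℝ[X], (P.map (algebraMap ℝ ℂ)).eval (s:ℂ) = ((P.eval s : ℝ) : ℂ) := by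
      intro P
      rw [Polynomial.eval_map]; exact Polynomial.eval₂_at_apply (algebraMap ℝ ℂ) s
    have h0 : H.eval s ≠ 0 := by
      intro h
      have : (s:ℂ) ∈ G.roots := by
        rw [Polynomial.mem_roots hG0, Polynomial.IsRoot, hG, he, h]; simp
      rw [← Multiset.mem_toList, ← hL] at this
      obtain ⟨i, hi⟩ := List.mem_iff_get.1 this
      apply hs i
      simp only
      rw [hi]; simp
    refine ⟨h0, ?_⟩
    have hd := hsp.eval_derivative_eq_eval_mul_sum (x := (s:ℂ))
      (by rw [hG, he]; exact_mod_cast h0)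
    rw [hsum, hG, Polynomial.derivative_map, he, he] at hd
    have := congrArg norm hd
    rw [norm_mul, Complex.norm_real, Complex.norm_real, Real.norm_eq_abs, Real.norm_eq_abs] at this
    rw [this]
    gcongr
    refine (norm_sum_le _ _).trans (Finset.sum_le_sum fun i _ => ?_)
    rw [norm_div, norm_one]
    have hne : 0 < |s - (L.get i).re| := abs_pos.2 (sub_ne_zero.2 (hs i))
    apply one_div_le_one_div_of_le hne
    have := Complex.abs_re_le_norm ((s:ℂ) - L.get i)
    simpa using this

lemma frac_mono {a b : ℝ} (ha : 0 ≤ a) (h : a ≤ b) : a / (a + 1) ≤ b / (b + 1) := by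
  rw [div_le_div_iff₀ (by linarith) (by linarith)]; nlinarith

lemma Psi_bound {d k : ℕ} (hk : k ≤ 2 * d) {l η u v s h h' : ℝ} (hl : 0 < l) (hs0 : 0 ≤ s)
    (hs1 : s ≤ 1) (a : Fin k → ℝ)
    (hroot : (∀ i, s ≠ a i) → h ≠ 0 ∧ |h'| ≤ |h| * ∑ i, 1 / |s - a i|)
    (hu : (1 + s ^ 2) ^ d * u = h)
    (hv : (1 + s ^ 2) * h' = 2 * d * s * h + 2 * (1 + s ^ 2) ^ d * v) :
    Psi l η u v ≤ ∑ i, l * (2 * d + 1) ^ 2 / (l * (2 * d + 1) ^ 2 + (s - a i) ^ 2)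
      + l * (2 * d + 1) ^ 2 * d ^ 2 := by
  have hM : (0:ℝ) < 2 * d + 1 := by positivity
  by_cases hsa : ∀ i, s ≠ a i
  · obtain ⟨h0, hd⟩ := hroot hsa
    have hp : 0 < (1 + s ^ 2) ^ d := by positivity
    set t := ∑ i, 1 / |s - a i| + d with ht
    have hS0 : 0 ≤ ∑ i, 1 / |s - a i| := Finset.sum_nonneg fun i _ => by positivity
    have ht0 : 0 ≤ t := by positivity
    have hvt : |v| ≤ |u| * t := by
      have e : 2 * (1 + s ^ 2) ^ d * v = (1 + s ^ 2) * h' - 2 * d * s * h := by linarith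
      have e2 : 2 * (1 + s ^ 2) ^ d * |v| ≤ 2 * (|h| * t) := by
        rw [show 2 * (1 + s ^ 2) ^ d * |v| = |2 * (1 + s ^ 2) ^ d * v| by
          rw [abs_mul, abs_of_pos (by positivity : 0 < 2 * (1 + s ^ 2) ^ d)], e]
        refine (abs_sub _ _).trans ?_
        rw [abs_mul, abs_mul, abs_of_pos (by positivity : 0 < 1 + s ^ 2),
          abs_of_nonneg (by positivity : 0 ≤ 2 * (d:ℝ) * s)]
        have a1 : (1 + s ^ 2) * |h'| ≤ 2 * (|h| * ∑ i, 1 / |s - a i|) := by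
          apply mul_le_mul (by nlinarith) hd (abs_nonneg _) (by norm_num)
        have a2 : 2 * (d:ℝ) * s * |h| ≤ 2 * d * 1 * |h| := by gcongr
        rw [ht]; linarith
      have e3 : |h| = (1 + s ^ 2) ^ d * |u| := by rw [← hu, abs_mul, abs_of_pos hp]
      rw [e3] at e2
      have : (1 + s ^ 2) ^ d * |v| ≤ (1 + s ^ 2) ^ d * (|u| * t) := by linarith
      exact le_of_mul_le_mul_left this hp
    have hu0 : u ≠ 0 := by rintro rfl; apply h0; rw [← hu]; simp
    have hv2 : v ^ 2 ≤ u ^ 2 * t ^ 2 := by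
      rw [← mul_pow, ← sq_abs v, ← sq_abs (u * t), abs_mul, abs_of_nonneg ht0]
      exact pow_le_pow_left₀ (abs_nonneg _) hvt 2
    have hu2 : 0 < u ^ 2 := by positivity
    have hPsi : Psi l η u v ≤ l * t ^ 2 / (l * t ^ 2 + 1) := by
      unfold Psi
      rw [div_le_div_iff₀ (by positivity) (by positivity)]
      have : l * v ^ 2 ≤ l * (u ^ 2 * t ^ 2) := by gcongr
      nlinarith [mul_nonneg (mul_nonneg hl.le (sq_nonneg t)) (sq_nonneg η)]
    have hterm : ∀ i, 0 ≤ l * (2 * (d:ℝ) + 1) ^ 2 / (l * (2 * d + 1) ^ 2 + (s - a i) ^ 2) :=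
      fun i => by positivity
    have hlast : 0 ≤ l * (2 * (d:ℝ) + 1) ^ 2 * d ^ 2 := by positivity
    by_cases hex : ∃ i, t ≤ (2 * d + 1) / |s - a i|
    · obtain ⟨i, hi⟩ := hex
      have hsp : 0 < |s - a i| := abs_pos.2 (sub_ne_zero.2 (hsa i))
      have h1 : l * t ^ 2 ≤ l * ((2 * d + 1) / |s - a i|) ^ 2 := by gcongr
      have h2 := frac_mono (by positivity) h1
      have h3 : l * ((2 * (d:ℝ) + 1) / |s - a i|) ^ 2 / (l * ((2 * d + 1) / |s - a i|) ^ 2 + 1)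
          = l * (2 * d + 1) ^ 2 / (l * (2 * d + 1) ^ 2 + (s - a i) ^ 2) := by
        rw [← sq_abs (s - a i)]; field_simp
      have h4 := Finset.single_le_sum (f := fun i => l * (2 * (d:ℝ) + 1) ^ 2
        / (l * (2 * d + 1) ^ 2 + (s - a i) ^ 2)) (fun i _ => hterm i) (Finset.mem_univ i)
      linarith
    · push Not at hex
      have h5 : t ≤ (2 * d + 1) * d := by
        by_contra hc
        push Not at hc
        have h6 : (2 * d + 1) * ∑ i, 1 / |s - a i| ≤ ∑ i : Fin k, t := by
          rw [Finset.mul_sum]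
          apply Finset.sum_le_sum
          intro i _
          rw [mul_one_div]; exact (hex i).le
        simp only [Finset.sum_const, Finset.card_univ, Fintype.card_fin, nsmul_eq_mul] at h6
        have hk' : (k:ℝ) ≤ 2 * d := by exact_mod_cast hk
        have : (k:ℝ) * t ≤ 2 * d * t := by gcongr
        nlinarith
      have h7 : l * t ^ 2 / (l * t ^ 2 + 1) ≤ l * t ^ 2 := by
        apply div_le_self (by positivity)
        nlinarith [mul_nonneg hl.le (sq_nonneg t)]
      have h8 : l * t ^ 2 ≤ l * ((2 * d + 1) * d) ^ 2 := by gcongr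
      have h9 := Finset.sum_nonneg (s := Finset.univ) (fun i _ => hterm i)
      nlinarith
  · push Not at hsa
    obtain ⟨i, hi⟩ := hsa
    have hterm : ∀ i, 0 ≤ l * (2 * (d:ℝ) + 1) ^ 2 / (l * (2 * d + 1) ^ 2 + (s - a i) ^ 2) :=
      fun i => by positivity
    have h4 := Finset.single_le_sum (f := fun i => l * (2 * (d:ℝ) + 1) ^ 2
        / (l * (2 * d + 1) ^ 2 + (s - a i) ^ 2)) (fun i _ => hterm i) (Finset.mem_univ i)
    rw [← hi, sub_self] at h4
    have : l * (2 * (d:ℝ) + 1) ^ 2 / (l * (2 * d + 1) ^ 2 + 0 ^ 2) = 1 := by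
      rw [zero_pow two_ne_zero, add_zero, div_self (by positivity)]
    have h5 := Psi_le_one (η := η) hl.le u v
    have hlast : 0 ≤ l * (2 * (d:ℝ) + 1) ^ 2 * d ^ 2 := by positivity
    linarith

lemma integral_lorentz {L : ℝ} (hL : 0 < L) (a : ℝ) :
    ∫ s in (0:ℝ)..1, L ^ 2 / (L ^ 2 + (s - a) ^ 2) ≤ Real.pi * L := by
  have hd : ∀ s ∈ Set.uIcc (0:ℝ) 1, HasDerivAt (fun s => L * Real.arctan ((s - a) / L))
      (L ^ 2 / (L ^ 2 + (s - a) ^ 2)) s := by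
    intro s _
    have h1 : HasDerivAt (fun s => (s - a) / L) (1 / L) s :=
      ((hasDerivAt_id s).sub_const a).div_const L
    have h2 := (h1.arctan).const_mul L
    have e : L ^ 2 / (L ^ 2 + (s - a) ^ 2) = L * (1 / (1 + ((s - a) / L) ^ 2) * (1 / L)) := by
      field_simp
    rw [e]; exact h2
  have hcont : Continuous (fun s : ℝ => L ^ 2 / (L ^ 2 + (s - a) ^ 2)) :=
    Continuous.div (by fun_prop) (by fun_prop) (fun s => by positivity)
  rw [intervalIntegral.integral_eq_sub_of_hasDerivAt hd (hcont.intervalIntegrable _ _)]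
  have h1 := Real.arctan_lt_pi_div_two ((1 - a) / L)
  have h2 := Real.neg_pi_div_two_lt_arctan ((0 - a) / L)
  nlinarith

section rot
variable {ι : Type*} [Fintype ι] [DecidableEq ι]

def rot (s : ℝ) : ι → ℝ × ℝ := fun _ => ((1 - s ^ 2) / (1 + s ^ 2), 2 * s / (1 + s ^ 2))

lemma unit_rot (s : ℝ) (j : ι) : unit ((rot s : ι → ℝ × ℝ) j) := by
  unfold unit rot
  have : (1 + s ^ 2) ≠ 0 := by positivity
  field_simp; ring

lemma XR_rot_deriv (z : ι ⊕ ι → Bool) (s : ℝ) (i : ι) :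
    HasDerivAt (fun s => XR (rot s) z i) (2 / (1 + s ^ 2) * YR (rot s) z i) s := by
  unfold XR YR rot
  have hne : (1 + s ^ 2) ≠ 0 := by positivity
  have hb : HasDerivAt (fun s : ℝ => 1 + s ^ 2) (2 * s) s := by
    simpa using ((hasDerivAt_id s).pow 2).const_add 1
  have hm : HasDerivAt (fun s : ℝ => 1 - s ^ 2) (-(2 * s)) s := by
    simpa using ((hasDerivAt_id s).pow 2).const_sub 1
  have h2 : HasDerivAt (fun s : ℝ => 2 * s) 2 s := by
    simpa using (hasDerivAt_id s).const_mul 2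
  have := ((hm.div hb hne).mul_const (sg (z (Sum.inl i)))).add
    ((h2.div hb hne).mul_const (sg (z (Sum.inr i))))
  refine HasDerivAt.congr_deriv this ?_
  field_simp
  ring

lemma dv_mul_right (c : Finset ι → ℝ) (x y : ι → ℝ) (k : ℝ) :
    dv c x (fun i => k * y i) = k * dv c x y := by
  unfold dv; rw [Finset.mul_sum]
  refine Finset.sum_congr rfl fun i _ => by ring

open Polynomial in
lemma exists_H {d : ℕ} {c : Finset ι → ℝ} (hc : dg d c) (z : ι ⊕ ι → Bool) :
    ∃ H : ℝ[X], H.natDegree ≤ 2 * d ∧ ∀ s : ℝ,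
      (1 + s ^ 2) ^ d * ev c (XR (rot s) z) = H.eval s ∧
      (1 + s ^ 2) * H.derivative.eval s = 2 * d * s * H.eval s
        + 2 * (1 + s ^ 2) ^ d * dv c (XR (rot s) z) (YR (rot s) z) := by
  set lin : ι → ℝ[X] := fun i => C (sg (z (Sum.inl i))) * (1 - X ^ 2)
    + C (sg (z (Sum.inr i))) * (2 * X) with hlin
  set H : ℝ[X] := ∑ S, C (c S) * ((∏ i ∈ S, lin i) * (1 + X ^ 2) ^ (d - S.card)) with hH
  have hX2 : (X ^ 2 : ℝ[X]).natDegree ≤ 2 := Polynomial.natDegree_X_pow_le 2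
  have hlinD : ∀ i, (lin i).natDegree ≤ 2 := by
    intro i
    rw [hlin]; simp only
    compute_degree
  have heval : ∀ s : ℝ, (1 + s ^ 2) ^ d * ev c (XR (rot s) z) = H.eval s := by
    intro s
    have hne : (1 + s ^ 2) ≠ 0 := by positivity
    rw [hH, Polynomial.eval_finset_sum]
    unfold ev
    rw [Finset.mul_sum]
    refine Finset.sum_congr rfl fun S _ => ?_
    by_cases hS : d < S.card
    · simp [hc S hS]
    · rw [Polynomial.eval_mul, Polynomial.eval_mul, Polynomial.eval_prod]
      have : ∀ i ∈ S, (lin i).eval s = (1 + s ^ 2) * XR (rot s) z i := by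
        intro i _
        simp [hlin, XR, rot]
        field_simp
      rw [Finset.prod_congr rfl this, Finset.prod_mul_distrib]
      simp only [Polynomial.eval_C, Finset.prod_const, Polynomial.eval_pow, Polynomial.eval_add,
        Polynomial.eval_one, Polynomial.eval_X]
      have : (1 + s ^ 2) ^ d = (1 + s ^ 2) ^ S.card * (1 + s ^ 2) ^ (d - S.card) := by
        rw [← pow_add]; congr 1; omega
      rw [this]; ring
  refine ⟨H, ?_, fun s => ⟨heval s, ?_⟩⟩
  · rw [hH]
    apply Polynomial.natDegree_sum_le_of_forall_le
    intro S _
    by_cases hS : d < S.card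
    · simp [hc S hS]
    · refine (Polynomial.natDegree_C_mul_le _ _).trans ?_
      refine Polynomial.natDegree_mul_le.trans ?_
      have h1 : (∏ i ∈ S, lin i).natDegree ≤ S.card * 2 := by
        refine (Polynomial.natDegree_prod_le S lin).trans ?_
        rw [← smul_eq_mul]
        exact Finset.sum_le_card_nsmul _ _ _ fun i _ => hlinD i
      have h2 : (1 + X ^ 2 : ℝ[X]).natDegree ≤ 2 := by compute_degree
      have h3 : ((1 + X ^ 2 : ℝ[X]) ^ (d - S.card)).natDegree ≤ (d - S.card) * 2 :=
        Polynomial.natDegree_pow_le_of_le _ h2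
      omega
  · have hne : (1 + s ^ 2) ≠ 0 := by positivity
    have hb : HasDerivAt (fun s : ℝ => 1 + s ^ 2) (2 * s) s := by
      simpa using ((hasDerivAt_id s).pow 2).const_add 1
    have h1 := (hb.pow d).mul (ev_hasDerivAt c (XR_rot_deriv z s))
    have h2 := H.hasDerivAt s
    have h3 : (fun s => H.eval s) = (fun s : ℝ => 1 + s ^ 2) ^ d * fun s => ev c (XR (rot s) z) := by
      ext s; simp [heval s]
    rw [h3] at h2
    have h4 := h2.unique h1
    rw [h4, dv_mul_right, ← heval s]
    rcases d with _ | d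
    · simp
      field_simp
    · simp
      field_simp
      ring

def CD (d : ℕ) : ℝ := 2 * d * (Real.pi * (2 * d + 1)) + (2 * d + 1) ^ 2 * d ^ 2 + 1

lemma CD_pos (d : ℕ) : 0 < CD d := by unfold CD; positivity

lemma XR_cont (z : ι ⊕ ι → Bool) : Continuous (fun s : ℝ => XR (rot s) z) := by
  apply continuous_pi; intro i
  unfold XR rot
  have : ∀ s : ℝ, 1 + s ^ 2 ≠ 0 := fun s => by positivity
  fun_prop (disch := exact this _)
lemma YR_cont (z : ι ⊕ ι → Bool) : Continuous (fun s : ℝ => YR (rot s) z) := by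
  apply continuous_pi; intro i
  unfold YR rot
  have : ∀ s : ℝ, 1 + s ^ 2 ≠ 0 := fun s => by positivity
  fun_prop (disch := exact this _)
lemma ev_cont (c : Finset ι → ℝ) : Continuous (ev c) := by unfold ev; fun_prop
lemma dv_cont (c : Finset ι → ℝ) : Continuous (fun p : (ι → ℝ) × (ι → ℝ) => dv c p.1 p.2) := by
  unfold dv ev; fun_prop

lemma Psi_cont (c : Finset ι → ℝ) {l η : ℝ} (hl : 0 ≤ l) (hη : 0 < η) (z : ι ⊕ ι → Bool) :
    Continuous (fun s : ℝ => Psi l η (ev c (XR (rot s) z)) (dv c (XR (rot s) z) (YR (rot s) z))) := by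
  have h1 : Continuous (fun s : ℝ => ev c (XR (rot s) z)) := (ev_cont c).comp (XR_cont z)
  have h2 : Continuous (fun s : ℝ => dv c (XR (rot s) z) (YR (rot s) z)) :=
    (dv_cont c).comp ((XR_cont z).prodMk (YR_cont z))
  unfold Psi
  refine Continuous.div (by fun_prop) (by fun_prop) (fun s => by positivity)

lemma int_Psi {d : ℕ} {c : Finset ι → ℝ} (hc : dg d c) {l η : ℝ} (hl : 0 < l) (hl1 : l ≤ 1)
    (hη : 0 < η) (z : ι ⊕ ι → Bool) :
    ∫ s in (0:ℝ)..1, Psi l η (ev c (XR (rot s) z)) (dv c (XR (rot s) z) (YR (rot s) z))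
      ≤ CD d * Real.sqrt l := by
  obtain ⟨H, hHd, hH⟩ := exists_H hc z
  have hsl : 0 < Real.sqrt l := Real.sqrt_pos.2 hl
  have hsl2 : Real.sqrt l ^ 2 = l := Real.sq_sqrt hl.le
  by_cases hH0 : H = 0
  · have : ∀ s : ℝ, Psi l η (ev c (XR (rot s) z)) (dv c (XR (rot s) z) (YR (rot s) z)) = 0 := by
      intro s
      have h2 := (hH s).2
      rw [hH0] at h2
      simp only [Polynomial.derivative_zero, Polynomial.eval_zero, mul_zero, zero_add] at h2
      have hp : (2:ℝ) * (1 + s ^ 2) ^ d ≠ 0 := by positivity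
      have : dv c (XR (rot s) z) (YR (rot s) z) = 0 := by
        rcases mul_eq_zero.1 h2.symm with h | h
        · exact absurd h hp
        · exact h
      simp [Psi, this]
    simp only [this, intervalIntegral.integral_zero]
    have := CD_pos d
    positivity
  · obtain ⟨k, hk, a, ha⟩ := poly_log H hH0
    have hk' := hk.trans hHd
    set L := Real.sqrt l * (2 * d + 1) with hL
    have hLp : 0 < L := by positivity
    have hL2 : L ^ 2 = l * (2 * d + 1) ^ 2 := by rw [hL, mul_pow, hsl2]
    have hc1 : ∀ i, Continuous (fun s : ℝ => L ^ 2 / (L ^ 2 + (s - a i) ^ 2)) := fun i =>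
      Continuous.div (by fun_prop) (by fun_prop) (fun s => by positivity)
    calc _ ≤ ∫ s in (0:ℝ)..1, (∑ i, L ^ 2 / (L ^ 2 + (s - a i) ^ 2) + L ^ 2 * d ^ 2) := by
          apply intervalIntegral.integral_mono_on (by norm_num)
          · exact (Psi_cont c hl.le hη z).intervalIntegrable _ _
          · apply Continuous.intervalIntegrable
            exact (continuous_finsetSum _ fun i _ => hc1 i).add continuous_const
          · intro s hs
            rw [hL2]
            exact Psi_bound hk' hl hs.1 hs.2 a (ha s) (hH s).1 (hH s).2
      _ = ∑ i, (∫ s in (0:ℝ)..1, L ^ 2 / (L ^ 2 + (s - a i) ^ 2)) + L ^ 2 * d ^ 2 := by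
          rw [intervalIntegral.integral_add]
          · rw [intervalIntegral.integral_finset_sum]
            · simp
            · intro i _; exact (hc1 i).intervalIntegrable _ _
          · exact (continuous_finsetSum _ fun i _ => hc1 i).intervalIntegrable _ _
          · exact continuous_const.intervalIntegrable _ _
      _ ≤ ∑ i : Fin k, Real.pi * L + L ^ 2 * d ^ 2 := by
          gcongr with i _
          exact integral_lorentz hLp (a i)
      _ ≤ 2 * d * (Real.pi * L) + L ^ 2 * d ^ 2 := by
          simp only [Finset.sum_const, Finset.card_univ, Fintype.card_fin, nsmul_eq_mul]
          have : (k:ℝ) ≤ 2 * d := by exact_mod_cast hk'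
          have := Real.pi_pos
          gcongr
      _ ≤ CD d * Real.sqrt l := by
          have h1 : l ≤ Real.sqrt l := by
            have : Real.sqrt l ≤ 1 := Real.sqrt_le_one.2 hl1
            nlinarith
          rw [hL2, hL]; unfold CD
          have : l * (2 * (d:ℝ) + 1) ^ 2 * d ^ 2 ≤ Real.sqrt l * (2 * d + 1) ^ 2 * d ^ 2 := by gcongr
          linarith

/-- the core lemma -/
lemma core {d : ℕ} {c : Finset ι → ℝ} (hc : dg d c) {l η γ : ℝ} (hl : 0 < l) (hl1 : l ≤ 1)
    (hη : 0 < η) (hγ : 0 < γ) :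
    ex (fun x : ι → Bool => ex (fun y : ι → Bool =>
        Psi l η (ev c (sv x)) (dv c (sv x) (sv y))))
      ≤ CD d * Real.sqrt l + 128 * KP l η * KL d * (γ * N2 c + γ⁻¹ * N4 c) := by
  set U := ex (fun x : ι → Bool => ex (fun y : ι → Bool =>
        Psi l η (ev c (sv x)) (dv c (sv x) (sv y)))) with hU
  set Er := 128 * KP l η * KL d * (γ * N2 c + γ⁻¹ * N4 c) with hEr
  have h1 : ∀ s : ℝ, U - Er ≤ ex (fun z => Psi l η (ev c (XR (rot s) z))
      (dv c (XR (rot s) z) (YR (rot s) z))) := by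
    intro s
    have := lind_err (KP_nonneg hη) (TE_Psi hl.le hη) hc hγ (rot s) (unit_rot s)
    linarith
  have hcont : ∀ z ∈ (Finset.univ : Finset (ι ⊕ ι → Bool)),
      IntervalIntegrable (fun s : ℝ => Psi l η (ev c (XR (rot s) z))
      (dv c (XR (rot s) z) (YR (rot s) z))) volume 0 1 := fun z _ =>
      (Psi_cont c hl.le hη z).intervalIntegrable _ _
  have h2 : ∫ _s in (0:ℝ)..1, (U - Er) ≤ ∫ s in (0:ℝ)..1, ex (fun z => Psi l η (ev c (XR (rot s) z))
      (dv c (XR (rot s) z) (YR (rot s) z))) := by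
    apply intervalIntegral.integral_mono_on (by norm_num)
    · exact continuous_const.intervalIntegrable _ _
    · apply Continuous.intervalIntegrable
      unfold ex
      apply Continuous.div_const
      exact continuous_finsetSum _ fun z _ => Psi_cont c hl.le hη z
    · intro s _; exact h1 s
  have h3 : ∫ s in (0:ℝ)..1, ex (fun z => Psi l η (ev c (XR (rot s) z))
      (dv c (XR (rot s) z) (YR (rot s) z)))
      = ex (fun z => ∫ s in (0:ℝ)..1, Psi l η (ev c (XR (rot s) z))
      (dv c (XR (rot s) z) (YR (rot s) z))) := by
    unfold ex
    rw [intervalIntegral.integral_div, intervalIntegral.integral_finset_sum hcont]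
  rw [h3] at h2
  have h4 := h2.trans (ex_le_const fun z => int_Psi hc hl hl1 hη z)
  simp at h4
  linarith
end rot
end
end PTFas

namespace PTFas
noncomputable section

lemma markov' {Ω : Type*} [Fintype Ω] [Nonempty Ω] {f : Ω → ℝ} (hf : ∀ x, 0 ≤ f x) {t : ℝ}
    (ht : 0 < t) : pr (fun x => t * ex f < f x) ≤ 1 / t := by
  have h0 : 0 ≤ ex f := ex_nonneg hf
  rcases h0.eq_or_lt with h | h
  · have hs : ∀ x, f x = 0 := by
      have hc : (0:ℝ) < Fintype.card Ω := by exact_mod_cast Fintype.card_pos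
      have : ∑ x, f x = 0 := by
        unfold ex at h
        rcases div_eq_zero_iff.1 h.symm with h1 | h1
        · exact h1
        · exact absurd h1 hc.ne'
      intro x
      exact (Finset.sum_eq_zero_iff_of_nonneg (fun x _ => hf x)).1 this x (Finset.mem_univ x)
    have : pr (fun x => t * ex f < f x) = 0 := by
      unfold pr
      simp only [hs, ← h, mul_zero, lt_irrefl]
      rw [ind_not (by simp)]; exact ex_const 0
    rw [this]; positivity
  · have h1 := markov hf (a := t * ex f)
    have h2 : pr (fun x => t * ex f < f x) ≤ pr (fun x => t * ex f ≤ f x) :=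
      pr_mono fun x hx => hx.le
    have h3 : t * ex f * pr (fun x => t * ex f < f x) ≤ ex f :=
      (mul_le_mul_of_nonneg_left h2 (by positivity)).trans h1
    rw [le_div_iff₀ ht]
    have : ex f * (pr (fun x => t * ex f < f x) * t) ≤ ex f * 1 := by linarith
    exact le_of_mul_le_mul_left this h

section sb
variable {ι : Type*} [Fintype ι] [DecidableEq ι]

lemma ex_dev (c : Finset ι → ℝ) : ex (fun x => (ev c (sv x) - c ∅) ^ 2) = Vr c := by
  have : ∀ x, (ev c (sv x) - c ∅) ^ 2 = ev c (sv x) ^ 2 - 2 * c ∅ * ev c (sv x) + c ∅ ^ 2 := by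
    intro x; ring
  simp only [this]
  rw [ex_add, ex_sub, ex_mul_left, ex_ev, ex_ev_sq, ex_const, E2_eq]; ring

lemma cheb (c : Finset ι → ℝ) {t : ℝ} (ht : 0 < t) :
    pr (fun x => t ≤ (ev c (sv x) - c ∅) ^ 2) ≤ Vr c / t := by
  have := markov (f := fun x => (ev c (sv x) - c ∅) ^ 2) (fun x => sq_nonneg _) (a := t)
  rw [ex_dev] at this
  rw [le_div_iff₀ ht]; linarith

lemma sb_biased {c : Finset ι → ℝ} (h1 : 1 ≤ E2 c) (hV : Vr c ≤ 1 / 2) {η : ℝ} (hη : η ≤ 1 / 4) :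
    pr (fun x => |ev c (sv x)| ≤ η) ≤ 8 * Vr c := by
  have := cheb c (t := 1 / 8) (by norm_num)
  refine (pr_mono fun x hx => ?_).trans (this.trans (by linarith))
  have hc : 1 / 2 ≤ c ∅ ^ 2 := by rw [E2_eq] at h1; linarith
  have h2 := abs_le.1 (hx.trans hη)
  have h3 : (7/10)^2 ≤ |c ∅| ^ 2 := by rw [sq_abs]; linarith
  have h4 : 7/10 ≤ |c ∅| := le_of_sq_le_sq h3 (abs_nonneg _)
  rcases abs_cases (c ∅) with ⟨h5, _⟩ | ⟨h5, _⟩ <;> nlinarith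

lemma DB_mem (c : Finset ι → ℝ) (T : Finset ι) :
    (fun y : ι → Bool => DB (sv y) c T) ∈ degSub ι 1 := by
  have : (fun y : ι → Bool => DB (sv y) c T) = ∑ i, pd i c T • (fun y : ι → Bool => sg (y i)) := by
    ext y; simp [DB, Finset.sum_apply, sv, mul_comm]
  rw [this]
  exact Submodule.sum_mem _ fun i _ => Submodule.smul_mem _ _ (coord_mem i)

lemma ex_DB_sq (c : Finset ι → ℝ) (T : Finset ι) :
    ex (fun y : ι → Bool => DB (sv y) c T ^ 2) = ∑ i, pd i c T ^ 2 := ex_lin_sq _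

lemma ex_E2_DB (c : Finset ι → ℝ) : ex (fun y : ι → Bool => E2 (DB (sv y) c)) = N2 c := by
  unfold E2 N2
  rw [ex_sum]
  simp only [ex_DB_sq, ← E2_pd]
  rw [Finset.sum_comm]; rfl

lemma Inf_pd_symm (c : Finset ι → ℝ) (i j : ι) : Inf (pd i c) j = Inf (pd j c) i := by
  rw [← E2_pd, ← E2_pd, pd_comm]

lemma Inf_DB_eq (c : Finset ι → ℝ) (j : ι) (y : ι → Bool) : Inf (DB (sv y) c) j
    = ∑ T, (if j ∈ T then (1:ℝ) else 0) * DB (sv y) c T ^ 2 := by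
  unfold Inf; refine Finset.sum_congr rfl fun T _ => by split_ifs <;> simp

lemma ex_Inf_DB {d : ℕ} {c : Finset ι → ℝ} (hc : dg d c) (j : ι) :
    ex (fun y : ι → Bool => Inf (DB (sv y) c) j) ≤ d * Inf c j := by
  refine le_trans (le_of_eq ?_) (N2_pd hc j)
  simp only [Inf_DB_eq]
  rw [ex_sum]
  simp only [ex_mul_left, ex_DB_sq]
  unfold N2
  simp only [← Inf_pd_symm c _ j]
  unfold Inf
  rw [Finset.sum_comm]
  refine Finset.sum_congr rfl fun T _ => ?_
  split_ifs <;> simp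

lemma ex_N2_DB {d : ℕ} {c : Finset ι → ℝ} (hc : dg d c) :
    ex (fun y : ι → Bool => N2 (DB (sv y) c)) ≤ d * N2 c := by
  unfold N2
  rw [ex_sum, Finset.mul_sum]
  exact Finset.sum_le_sum fun j _ => ex_Inf_DB hc j

lemma ex_N4_DB {d : ℕ} {c : Finset ι → ℝ} (hc : dg d c) :
    ex (fun y : ι → Bool => N4 (DB (sv y) c)) ≤ 9 * d ^ 2 * N4 c := by
  unfold N4
  rw [ex_sum, Finset.mul_sum]
  refine Finset.sum_le_sum fun j _ => ?_
  have h := sos Finset.univ (fun T : Finset ι => if j ∈ T then (1:ℝ) else 0)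
    (fun T _ => by split_ifs <;> norm_num) (fun T (y : ι → Bool) => DB (sv y) c T)
    (fun T _ => DB_mem c T)
  simp only [← Inf_DB_eq] at h
  refine h.trans ?_
  have h0 : 0 ≤ ex (fun y : ι → Bool => Inf (DB (sv y) c) j) := ex_nonneg fun y => Inf_nonneg _ _
  have h1 := pow_le_pow_left₀ h0 (ex_Inf_DB hc j) 2
  calc _ ≤ 9 ^ 1 * (d * Inf c j) ^ 2 := by gcongr
    _ = _ := by ring

lemma pz_DB (c : Finset ι → ℝ) :
    1 / 36 ≤ pr (fun y : ι → Bool => N2 c / 2 ≤ E2 (DB (sv y) c)) := by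
  have h := sos_pz Finset.univ (fun T : Finset ι => (1:ℝ))
    (fun T _ => by norm_num) (fun T (y : ι → Bool) => DB (sv y) c T)
    (fun T _ => DB_mem c T)
  simp only [one_mul] at h
  have e : ex (fun y : ι → Bool => ∑ T, DB (sv y) c T ^ 2) = N2 c := ex_E2_DB c
  rw [e] at h
  norm_num at h ⊢
  exact h

lemma exists_B {d : ℕ} {c : Finset ι → ℝ} (hc : dg d c) (f : (ι → Bool) → ℝ) (hf : ∀ y, 0 ≤ f y) :
    ∃ y : ι → Bool, N2 c / 2 ≤ E2 (DB (sv y) c) ∧ f y ≤ 144 * ex f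
      ∧ N2 (DB (sv y) c) ≤ 144 * (d * N2 c) ∧ N4 (DB (sv y) c) ≤ 144 * (9 * d ^ 2 * N4 c) := by
  by_contra hcon
  push Not at hcon
  have h0 := pz_DB c
  have m1 := markov' hf (t := 144) (by norm_num)
  have m2 := markov' (f := fun y : ι → Bool => N2 (DB (sv y) c)) (fun y => N2_nonneg _)
    (t := 144) (by norm_num)
  have m3 := markov' (f := fun y : ι → Bool => N4 (DB (sv y) c)) (fun y => N4_nonneg _)
    (t := 144) (by norm_num)
  have hle : pr (fun y : ι → Bool => N2 c / 2 ≤ E2 (DB (sv y) c)) ≤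
      pr (fun y : ι → Bool => (144 * ex f < f y ∨
        144 * ex (fun y : ι → Bool => N2 (DB (sv y) c)) < N2 (DB (sv y) c)) ∨
        144 * ex (fun y : ι → Bool => N4 (DB (sv y) c)) < N4 (DB (sv y) c)) := by
    apply pr_mono
    intro y hy
    by_contra hno
    push Not at hno
    have := hcon y hy hno.1.1 (hno.1.2.trans (by linarith [ex_N2_DB hc]))
    linarith [hno.2, ex_N4_DB hc]
  have o1 := pr_or_le (fun y : ι → Bool => (144 * ex f < f y ∨
        144 * ex (fun y : ι → Bool => N2 (DB (sv y) c)) < N2 (DB (sv y) c)))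
        (fun y => 144 * ex (fun y : ι → Bool => N4 (DB (sv y) c)) < N4 (DB (sv y) c))
  have o2 := pr_or_le (fun y : ι → Bool => 144 * ex f < f y)
        (fun y => 144 * ex (fun y : ι → Bool => N2 (DB (sv y) c)) < N2 (DB (sv y) c))
  norm_num at *
  linarith

end sb

def SBstat (k : ℕ) : Prop := ∀ δ > (0:ℝ), ∀ K > (0:ℝ), ∃ η > (0:ℝ), ∃ τ > (0:ℝ),
  ∀ (ι : Type) [Fintype ι] [DecidableEq ι] (c : Finset ι → ℝ), dg k c → 1 ≤ E2 c → N2 c ≤ K →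
    N4 c ≤ τ → pr (fun x => |ev c (sv x)| ≤ η) ≤ δ

lemma SB_zero : SBstat 0 := by
  intro δ hδ K hK
  refine ⟨1 / 4, by norm_num, 1, by norm_num, fun ι _ _ c hc h1 _ _ => ?_⟩
  have hV : Vr c ≤ 0 := by
    have := (Vr_le_N2 c).trans (N2_le_Vr hc)
    simpa using this
  have := sb_biased h1 (by linarith) le_rfl
  linarith

lemma SB_succ (k : ℕ) (ih : SBstat k) : SBstat (k + 1) := by
  intro δ hδ K hK
  set g := min (1 / 2) (δ / 8) with hg
  have hg0 : 0 < g := by positivity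
  set K' := 2 / g * (144 * (((k + 1 : ℕ) : ℝ) * K)) with hK'
  have hK'0 : 0 < K' := by positivity
  obtain ⟨η', hη', τ', hτ', hih⟩ := ih (δ / 2) (by positivity) K' hK'0
  have hCD := CD_pos (k + 1)
  set sl := min 1 (δ / (1152 * CD (k + 1))) with hsl
  have hsl0 : 0 < sl := by positivity
  have hsl1 : sl ≤ 1 := min_le_left _ _
  set l := sl ^ 2 with hl
  have hl0 : 0 < l := by positivity
  have hl1 : l ≤ 1 := pow_le_one₀ hsl0.le hsl1
  have hsq : Real.sqrt l = sl := Real.sqrt_sq hsl0.le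
  set η := min (1 / 4) (η' * Real.sqrt (g * l) / 2) with hη
  have hη0 : 0 < η := by
    have : 0 < Real.sqrt (g * l) := Real.sqrt_pos.2 (by positivity)
    positivity
  have hη2 : 4 * η ^ 2 ≤ η' ^ 2 * (g * l) := by
    have h1 : η ≤ η' * Real.sqrt (g * l) / 2 := min_le_right _ _
    have h2 := pow_le_pow_left₀ hη0.le h1 2
    rw [div_pow, mul_pow, Real.sq_sqrt (by positivity)] at h2
    linarith
  set W := 288 * (128 * KP l η * KL (k + 1)) with hW
  have hKP : 0 < KP l η := by unfold KP; positivity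
  have hKL := KL_pos (k + 1)
  have hW0 : 0 < W := by positivity
  set γ := δ / (8 * W * K) with hγ
  have hγ0 : 0 < γ := by positivity
  set τ := min (δ * γ / (8 * W)) (τ' * g ^ 2 / (4 * (144 * (9 * ((k + 1 : ℕ) : ℝ) ^ 2)))) with hτ
  have hτ0 : 0 < τ := by positivity
  refine ⟨η, hη0, τ, hτ0, fun ι _ _ c hc h1 hN2 hN4 => ?_⟩
  by_cases hV : Vr c < g
  · have := sb_biased h1 (hV.le.trans (min_le_left _ _)) (min_le_left _ _ : η ≤ 1 / 4)
    have h3 : Vr c ≤ δ / 8 := hV.le.trans (min_le_right _ _)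
    linarith
  push Not at hV
  obtain ⟨y, hy1, hy2, hy3, hy4⟩ := exists_B hc
    (fun y : ι → Bool => ex (fun x : ι → Bool => Psi l η (ev c (sv x)) (dv c (sv x) (sv y))))
    (fun y => ex_nonneg fun x => Psi_nonneg hl0.le _ _)
  rw [ex_comm] at hy2
  have hcore := core hc hl0 hl1 hη0 hγ0
  -- bound on error
  have hbad : 288 * ex (fun x : ι → Bool => ex (fun y : ι → Bool =>
        Psi l η (ev c (sv x)) (dv c (sv x) (sv y)))) ≤ δ / 2 := by
    have a1 : 288 * (CD (k + 1) * Real.sqrt l) ≤ δ / 4 := by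
      rw [hsq]
      have : sl ≤ δ / (1152 * CD (k + 1)) := min_le_right _ _
      rw [le_div_iff₀ (by positivity)] at this
      linarith
    have a2 : W * (γ * N2 c) ≤ δ / 8 := by
      calc W * (γ * N2 c) ≤ W * (γ * K) := by gcongr
        _ = δ / 8 := by rw [hγ]; field_simp
    have a3 : W * (γ⁻¹ * N4 c) ≤ δ / 8 := by
      calc W * (γ⁻¹ * N4 c) ≤ W * (γ⁻¹ * (δ * γ / (8 * W))) := by
            gcongr; exact hN4.trans (min_le_left _ _)
        _ = δ / 8 := by field_simp
    have : 288 * (128 * KP l η * KL (k + 1) * (γ * N2 c + γ⁻¹ * N4 c))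
        = W * (γ * N2 c) + W * (γ⁻¹ * N4 c) := by rw [hW]; ring
    linarith
  set e := DB (sv y) c with he
  have hE2e : g / 2 ≤ E2 e := by
    have := Vr_le_N2 c
    linarith
  set a := Real.sqrt (2 / g) with ha
  have ha2 : a ^ 2 = 2 / g := Real.sq_sqrt (by positivity)
  have hfin := hih ι (fun S => a * e S) (dg_smul a (dg_DB hc (sv y))) (by
      rw [E2_smul, ha2]
      calc (1:ℝ) = 2 / g * (g / 2) := by field_simp
        _ ≤ _ := by gcongr) (by
      rw [N2_smul, ha2, hK']
      gcongr
      refine hy3.trans ?_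
      gcongr) (by
      rw [N4_smul, show a ^ 4 = (a ^ 2) ^ 2 by ring, ha2]
      have h5 : N4 c ≤ τ' * g ^ 2 / (4 * (144 * (9 * ((k + 1 : ℕ) : ℝ) ^ 2))) :=
        hN4.trans (min_le_right _ _)
      rw [le_div_iff₀ (by positivity)] at h5
      calc (2 / g) ^ 2 * N4 e ≤ (2 / g) ^ 2 * (144 * (9 * ((k + 1 : ℕ) : ℝ) ^ 2 * N4 c)) := by gcongr
        _ = (N4 c * (4 * (144 * (9 * ((k + 1 : ℕ) : ℝ) ^ 2)))) / g ^ 2 := by ring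
        _ ≤ τ' * g ^ 2 / g ^ 2 := by gcongr
        _ = τ' := by field_simp)
  have hsplit : pr (fun x => |ev c (sv x)| ≤ η) ≤
      pr (fun x => (|ev (fun S => a * e S) (sv x)| ≤ η') ∨
        (1 / 2 ≤ Psi l η (ev c (sv x)) (dv c (sv x) (sv y)))) := by
    apply pr_mono
    intro x hx
    by_cases hP : 1 / 2 ≤ Psi l η (ev c (sv x)) (dv c (sv x) (sv y))
    · exact Or.inr hP
    · left
      push Not at hP
      rw [ev_smul, he, ev_DB]
      set D := dv c (sv x) (sv y)
      set p := ev c (sv x)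
      unfold Psi at hP
      rw [div_lt_div_iff₀ (by positivity) (by norm_num)] at hP
      have hp2 : p ^ 2 ≤ η ^ 2 := by rw [← sq_abs p]; exact pow_le_pow_left₀ (abs_nonneg _) hx 2
      have hD : l * D ^ 2 ≤ 2 * η ^ 2 := by linarith
      apply abs_le_of_sq_le_sq _ hη'.le
      rw [mul_pow, ha2, div_mul_eq_mul_div, div_le_iff₀ hg0]
      have : l * (2 * D ^ 2) ≤ l * (η' ^ 2 * g) := by linarith
      exact le_of_mul_le_mul_left this hl0
  have ho := pr_or_le (fun x => |ev (fun S => a * e S) (sv x)| ≤ η')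
    (fun x => 1 / 2 ≤ Psi l η (ev c (sv x)) (dv c (sv x) (sv y)))
  have hm := markov (f := fun x => Psi l η (ev c (sv x)) (dv c (sv x) (sv y)))
    (fun x => Psi_nonneg hl0.le _ _) (a := 1 / 2)
  linarith

theorem SB (k : ℕ) : SBstat k := by
  induction k with
  | zero => exact SB_zero
  | succ k ih => exact SB_succ k ih

end
end PTFas

namespace PTFas
noncomputable section
section restr
variable {ι : Type*} [Fintype ι] [DecidableEq ι]

def restr (c : Finset ι → ℝ) (J : Finset ι) (x : ι → ℝ) : Finset ι → ℝ :=
  fun S => ∑ U, if U ∩ J = S then c U * ∏ i ∈ U \ J, x i else 0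

def merge {α : Type*} (J : Finset ι) (y x : ι → α) : ι → α := fun i => if i ∈ J then y i else x i

lemma sv_merge (J : Finset ι) (y x : ι → Bool) : sv (merge J y x) = merge J (sv y) (sv x) := by
  ext i; unfold sv merge; split_ifs <;> rfl

lemma ev_restr (c : Finset ι → ℝ) (J : Finset ι) (x y : ι → ℝ) :
    ev (restr c J x) y = ev c (merge J y x) := by
  unfold ev restr
  simp only [Finset.sum_mul, ite_mul, zero_mul]
  rw [Finset.sum_comm]
  refine Finset.sum_congr rfl fun U _ => ?_
  rw [Finset.sum_ite_eq]
  simp only [Finset.mem_univ, if_true]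
  rw [mul_assoc, ← Finset.prod_inter_mul_prod_sdiff U J (merge J y x), mul_comm (∏ i ∈ U \ J, x i)]
  congr 2
  · refine Finset.prod_congr rfl fun i hi => ?_
    simp [merge, (Finset.mem_inter.1 hi).2]
  · refine Finset.prod_congr rfl fun i hi => ?_
    simp [merge, (Finset.mem_sdiff.1 hi).2]

lemma ev_restr_sv (c : Finset ι → ℝ) (J : Finset ι) (x y : ι → Bool) :
    ev (restr c J (sv x)) (sv y) = ev c (sv (merge J y x)) := by rw [ev_restr, sv_merge]

lemma restr_supp (c : Finset ι → ℝ) (J : Finset ι) (x : ι → ℝ) {S : Finset ι} (h : ¬ S ⊆ J) :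
    restr c J x S = 0 := by
  unfold restr
  refine Finset.sum_eq_zero fun U _ => if_neg fun hU => h ?_
  rw [← hU]; exact Finset.inter_subset_right

lemma dg_restr {d : ℕ} {c : Finset ι → ℝ} (hc : dg d c) (J : Finset ι) (x : ι → ℝ) :
    dg d (restr c J x) := by
  intro S hS
  unfold restr
  refine Finset.sum_eq_zero fun U _ => ?_
  split_ifs with h
  · rw [hc U, zero_mul]
    refine lt_of_lt_of_le hS ?_
    rw [← h]; exact Finset.card_le_card Finset.inter_subset_left
  · rfl

lemma restr_chi (c : Finset ι → ℝ) (J : Finset ι) (x : ι → Bool) (S : Finset ι) :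
    restr c J (sv x) S = ∑ U ∈ Finset.univ.filter (fun U => U ∩ J = S), c U * chi (U \ J) x := by
  unfold restr; rw [Finset.sum_filter]; rfl

lemma restr_mem {d : ℕ} {c : Finset ι → ℝ} (hc : dg d c) (J : Finset ι) (S : Finset ι) :
    (fun x : ι → Bool => restr c J (sv x) S) ∈ degSub ι d := by
  have : (fun x : ι → Bool => restr c J (sv x) S)
      = ∑ U ∈ Finset.univ.filter (fun U => U ∩ J = S), c U • chi (U \ J) := by
    ext x; rw [restr_chi]; simp [Finset.sum_apply]
  rw [this]
  refine Submodule.sum_mem _ fun U _ => ?_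
  by_cases h : d < U.card
  · rw [hc U h, zero_smul]; exact Submodule.zero_mem _
  · exact Submodule.smul_mem _ _ (chi_mem (le_trans (Finset.card_le_card Finset.sdiff_subset) (not_lt.1 h)))

lemma ex_restr_sq1 (c : Finset ι → ℝ) (J S : Finset ι) :
    ex (fun x : ι → Bool => restr c J (sv x) S ^ 2) = ∑ U, if U ∩ J = S then c U ^ 2 else 0 := by
  simp only [restr_chi]
  rw [ex_sq_chi, Finset.sum_filter]
  intro U hU V hV h
  simp only [Finset.coe_filter, Finset.mem_univ, true_and, Set.mem_setOf_eq] at hU hV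
  simp only at h
  rw [← Finset.sdiff_union_inter U J, ← Finset.sdiff_union_inter V J, h, hU, hV]

lemma ex_restr_sq (c : Finset ι → ℝ) (J : Finset ι) (a : Finset ι → ℝ) :
    ex (fun x : ι → Bool => ∑ S, a S * restr c J (sv x) S ^ 2) = ∑ U, a (U ∩ J) * c U ^ 2 := by
  rw [ex_sum]
  simp only [ex_mul_left, ex_restr_sq1, Finset.mul_sum]
  rw [Finset.sum_comm]
  refine Finset.sum_congr rfl fun U _ => ?_
  simp

lemma ex_E2_restr (c : Finset ι → ℝ) (J : Finset ι) :
    ex (fun x : ι → Bool => E2 (restr c J (sv x))) = E2 c := by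
  have := ex_restr_sq c J (fun _ => 1)
  simpa [E2] using this

lemma Inf_restr_notMem (c : Finset ι → ℝ) (J : Finset ι) (x : ι → ℝ) {i : ι} (h : i ∉ J) :
    Inf (restr c J x) i = 0 := by
  unfold Inf
  refine Finset.sum_eq_zero fun S _ => ?_
  split_ifs with hi
  · rw [restr_supp]; · norm_num
    exact fun hS => h (hS hi)
  · rfl

lemma Inf_eq_a (c : Finset ι → ℝ) (i : ι) :
    Inf c i = ∑ S, (if i ∈ S then (1:ℝ) else 0) * c S ^ 2 := by
  unfold Inf; refine Finset.sum_congr rfl fun T _ => by split_ifs <;> simp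

lemma ex_Inf_restr (c : Finset ι → ℝ) (J : Finset ι) {i : ι} (h : i ∈ J) :
    ex (fun x : ι → Bool => Inf (restr c J (sv x)) i) = Inf c i := by
  simp only [Inf_eq_a]
  rw [ex_restr_sq c J (fun S => if i ∈ S then (1:ℝ) else 0)]
  simp [h]

lemma N2_restr (c : Finset ι → ℝ) (J : Finset ι) (x : ι → ℝ) :
    N2 (restr c J x) = ∑ i ∈ J, Inf (restr c J x) i := by
  unfold N2
  symm; apply Finset.sum_subset (Finset.subset_univ _)
  intro i _ hi; exact Inf_restr_notMem _ _ _ hi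

lemma N4_restr (c : Finset ι → ℝ) (J : Finset ι) (x : ι → ℝ) :
    N4 (restr c J x) = ∑ i ∈ J, Inf (restr c J x) i ^ 2 := by
  unfold N4
  symm; apply Finset.sum_subset (Finset.subset_univ _)
  intro i _ hi; rw [Inf_restr_notMem _ _ _ hi]; norm_num

lemma ex_N2_restr (c : Finset ι → ℝ) (J : Finset ι) :
    ex (fun x : ι → Bool => N2 (restr c J (sv x))) = ∑ i ∈ J, Inf c i := by
  simp only [N2_restr]
  rw [ex_sum]
  exact Finset.sum_congr rfl fun i hi => ex_Inf_restr c J hi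

lemma ex_Vr_restr (c : Finset ι → ℝ) (J : Finset ι) :
    ex (fun x : ι → Bool => Vr (restr c J (sv x))) ≤ ∑ i ∈ J, Inf c i := by
  rw [← ex_N2_restr]; exact ex_mono fun x => Vr_le_N2 _

lemma ex_N4_restr {d : ℕ} {c : Finset ι → ℝ} (hc : dg d c) (J : Finset ι) :
    ex (fun x : ι → Bool => N4 (restr c J (sv x))) ≤ 9 ^ d * ∑ i ∈ J, Inf c i ^ 2 := by
  simp only [N4_restr]
  rw [ex_sum, Finset.mul_sum]
  refine Finset.sum_le_sum fun i hi => ?_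
  have h := sos Finset.univ (fun T : Finset ι => if i ∈ T then (1:ℝ) else 0)
    (fun T _ => by split_ifs <;> norm_num) (fun T (y : ι → Bool) => restr c J (sv y) T)
    (fun T _ => restr_mem hc J T)
  simp only [← Inf_eq_a] at h
  rwa [ex_Inf_restr c J hi] at h

lemma pz_N2_restr {d : ℕ} {c : Finset ι → ℝ} (hc : dg d c) (J : Finset ι) :
    1 / (4 * 9 ^ d) ≤ pr (fun x : ι → Bool => (∑ i ∈ J, Inf c i) / 2 ≤ N2 (restr c J (sv x))) := by
  have h := sos_pz Finset.univ (fun T : Finset ι => (T.card : ℝ))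
    (fun T _ => by positivity) (fun T (y : ι → Bool) => restr c J (sv y) T)
    (fun T _ => restr_mem hc J T)
  simp only [← N2_eq] at h
  rwa [ex_N2_restr] at h

lemma ex_mu_restr (c : Finset ι → ℝ) (J : Finset ι) :
    E2 c - ∑ i ∈ J, Inf c i ≤ ex (fun x : ι → Bool => restr c J (sv x) ∅ ^ 2) := by
  have h1 := ex_E2_restr c J
  have h2 := ex_Vr_restr c J
  simp only [E2_eq (restr c J _)] at h1
  rw [ex_add] at h1
  linarith

lemma pz_mu_restr {d : ℕ} {c : Finset ι → ℝ} (hc : dg d c) (J : Finset ι) :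
    1 / (4 * 9 ^ d) ≤ pr (fun x : ι → Bool => (E2 c - ∑ i ∈ J, Inf c i) / 2 ≤ restr c J (sv x) ∅ ^ 2) := by
  have h := sos_pz {(∅ : Finset ι)} (fun T : Finset ι => (1 : ℝ))
    (fun T _ => by positivity) (fun T (y : ι → Bool) => restr c J (sv y) T)
    (fun T _ => restr_mem hc J T)
  simp only [Finset.sum_singleton, one_mul] at h
  refine h.trans (pr_mono fun x hx => ?_)
  have := ex_mu_restr c J
  linarith

lemma restr_dev (c : Finset ι → ℝ) (J : Finset ι) :
    ex (fun x : ι → Bool => (restr c J (sv x) ∅ - c ∅) ^ 2) ≤ Vr c := by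
  set c' : Finset ι → ℝ := fun S => if S = ∅ then 0 else c S with hc'
  have h : ∀ x : ι → Bool, restr c J (sv x) ∅ - c ∅ = restr c' J (sv x) ∅ := by
    intro x
    unfold restr
    rw [← Finset.add_sum_erase _ _ (Finset.mem_univ (∅ : Finset ι)),
      ← Finset.add_sum_erase _ (fun U => if U ∩ J = ∅ then c' U * _ else 0) (Finset.mem_univ (∅ : Finset ι))]
    simp only [Finset.empty_inter, if_true, Finset.empty_sdiff, Finset.prod_empty, mul_one]
    have h0 : c' ∅ = 0 := by simp [hc']
    rw [h0, zero_add, add_sub_cancel_left]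
    refine Finset.sum_congr rfl fun U hU => ?_
    have : c' U = c U := by simp [hc', Finset.ne_of_mem_erase hU]
    rw [this]
  simp only [h]
  rw [ex_restr_sq1]
  unfold Vr
  refine Finset.sum_le_sum fun U _ => ?_
  by_cases hU : U = ∅
  · simp [hU, hc']
  · simp only [hU, if_false, hc']
    split_ifs
    · exact le_rfl
    · positivity

def mergeEquiv (J : Finset ι) : ((ι → Bool) × (ι → Bool)) ≃ ((ι → Bool) × (ι → Bool)) where
  toFun p := (merge J p.2 p.1, merge J p.1 p.2)
  invFun p := (merge J p.2 p.1, merge J p.1 p.2)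
  left_inv p := by
    refine Prod.ext ?_ ?_ <;> (ext i; simp only [merge]; split_ifs <;> rfl)
  right_inv p := by
    refine Prod.ext ?_ ?_ <;> (ext i; simp only [merge]; split_ifs <;> rfl)

lemma ex_merge (J : Finset ι) (h : (ι → Bool) → ℝ) :
    ex (fun x => ex (fun y => h (merge J y x))) = ex h := by
  have h1 := ex_prod (fun p : (ι → Bool) × (ι → Bool) => h (merge J p.2 p.1))
  have h2 := ex_prod (fun p : (ι → Bool) × (ι → Bool) => h p.1)
  have h3 := ex_equiv (mergeEquiv J) (fun p : (ι → Bool) × (ι → Bool) => h p.1)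
  simp only [mergeEquiv, Equiv.coe_fn_mk] at h3
  rw [← h1, h3, h2]
  simp only [ex_const]

lemma merge_flip (J : Finset ι) {i : ι} (hi : i ∈ J) (y x : ι → Bool) :
    merge J (flip i y) x = flip i (merge J y x) := by
  ext j
  by_cases hj : j = i
  · subst hj; simp [merge, flip, hi]
  · simp [merge, flip, hj]

/-- probability that flipping `i` changes the sign -/
def fl (c : Finset ι → ℝ) (i : ι) : ℝ :=
  pr (fun x : ι → Bool => ¬ (0 ≤ ev c (sv x) ↔ 0 ≤ ev c (sv (flip i x))))

def sens (c : Finset ι → ℝ) (J : Finset ι) : ℝ := ∑ i ∈ J, fl c i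

lemma fl_nonneg (c : Finset ι → ℝ) (i : ι) : 0 ≤ fl c i := pr_nonneg _
lemma fl_le_one (c : Finset ι → ℝ) (i : ι) : fl c i ≤ 1 := pr_le_one _
lemma sens_nonneg (c : Finset ι → ℝ) (J : Finset ι) : 0 ≤ sens c J :=
  Finset.sum_nonneg fun _ _ => fl_nonneg _ _
lemma sens_le_card (c : Finset ι → ℝ) (J : Finset ι) : sens c J ≤ J.card := by
  unfold sens
  refine (Finset.sum_le_sum fun i _ => fl_le_one c i).trans ?_
  simp

lemma fl_restr (c : Finset ι → ℝ) (J : Finset ι) {i : ι} (hi : i ∈ J) :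
    ex (fun x : ι → Bool => fl (restr c J (sv x)) i) = fl c i := by
  unfold fl pr
  simp only [ev_restr_sv, merge_flip J hi]
  exact ex_merge J (fun z => ind (¬ (0 ≤ ev c (sv z) ↔ 0 ≤ ev c (sv (flip i z)))))

lemma sens_restr (c : Finset ι → ℝ) (J : Finset ι) :
    ex (fun x : ι → Bool => sens (restr c J (sv x)) J) = sens c J := by
  unfold sens
  rw [ex_sum]
  exact Finset.sum_congr rfl fun i hi => fl_restr c J hi

def rr (c : Finset ι → ℝ) : ℝ := Vr c / E2 c
lemma rr_nonneg (c : Finset ι → ℝ) : 0 ≤ rr c := div_nonneg (Vr_nonneg c) (E2_nonneg c)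

lemma fl_le (c : Finset ι → ℝ) (i : ι) : fl c i ≤ 4 * rr c := by
  have h0 := E2_nonneg c
  have hV := Vr_nonneg c
  by_cases hr : 1 / 2 < rr c
  · linarith [fl_le_one c i]
  push Not at hr
  rcases h0.eq_or_lt with h | h
  · -- all coefficients vanish
    have hz : ∀ S, c S = 0 := by
      intro S
      have := (Finset.sum_eq_zero_iff_of_nonneg (fun S _ => sq_nonneg (c S))).1 h.symm S (Finset.mem_univ _)
      exact pow_eq_zero_iff (two_ne_zero) |>.1 this
    have : fl c i = 0 := by
      unfold fl pr
      have : ∀ x, ev c x = 0 := by intro x; simp [ev, hz]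
      simp only [this]
      simp only [iff_self, not_true_eq_false]
      simp [ind, ex]
    rw [this]; linarith [rr_nonneg c]
  · unfold rr at hr ⊢
    have hV2 : Vr c ≤ E2 c / 2 := by rw [div_le_iff₀ h] at hr; linarith
    have hm : E2 c / 2 ≤ c ∅ ^ 2 := by have := E2_eq c; linarith
    have hm0 : 0 < c ∅ ^ 2 := by linarith
    have hch := cheb c hm0
    have key : ∀ x : ι → Bool, ¬ (0 ≤ ev c (sv x) ↔ 0 ≤ ev c (sv (flip i x))) →
        (c ∅ ^ 2 ≤ (ev c (sv x) - c ∅) ^ 2 ∨ c ∅ ^ 2 ≤ (ev c (sv (flip i x)) - c ∅) ^ 2) := by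
      intro x hx
      by_contra hcon
      push Not at hcon
      obtain ⟨h1, h2⟩ := hcon
      apply hx
      set u := ev c (sv x)
      set v := ev c (sv (flip i x))
      have h1' : 0 < u * c ∅ := by nlinarith [sq_nonneg u]
      have h2' : 0 < v * c ∅ := by nlinarith [sq_nonneg v]
      rcases lt_trichotomy (c ∅) 0 with hc | hc | hc
      · constructor <;> intro <;> nlinarith
      · rw [hc] at h1'; simp at h1'
      · constructor <;> intro <;> nlinarith
    have h1 : fl c i ≤ _ := pr_mono key
    have h2 := pr_or_le (fun x : ι → Bool => c ∅ ^ 2 ≤ (ev c (sv x) - c ∅) ^ 2)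
      (fun x => c ∅ ^ 2 ≤ (ev c (sv (flip i x)) - c ∅) ^ 2)
    have h3 : pr (fun x => c ∅ ^ 2 ≤ (ev c (sv (flip i x)) - c ∅) ^ 2)
        = pr (fun x : ι → Bool => c ∅ ^ 2 ≤ (ev c (sv x) - c ∅) ^ 2) :=
      ex_flip i (fun x => ind (c ∅ ^ 2 ≤ (ev c (sv x) - c ∅) ^ 2))
    have h4 : Vr c / c ∅ ^ 2 ≤ 2 * (Vr c / E2 c) := by
      rw [div_le_iff₀ hm0]
      have : 2 * (Vr c / E2 c) * c ∅ ^ 2 ≥ 2 * (Vr c / E2 c) * (E2 c / 2) := by gcongr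
      have e : 2 * (Vr c / E2 c) * (E2 c / 2) = Vr c := by field_simp
      linarith
    linarith

lemma sens_le_rr (c : Finset ι → ℝ) (J : Finset ι) : sens c J ≤ 4 * J.card * rr c := by
  unfold sens
  refine (Finset.sum_le_sum fun i _ => fl_le c i).trans ?_
  simp; linarith

end restr
end
end PTFas

namespace PTFas
noncomputable section
section blocks
variable {ι : Type*} [Fintype ι] [DecidableEq ι]

def mn (Q : ℝ) (c : Finset ι → ℝ) : ℝ := min 1 (Q * rr c)

lemma mn_le_one (Q : ℝ) (c : Finset ι → ℝ) : mn Q c ≤ 1 := min_le_left _ _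
lemma mn_nonneg {Q : ℝ} (hQ : 0 ≤ Q) (c : Finset ι → ℝ) : 0 ≤ mn Q c :=
  le_min (by norm_num) (mul_nonneg hQ (rr_nonneg c))

lemma biased1 (c : Finset ι → ℝ) (K : Finset ι) {Q : ℝ} (hQ : 0 ≤ Q) (hE : 0 < E2 c)
    (hr : rr c ≤ 1 / 2) :
    ex (fun x : ι → Bool => mn Q (restr c K (sv x)))
      ≤ 8 * Q * (∑ i ∈ K, Inf c i) / E2 c + 8 * rr c := by
  have hV2 : Vr c ≤ E2 c / 2 := by unfold rr at hr; rw [div_le_iff₀ hE] at hr; linarith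
  have hm : E2 c / 2 ≤ c ∅ ^ 2 := by have := E2_eq c; linarith
  have hm0 : 0 < c ∅ ^ 2 := by linarith
  have hV := Vr_nonneg c
  have hS : 0 ≤ ∑ i ∈ K, Inf c i := Finset.sum_nonneg fun i _ => Inf_nonneg c i
  set μ := c ∅ with hμ
  have key : ∀ x : ι → Bool, mn Q (restr c K (sv x)) ≤ (4 * Q / μ ^ 2) * Vr (restr c K (sv x))
      + (4 / μ ^ 2) * (restr c K (sv x) ∅ - μ) ^ 2 := by
    intro x
    set q := restr c K (sv x)
    have hq := Vr_nonneg q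
    by_cases h : μ ^ 2 / 4 ≤ (q ∅ - μ) ^ 2
    · have h1 : 1 ≤ (4 / μ ^ 2) * (q ∅ - μ) ^ 2 := by
        rw [div_mul_eq_mul_div, le_div_iff₀ hm0]; linarith
      have h2 : 0 ≤ (4 * Q / μ ^ 2) * Vr q := by positivity
      linarith [mn_le_one Q q]
    · push Not at h
      have h1 : μ ^ 2 / 4 ≤ q ∅ ^ 2 := by nlinarith [sq_nonneg (q ∅ - μ / 2), sq_nonneg (q ∅ + μ/2), sq_nonneg (q ∅ - 3 / 2 * μ), sq_nonneg (2 * q ∅ - μ)]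
      have h2 : μ ^ 2 / 4 ≤ E2 q := by have := E2_eq q; linarith
      have h3 : rr q ≤ 4 / μ ^ 2 * Vr q := by
        unfold rr
        have h4 : Vr q / E2 q ≤ Vr q / (μ ^ 2 / 4) := by gcongr
        have h5 : Vr q / (μ ^ 2 / 4) = 4 / μ ^ 2 * Vr q := by field_simp
        linarith
      have h4 : mn Q q ≤ Q * rr q := min_le_right _ _
      have h5 : Q * rr q ≤ Q * (4 / μ ^ 2 * Vr q) := by gcongr
      have h6 : 0 ≤ (4 / μ ^ 2) * (q ∅ - μ) ^ 2 := by positivity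
      have h7 : Q * (4 / μ ^ 2 * Vr q) = 4 * Q / μ ^ 2 * Vr q := by ring
      linarith
  refine (ex_mono key).trans ?_
  rw [ex_add, ex_mul_left, ex_mul_left]
  have h1 := ex_Vr_restr c K
  have h2 := restr_dev c K
  have h3 : 1 / μ ^ 2 ≤ 2 / E2 c := by
    rw [div_le_div_iff₀ hm0 hE]; linarith
  have h4 : 4 * Q / μ ^ 2 * ex (fun x : ι → Bool => Vr (restr c K (sv x))) ≤ 8 * Q * (∑ i ∈ K, Inf c i) / E2 c := by
    calc _ ≤ 4 * Q / μ ^ 2 * ∑ i ∈ K, Inf c i := by gcongr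
      _ = 4 * Q * (∑ i ∈ K, Inf c i) * (1 / μ ^ 2) := by ring
      _ ≤ 4 * Q * (∑ i ∈ K, Inf c i) * (2 / E2 c) := by gcongr
      _ = _ := by ring
  have h5 : 4 / μ ^ 2 * ex (fun x : ι → Bool => (restr c K (sv x) ∅ - μ) ^ 2) ≤ 8 * rr c := by
    calc _ ≤ 4 / μ ^ 2 * Vr c := by gcongr
      _ = 4 * Vr c * (1 / μ ^ 2) := by ring
      _ ≤ 4 * Vr c * (2 / E2 c) := by gcongr
      _ = _ := by unfold rr; ring
  linarith

lemma sens_blocks {b : ℕ} (c : Finset ι → ℝ) (J : Finset ι) (kk : ι → Fin b) :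
    sens c J = ∑ k, ex (fun x : ι → Bool =>
      sens (restr c (J.filter (kk · = k)) (sv x)) (J.filter (kk · = k))) := by
  simp only [sens_restr]
  unfold sens
  rw [Finset.sum_fiberwise]

lemma biased {d b : ℕ} {c : Finset ι → ℝ} (hc : dg d c) (J : Finset ι) (kk : ι → Fin b) {Q : ℝ} (hQ : 0 ≤ Q) (hE : 0 < E2 c)
    (hr : rr c ≤ 1 / 2) :
    ∑ k, ex (fun x : ι → Bool => mn Q (restr c (J.filter (kk · = k)) (sv x)))
      ≤ (8 * d * Q + 8 * b) * rr c := by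
  refine (Finset.sum_le_sum fun k _ => biased1 c _ hQ hE hr).trans ?_
  rw [Finset.sum_add_distrib, ← Finset.sum_div, ← Finset.mul_sum, Finset.sum_fiberwise]
  simp only [Finset.sum_const, Finset.card_univ, Fintype.card_fin, nsmul_eq_mul]
  have h1 : ∑ i ∈ J, Inf c i ≤ d * Vr c := by
    refine le_trans ?_ (N2_le_Vr hc)
    exact Finset.sum_le_sum_of_subset_of_nonneg (Finset.subset_univ _) fun i _ _ => Inf_nonneg c i
  have h2 : 8 * Q * (∑ i ∈ J, Inf c i) / E2 c ≤ 8 * Q * (d * Vr c) / E2 c := by gcongr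
  have h3 : 8 * Q * (d * Vr c) / E2 c = 8 * d * Q * rr c := by unfold rr; ring
  nlinarith

lemma pd_flip_sq (c : Finset ι → ℝ) (i : ι) (z : ι → Bool) :
    ev (pd i c) (sv z) ^ 2 = ((ev c (sv z) - ev c (sv (flip i z))) / 2) ^ 2 := by
  have h1 := ev_split i c (sv z)
  have h2 := ev_split i c (sv (flip i z))
  have h3 : ∀ j, j ≠ i → sv (flip i z) j = sv z j := by
    intro j hj; simp [sv, flip, hj]
  rw [ev_congr (rm_zero i c) h3, ev_congr (pd_zero i c) h3] at h2
  have h4 : sv (flip i z) i = - sv z i := by simp [sv, flip, sg_not]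
  have h5 : sv z i ^ 2 = 1 := sg_sq _
  rw [h4] at h2
  rw [h1, h2]
  have : (ev (rm i c) (sv z) + sv z i * ev (pd i c) (sv z) - (ev (rm i c) (sv z) + -sv z i * ev (pd i c) (sv z))) / 2 = sv z i * ev (pd i c) (sv z) := by ring
  rw [this, mul_pow, h5, one_mul]

def Wf (c : Finset ι → ℝ) (K : Finset ι) (z : ι → Bool) : ℝ := ∑ i ∈ K, ev (pd i c) (sv z) ^ 2

lemma Wf_nonneg (c : Finset ι → ℝ) (K : Finset ι) (z : ι → Bool) : 0 ≤ Wf c K z :=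
  Finset.sum_nonneg fun _ _ => sq_nonneg _

lemma Wf_restr (c : Finset ι → ℝ) (K : Finset ι) (x y : ι → Bool) :
    Wf (restr c K (sv x)) Finset.univ y = Wf c K (merge K y x) := by
  unfold Wf
  simp only [pd_flip_sq, ev_restr_sv]
  symm
  have : ∀ i ∈ K, ((ev c (sv (merge K y x)) - ev c (sv (flip i (merge K y x)))) / 2) ^ 2
      = ((ev c (sv (merge K y x)) - ev c (sv (merge K (flip i y) x))) / 2) ^ 2 := by
    intro i hi; rw [merge_flip K hi]
  rw [Finset.sum_congr rfl this]
  apply Finset.sum_subset (Finset.subset_univ _)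
  intro i _ hi
  have : merge K (flip i y) x = merge K y x := by
    ext j
    by_cases hj : j = i
    · subst hj; simp [merge, hi]
    · simp [merge, flip, hj]
  rw [this]; simp

lemma ex_Wf (q : Finset ι → ℝ) : ex (fun y : ι → Bool => Wf q Finset.univ y) = N2 q := by
  unfold Wf N2
  rw [ex_sum]
  simp only [ex_ev_sq, E2_pd]

def tt (d : ℕ) : ℝ := 8 * 9 ^ d
lemma tt_pos (d : ℕ) : 0 < tt d := by unfold tt; positivity
lemma tt_ge (d : ℕ) : 1 ≤ tt d := by
  unfold tt
  have : (1:ℝ) ≤ 9 ^ d := one_le_pow₀ (by norm_num)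
  linarith

lemma frac_mono2 {a b u v : ℝ} (ha : 0 ≤ a) (hab : a ≤ b) (hv : 0 ≤ v) (hvu : v ≤ u) (hu : 0 < u) :
    a / (a + u) ≤ b / (b + v) := by
  rcases (by linarith : 0 ≤ b + v).eq_or_lt with h | h
  · have : a = 0 := by linarith
    rw [this]; simp; apply div_nonneg <;> linarith
  rw [div_le_div_iff₀ (by linarith) h]
  nlinarith

lemma lemA {d : ℕ} {q : Finset ι → ℝ} (hq : dg d q) {Q : ℝ} (hQ : 0 < Q) :
    mn Q q ≤ 4 * tt d ^ 2 * ex (fun y : ι → Bool => Q * Wf q Finset.univ y /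
      (Q * Wf q Finset.univ y + ev q (sv y) ^ 2)) := by
  have ht := tt_pos d
  have ht1 := tt_ge d
  have hnn : ∀ y, 0 ≤ Q * Wf q Finset.univ y / (Q * Wf q Finset.univ y + ev q (sv y) ^ 2) := by
    intro y
    have := Wf_nonneg q Finset.univ y
    positivity
  rcases (E2_nonneg q).eq_or_lt with h | hE
  · have : mn Q q = 0 := by unfold mn rr; rw [← h]; simp
    rw [this]
    have := ex_nonneg hnn
    positivity
  have hV := Vr_nonneg q
  have p1 := sos_pz Finset.univ (fun _ : ι => (1:ℝ)) (fun _ _ => by norm_num) (d := d)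
    (fun i (y : ι → Bool) => ev (pd i q) (sv y)) (fun i _ => ev_deg (dg_pd' hq i) _ (fun j => coord_mem j))
  simp only [one_mul] at p1
  have p1' : 1 / (4 * 9 ^ d) ≤ pr (fun y : ι → Bool => N2 q / 2 ≤ Wf q Finset.univ y) := by
    rw [← ex_Wf]; exact p1
  have p2 := markov' (f := fun y : ι → Bool => ev q (sv y) ^ 2) (fun y => sq_nonneg _) ht
  rw [ex_ev_sq] at p2
  have p3 := pr_and_ge (fun y : ι → Bool => N2 q / 2 ≤ Wf q Finset.univ y)
    (fun y => ¬ tt d * E2 q < ev q (sv y) ^ 2)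
  simp only [not_not] at p3
  have p4 : 1 / (4 * 9 ^ d) = 2 * (1 / tt d) := by unfold tt; field_simp; norm_num
  have p5 : 1 / tt d ≤ pr (fun y : ι → Bool => N2 q / 2 ≤ Wf q Finset.univ y ∧ ¬ tt d * E2 q < ev q (sv y) ^ 2) := by
    rw [p4] at p1'; linarith
  set g := mn Q q / (4 * tt d) with hg
  have key : ∀ y : ι → Bool, g * ind (N2 q / 2 ≤ Wf q Finset.univ y ∧ ¬ tt d * E2 q < ev q (sv y) ^ 2)
      ≤ Q * Wf q Finset.univ y / (Q * Wf q Finset.univ y + ev q (sv y) ^ 2) := by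
    intro y
    by_cases h : N2 q / 2 ≤ Wf q Finset.univ y ∧ ¬ tt d * E2 q < ev q (sv y) ^ 2
    · rw [ind_of h, mul_one]
      obtain ⟨h1, h2⟩ := h
      push Not at h2
      have h3 : Vr q / 2 ≤ Wf q Finset.univ y := by linarith [Vr_le_N2 q]
      have h4 := frac_mono2 (a := Q * (Vr q / 2)) (b := Q * Wf q Finset.univ y) (u := tt d * E2 q)
        (v := ev q (sv y) ^ 2) (by positivity) (by gcongr) (sq_nonneg _) h2 (by positivity)
      refine le_trans ?_ h4
      rw [hg, div_le_div_iff₀ (by positivity) (by positivity)]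
      have m1 := mn_le_one Q q
      have m2 : mn Q q * E2 q ≤ Q * Vr q := by
        have : mn Q q ≤ Q * rr q := min_le_right _ _
        calc mn Q q * E2 q ≤ Q * rr q * E2 q := by gcongr
          _ = Q * Vr q := by unfold rr; field_simp
      have m3 : mn Q q * (Q * (Vr q / 2)) ≤ 1 * (Q * (Vr q / 2)) := by gcongr
      have m4 : Q * Vr q ≤ tt d * (Q * Vr q) := by
        have : 0 ≤ Q * Vr q := by positivity
        nlinarith
      have m5 : tt d * (mn Q q * E2 q) ≤ tt d * (Q * Vr q) := by gcongr
      nlinarith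
    · rw [ind_not h, mul_zero]; exact hnn y
  have h6 := ex_mono key
  rw [ex_mul_left] at h6
  have hg0 : 0 ≤ g := by rw [hg]; exact div_nonneg (mn_nonneg hQ.le q) (by positivity)
  have h7 : g * (1 / tt d) ≤ ex (fun y : ι → Bool => Q * Wf q Finset.univ y /
      (Q * Wf q Finset.univ y + ev q (sv y) ^ 2)) := le_trans (mul_le_mul_of_nonneg_left p5 hg0) h6
  have h8 : mn Q q = 4 * tt d ^ 2 * (g * (1 / tt d)) := by rw [hg]; field_simp
  rw [h8]; gcongr

lemma concave_sum {b : ℕ} (hb : 0 < b) (a : Fin b → ℝ) (ha : ∀ k, 0 ≤ a k) {u : ℝ} (hu : 0 < u) :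
    ∑ k, a k / (a k + u) ≤ b * (((∑ k, a k) / b) / ((∑ k, a k) / b + u)) := by
  set s := (∑ k, a k) / b with hs
  have hb' : (0:ℝ) < b := by exact_mod_cast hb
  have hs0 : 0 ≤ s := div_nonneg (Finset.sum_nonneg fun k _ => ha k) hb'.le
  have key : ∀ k, a k / (a k + u) ≤ s / (s + u) + u / (s + u) ^ 2 * (a k - s) := by
    intro k
    have h1 : 0 < a k + u := by linarith [ha k]
    have h2 : 0 < s + u := by linarith
    have : s / (s + u) + u / (s + u) ^ 2 * (a k - s) - a k / (a k + u)
        = u * (a k - s) ^ 2 / ((s + u) ^ 2 * (a k + u)) := by field_simp; ring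
    have h3 : 0 ≤ u * (a k - s) ^ 2 / ((s + u) ^ 2 * (a k + u)) := by positivity
    linarith
  refine (Finset.sum_le_sum fun k _ => key k).trans ?_
  rw [Finset.sum_add_distrib, ← Finset.mul_sum, Finset.sum_sub_distrib]
  simp only [Finset.sum_const, Finset.card_univ, Fintype.card_fin, nsmul_eq_mul]
  have : ∑ k, a k = b * s := by rw [hs]; field_simp
  rw [this]; simp

lemma lemB {b : ℕ} (hb : 0 < b) (c : Finset ι → ℝ) (J : Finset ι) (kk : ι → Fin b) {Q η : ℝ}
    (hQ : 0 < Q) (hη : 0 < η) (z : ι → Bool) :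
    ∑ k, Q * Wf c (J.filter (kk · = k)) z / (Q * Wf c (J.filter (kk · = k)) z + ev c (sv z) ^ 2)
      ≤ b * ind (|ev c (sv z)| ≤ η) + 2 * b * ((Q / b) * Wf c Finset.univ z /
        ((Q / b) * Wf c Finset.univ z + (ev c (sv z) ^ 2 + η ^ 2))) := by
  set p := ev c (sv z)
  have hb' : (0:ℝ) < b := by exact_mod_cast hb
  have hW := Wf_nonneg c Finset.univ z
  by_cases h : |p| ≤ η
  · rw [ind_of h]
    have h1 : ∀ k, Q * Wf c (J.filter (kk · = k)) z / (Q * Wf c (J.filter (kk · = k)) z + p ^ 2) ≤ 1 := by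
      intro k
      have := Wf_nonneg c (J.filter (kk · = k)) z
      apply div_le_one_of_le₀
      · nlinarith [sq_nonneg p]
      · positivity
    have h2 := Finset.sum_le_sum (s := Finset.univ) fun k _ => h1 k
    simp only [Finset.sum_const, Finset.card_univ, Fintype.card_fin, nsmul_eq_mul, mul_one] at h2
    have : 0 ≤ 2 * b * ((Q / b) * Wf c Finset.univ z / ((Q / b) * Wf c Finset.univ z + (p ^ 2 + η ^ 2))) := by positivity
    linarith
  · rw [ind_not h, mul_zero, zero_add]
    push Not at h
    have hp : η ^ 2 ≤ p ^ 2 := by rw [← sq_abs p]; gcongr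
    have h1 : ∀ k, Q * Wf c (J.filter (kk · = k)) z / (Q * Wf c (J.filter (kk · = k)) z + p ^ 2)
        ≤ 2 * (Q * Wf c (J.filter (kk · = k)) z / (Q * Wf c (J.filter (kk · = k)) z + (p ^ 2 + η ^ 2))) := by
      intro k
      have := Wf_nonneg c (J.filter (kk · = k)) z
      have hA : 0 ≤ Q * Wf c (J.filter (kk · = k)) z := by positivity
      set A := Q * Wf c (J.filter (kk · = k)) z
      have hη2 : 0 < η ^ 2 := by positivity
      rw [← mul_div_assoc, div_le_div_iff₀ (by nlinarith) (by nlinarith)]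
      nlinarith
    refine (Finset.sum_le_sum fun k _ => h1 k).trans ?_
    rw [← Finset.mul_sum]
    have h2 := concave_sum hb (fun k => Q * Wf c (J.filter (kk · = k)) z)
      (fun k => mul_nonneg hQ.le (Wf_nonneg _ _ _)) (u := p ^ 2 + η ^ 2) (by positivity)
    have h3 : ∑ k, Q * Wf c (J.filter (kk · = k)) z = Q * Wf c J z := by
      rw [← Finset.mul_sum]; unfold Wf; rw [Finset.sum_fiberwise]
    rw [h3] at h2
    have h4 : Wf c J z ≤ Wf c Finset.univ z :=
      Finset.sum_le_sum_of_subset_of_nonneg (Finset.subset_univ _) fun _ _ _ => sq_nonneg _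
    have h5 := frac_mono2 (a := Q * Wf c J z / b) (b := (Q / b) * Wf c Finset.univ z) (u := p ^ 2 + η ^ 2)
      (v := p ^ 2 + η ^ 2) (div_nonneg (mul_nonneg hQ.le (Wf_nonneg _ _ _)) hb'.le)
      (by rw [mul_div_right_comm]; gcongr) (by positivity) le_rfl (by positivity)
    calc _ ≤ 2 * (b * (Q * Wf c J z / b / (Q * Wf c J z / b + (p ^ 2 + η ^ 2)))) := by gcongr
      _ ≤ 2 * (b * ((Q / b) * Wf c Finset.univ z / ((Q / b) * Wf c Finset.univ z + (p ^ 2 + η ^ 2)))) := by gcongr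
      _ = _ := by ring

lemma lemC (c : Finset ι → ℝ) {l η : ℝ} (hl : 0 < l) (hη : 0 < η) (z : ι → Bool) :
    l * Wf c Finset.univ z / (l * Wf c Finset.univ z + (ev c (sv z) ^ 2 + η ^ 2))
      ≤ 72 * ex (fun y : ι → Bool => Psi l η (ev c (sv z)) (dv c (sv z) (sv y))) := by
  set p := ev c (sv z)
  have hW := Wf_nonneg c Finset.univ z
  have hmem : (fun y : ι → Bool => dv c (sv z) (sv y)) ∈ degSub ι 1 := by
    have : (fun y : ι → Bool => dv c (sv z) (sv y)) = ∑ i, ev (pd i c) (sv z) • (fun y : ι → Bool => sg (y i)) := by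
      ext y; simp [dv, Finset.sum_apply, sv, mul_comm]
    rw [this]
    exact Submodule.sum_mem _ fun i _ => Submodule.smul_mem _ _ (coord_mem i)
  have h := sos_pz {()} (fun _ : Unit => (1:ℝ)) (fun _ _ => by norm_num)
    (fun _ (y : ι → Bool) => dv c (sv z) (sv y)) (fun _ _ => hmem)
  simp only [Finset.sum_singleton, one_mul] at h
  have e : ex (fun y : ι → Bool => dv c (sv z) (sv y) ^ 2) = Wf c Finset.univ z := ex_lin_sq _
  rw [e] at h
  norm_num at h
  set g := l * Wf c Finset.univ z / (l * Wf c Finset.univ z + (p ^ 2 + η ^ 2)) with hg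
  have hg0 : 0 ≤ g := by positivity
  have key : ∀ y : ι → Bool, g / 2 * ind (Wf c Finset.univ z / 2 ≤ dv c (sv z) (sv y) ^ 2)
      ≤ Psi l η p (dv c (sv z) (sv y)) := by
    intro y
    by_cases hy : Wf c Finset.univ z / 2 ≤ dv c (sv z) (sv y) ^ 2
    · rw [ind_of hy, mul_one]
      have h1 := frac_mono2 (a := l * (Wf c Finset.univ z / 2)) (b := l * dv c (sv z) (sv y) ^ 2)
        (u := p ^ 2 + η ^ 2) (v := p ^ 2 + η ^ 2) (by positivity) (by gcongr) (by positivity) le_rfl (by positivity)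
      have h2 : l * dv c (sv z) (sv y) ^ 2 / (l * dv c (sv z) (sv y) ^ 2 + (p ^ 2 + η ^ 2)) = Psi l η p (dv c (sv z) (sv y)) := by
        unfold Psi; rw [add_assoc]
      rw [← h2]
      refine le_trans ?_ h1
      rw [hg, div_div, div_le_div_iff₀ (by positivity) (by positivity)]
      have : 0 ≤ l * Wf c Finset.univ z := by positivity
      nlinarith [mul_nonneg this this]
    · rw [ind_not hy, mul_zero]; exact Psi_nonneg hl.le _ _
  have h1 := ex_mono key
  rw [ex_mul_left] at h1
  have h2 : g / 2 * (1 / 36) ≤ g / 2 * pr (fun y : ι → Bool => Wf c Finset.univ z / 2 ≤ dv c (sv z) (sv y) ^ 2) := by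
    gcongr
  have h3 := le_trans h2 h1
  linarith

lemma RL0 {d b : ℕ} (hb : 0 < b) {c : Finset ι → ℝ} (hc : dg d c) (J : Finset ι) (kk : ι → Fin b) {Q η γ : ℝ}
    (hQ : 0 < Q) (hQb : Q ≤ b) (hη : 0 < η) (hγ : 0 < γ) :
    ∑ k, ex (fun x : ι → Bool => mn Q (restr c (J.filter (kk · = k)) (sv x)))
      ≤ 4 * tt d ^ 2 * b * (pr (fun z : ι → Bool => |ev c (sv z)| ≤ η) +
        144 * (CD d * Real.sqrt (Q / b) + 128 * KP (Q / b) η * KL d * (γ * N2 c + γ⁻¹ * N4 c))) := by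
  have hb' : (0:ℝ) < b := by exact_mod_cast hb
  have hl : 0 < Q / b := by positivity
  have h1 : ∀ k, ex (fun x : ι → Bool => mn Q (restr c (J.filter (kk · = k)) (sv x)))
      ≤ 4 * tt d ^ 2 * ex (fun z : ι → Bool => Q * Wf c (J.filter (kk · = k)) z /
        (Q * Wf c (J.filter (kk · = k)) z + ev c (sv z) ^ 2)) := by
    intro k
    refine (ex_mono fun x => lemA (dg_restr hc _ _) hQ).trans ?_
    rw [ex_mul_left]
    simp only [Wf_restr, ev_restr_sv]
    rw [ex_merge (J.filter (kk · = k)) (fun z => Q * Wf c (J.filter (kk · = k)) z /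
        (Q * Wf c (J.filter (kk · = k)) z + ev c (sv z) ^ 2))]
  refine (Finset.sum_le_sum fun k _ => h1 k).trans ?_
  rw [← Finset.mul_sum, ← ex_sum]
  have h2 := ex_mono (fun z => lemB hb c J kk hQ hη z)
  rw [ex_add, ex_mul_left, ex_mul_left] at h2
  have h3 := ex_mono (fun z => lemC c hl hη z)
  rw [ex_mul_left] at h3
  have h4 := core hc hl (by rw [div_le_one hb']; exact hQb) hη hγ
  have h5 : ex (fun z : ι → Bool => ∑ k, Q * Wf c (J.filter (kk · = k)) z /
        (Q * Wf c (J.filter (kk · = k)) z + ev c (sv z) ^ 2)) ≤ b * pr (fun z : ι → Bool => |ev c (sv z)| ≤ η)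
      + 2 * b * (72 * (CD d * Real.sqrt (Q / b) + 128 * KP (Q / b) η * KL d * (γ * N2 c + γ⁻¹ * N4 c))) := by
    refine h2.trans ?_
    unfold pr
    gcongr
    refine h3.trans ?_
    gcongr
  calc _ ≤ 4 * tt d ^ 2 * (b * pr (fun z : ι → Bool => |ev c (sv z)| ≤ η)
      + 2 * b * (72 * (CD d * Real.sqrt (Q / b) + 128 * KP (Q / b) η * KL d * (γ * N2 c + γ⁻¹ * N4 c)))) := by gcongr
    _ = _ := by ring

lemma restr_smul (a : ℝ) (c : Finset ι → ℝ) (J : Finset ι) (x : ι → ℝ) :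
    restr (fun S => a * c S) J x = fun S => a * restr c J x S := by
  ext S; unfold restr; rw [Finset.mul_sum]
  refine Finset.sum_congr rfl fun U _ => by split_ifs <;> ring

lemma mn_smul {a : ℝ} (ha : a ≠ 0) (Q : ℝ) (c : Finset ι → ℝ) : mn Q (fun S => a * c S) = mn Q c := by
  unfold mn rr; rw [Vr_smul, E2_smul, mul_div_mul_left _ _ (by positivity)]

end blocks

theorem RL (d b : ℕ) (hb : 0 < b) (Q : ℝ) (hQ : 0 < Q) (hQb : Q ≤ b) (δ : ℝ) (hδ : 0 < δ) :
    ∃ τ > (0:ℝ), ∀ (ι : Type) [Fintype ι] [DecidableEq ι] (c : Finset ι → ℝ), dg d c → 0 < E2 c →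
      N4 c ≤ τ * E2 c ^ 2 → ∀ (J : Finset ι) (kk : ι → Fin b),
      ∑ k, ex (fun x : ι → Bool => mn Q (restr c (J.filter (kk · = k)) (sv x)))
      ≤ 4 * tt d ^ 2 * b * (144 * (CD d * Real.sqrt (Q / b)) + δ) := by
  obtain ⟨η, hη, τ0, hτ0, hSB⟩ := SB d (δ / 2) (by positivity) ((d:ℝ) + 1) (by positivity)
  set A := 144 * 128 * KP (Q / b) η * KL d + 1 with hA
  have hA0 : 0 < A := by
    have := KP_nonneg (l := Q / b) hη
    have := (KL_pos d).le
    positivity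
  set γ := δ / (4 * A * (d + 1)) with hγ
  have hγ0 : 0 < γ := by positivity
  refine ⟨min τ0 (δ * γ / (4 * A)), by positivity, fun ι _ _ c hc hE h4 J kk => ?_⟩
  set a := (Real.sqrt (E2 c))⁻¹ with ha
  have hs : 0 < Real.sqrt (E2 c) := Real.sqrt_pos.2 hE
  have ha0 : a ≠ 0 := by positivity
  have ha2 : a ^ 2 = (E2 c)⁻¹ := by rw [ha, inv_pow, Real.sq_sqrt hE.le]
  have hc' := dg_smul a hc
  have hE' : E2 (fun S => a * c S) = 1 := by rw [E2_smul, ha2]; field_simp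
  have hN2 : N2 (fun S => a * c S) ≤ d := by have := N2_le_E2 hc'; rwa [hE', mul_one] at this
  have hN4 : N4 (fun S => a * c S) ≤ min τ0 (δ * γ / (4 * A)) := by
    rw [N4_smul, show a ^ 4 = (a ^ 2) ^ 2 by ring, ha2]
    calc _ ≤ ((E2 c)⁻¹) ^ 2 * (min τ0 (δ * γ / (4 * A)) * E2 c ^ 2) := by gcongr
      _ = _ := by field_simp
  have hpr := hSB ι (fun S => a * c S) hc' hE'.ge (by linarith) (hN4.trans (min_le_left _ _))
  have hmain := RL0 hb hc' J kk hQ hQb hη hγ0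
  simp only [restr_smul, mn_smul ha0] at hmain
  refine hmain.trans ?_
  have hN4' := hN4.trans (min_le_right _ _)
  have h40 := N4_nonneg (fun S => a * c S)
  have h20 := N2_nonneg (fun S => a * c S)
  have e1 : γ * N2 (fun S => a * c S) + γ⁻¹ * N4 (fun S => a * c S) ≤ δ / (2 * A) := by
    have e2 : γ * N2 (fun S => a * c S) ≤ γ * (d + 1) := by gcongr; linarith
    have e3 : γ * (d + 1) = δ / (4 * A) := by rw [hγ]; field_simp
    have e4 : γ⁻¹ * N4 (fun S => a * c S) ≤ γ⁻¹ * (δ * γ / (4 * A)) := by gcongr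
    have e5 : γ⁻¹ * (δ * γ / (4 * A)) = δ / (4 * A) := by field_simp
    have e6 : δ / (2 * A) = δ / (4 * A) + δ / (4 * A) := by field_simp; norm_num
    linarith
  have hX : 0 ≤ γ * N2 (fun S => a * c S) + γ⁻¹ * N4 (fun S => a * c S) := by positivity
  set X := γ * N2 (fun S => a * c S) + γ⁻¹ * N4 (fun S => a * c S)
  have e7 : 144 * (128 * KP (Q / b) η * KL d * X) ≤ δ / 2 := by
    have : 144 * (128 * KP (Q / b) η * KL d * X) = (A - 1) * X := by rw [hA]; ring
    rw [this]
    have e8 : (A - 1) * X ≤ A * X := by nlinarith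
    have e9 : A * X ≤ A * (δ / (2 * A)) := by gcongr
    have e10 : A * (δ / (2 * A)) = δ / 2 := by field_simp
    linarith
  have := tt_pos d
  refine mul_le_mul_of_nonneg_left ?_ (by positivity)
  linarith

end
end PTFas

namespace PTFas
noncomputable section
section ind
variable {ι : Type*} [Fintype ι] [DecidableEq ι]

lemma comb (w : ι → ℝ) (hw : ∀ i, 0 ≤ w i) {τ : ℝ} (hτ0 : 0 < τ) (hτ : τ ≤ 1) (L : ℕ) (J : Finset ι) (hJ : J.Nonempty) :
    ∃ H ⊆ J, H.Nonempty ∧ H.card ≤ L + 1 ∧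
      ((∑ i ∈ J \ H, w i ^ 2 ≤ τ * (∑ i ∈ J \ H, w i) ^ 2) ∨
        ∑ i ∈ J \ H, w i ≤ (1 - τ) ^ L * ∑ i ∈ J, w i) := by
  induction L with
  | zero =>
    obtain ⟨j, hj⟩ := hJ
    refine ⟨{j}, by simpa using hj, by simp, by simp, Or.inr ?_⟩
    rw [pow_zero, one_mul]
    exact Finset.sum_le_sum_of_subset_of_nonneg Finset.sdiff_subset fun i _ _ => hw i
  | succ L ih =>
    obtain ⟨H, hHJ, hH, hc, h⟩ := ih
    by_cases hreg : ∑ i ∈ J \ H, w i ^ 2 ≤ τ * (∑ i ∈ J \ H, w i) ^ 2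
    · exact ⟨H, hHJ, hH, by omega, Or.inl hreg⟩
    have h2 := h.resolve_left hreg
    have hex : ∃ i ∈ J \ H, τ * (∑ i ∈ J \ H, w i) < w i := by
      by_contra hcon
      push Not at hcon
      apply hreg
      calc ∑ i ∈ J \ H, w i ^ 2 ≤ ∑ i ∈ J \ H, (τ * (∑ i ∈ J \ H, w i)) * w i := by
            refine Finset.sum_le_sum fun i hi => ?_
            rw [sq]; exact mul_le_mul_of_nonneg_right (hcon i hi) (hw i)
        _ = _ := by rw [← Finset.mul_sum]; ring
    obtain ⟨i, hi, hwi⟩ := hex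
    refine ⟨insert i H, ?_, by simp, ?_, Or.inr ?_⟩
    · exact Finset.insert_subset (Finset.mem_sdiff.1 hi).1 hHJ
    · exact (Finset.card_insert_le _ _).trans (by omega)
    · have e : J \ insert i H = (J \ H).erase i := by
        ext j; simp only [Finset.mem_sdiff, Finset.mem_insert, Finset.mem_erase]; tauto
      rw [e]
      have e2 := Finset.add_sum_erase (J \ H) w hi
      have e3 : ∑ j ∈ (J \ H).erase i, w j ≤ (1 - τ) * ∑ j ∈ J \ H, w j := by linarith
      calc _ ≤ (1 - τ) * ∑ j ∈ J \ H, w j := e3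
        _ ≤ (1 - τ) * ((1 - τ) ^ L * ∑ i ∈ J, w i) := mul_le_mul_of_nonneg_left h2 (by linarith)
        _ = _ := by ring

lemma exists_blocks {b : ℕ} (hb : 0 < b) (J : Finset ι) :
    ∃ kk : ι → Fin b, ∀ k, (J.filter (kk · = k)).card ≤ J.card / b + 1 := by
  classical
  set m := J.card with hm
  set s := m / b + 1 with hs
  have hs0 : 0 < s := Nat.succ_pos _
  let e := J.equivFin
  have hlt : ∀ t : Fin J.card, (t : ℕ) / s < b := by
    intro t
    rw [Nat.div_lt_iff_lt_mul hs0]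
    have h1 := t.2
    have h2 := Nat.lt_mul_div_succ m hb
    have : b * (m / b + 1) = b * s := rfl
    omega
  refine ⟨fun i => if h : i ∈ J then ⟨(e ⟨i, h⟩ : ℕ) / s, hlt _⟩ else ⟨0, hb⟩, fun k => ?_⟩
  have : (J.filter (fun i => (if h : i ∈ J then (⟨(e ⟨i, h⟩ : ℕ) / s, hlt _⟩ : Fin b) else ⟨0, hb⟩) = k)).card
      ≤ (Finset.range s).card := by
    apply Finset.card_le_card_of_injOn (fun i => if h : i ∈ J then (e ⟨i, h⟩ : ℕ) % s else 0)
    · intro i hi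
      simp only [Finset.coe_filter, Set.mem_setOf_eq] at hi
      simp only [hi.1, dif_pos, Finset.coe_range, Set.mem_Iio]
      exact Nat.mod_lt _ hs0
    · intro i hi j hj hij
      simp only [Finset.coe_filter, Set.mem_setOf_eq] at hi hj
      obtain ⟨hi1, hi2⟩ := hi
      obtain ⟨hj1, hj2⟩ := hj
      simp only [hi1, hj1, dif_pos] at hi2 hj2 hij
      have h1 : (e ⟨i, hi1⟩ : ℕ) / s = (e ⟨j, hj1⟩ : ℕ) / s := by
        have := hi2.trans hj2.symm
        exact congrArg Fin.val this
      have h2 : (e ⟨i, hi1⟩ : ℕ) = (e ⟨j, hj1⟩ : ℕ) := by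
        rw [← Nat.div_add_mod (e ⟨i, hi1⟩ : ℕ) s, ← Nat.div_add_mod (e ⟨j, hj1⟩ : ℕ) s, h1, hij]
      have h3 := e.injective (Fin.ext h2)
      exact congrArg Subtype.val h3
  simpa using this

def gg (m : ℕ) : ℝ := (m : ℝ) ^ ((5:ℝ) / 6)
lemma gg_nonneg (m : ℕ) : 0 ≤ gg m := by unfold gg; positivity
lemma gg_mono {m k : ℕ} (h : m ≤ k) : gg m ≤ gg k := by unfold gg; gcongr
lemma gg_one {m : ℕ} (h : 1 ≤ m) : 1 ≤ gg m := by
  have := gg_mono h; simpa [gg] using this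
lemma gg_block {a m s : ℕ} (ha : 0 < a) (hs : s ≤ m / a ^ 12 + 1) (hm : a ^ 12 ≤ m) :
    gg s ≤ 2 / a ^ 10 * gg m := by
  have ha' : (0:ℝ) < a := by exact_mod_cast ha
  have h1 : (s:ℝ) ≤ 2 * m / a ^ 12 := by
    have h2 : ((m / a ^ 12 : ℕ) : ℝ) ≤ (m:ℝ) / ((a ^ 12 : ℕ) : ℝ) := Nat.cast_div_le
    have h3 : (s:ℝ) ≤ ((m / a ^ 12 : ℕ) : ℝ) + 1 := by exact_mod_cast hs
    have h4 : (1:ℝ) ≤ (m:ℝ) / ((a ^ 12 : ℕ) : ℝ) := by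
      rw [le_div_iff₀ (by positivity), one_mul]; exact_mod_cast hm
    push_cast at h2 h4
    have : 2 * (m:ℝ) / a ^ 12 = m / a ^ 12 + m / a ^ 12 := by ring
    linarith
  unfold gg
  have h5 : ((a:ℝ) ^ 12) ^ ((5:ℝ) / 6) = (a:ℝ) ^ 10 := by
    rw [← Real.rpow_natCast, ← Real.rpow_mul ha'.le, ← Real.rpow_natCast]
    norm_num
  have h6 : (2:ℝ) ^ ((5:ℝ) / 6) ≤ 2 := by
    have := Real.rpow_le_rpow_of_exponent_le (x := 2) (by norm_num) (show (5:ℝ)/6 ≤ 1 by norm_num)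
    simpa using this
  calc (s:ℝ) ^ ((5:ℝ) / 6) ≤ (2 * m / a ^ 12) ^ ((5:ℝ) / 6) := by gcongr
    _ = (2:ℝ) ^ ((5:ℝ) / 6) * (m:ℝ) ^ ((5:ℝ) / 6) / (a:ℝ) ^ 10 := by
      rw [Real.div_rpow (by positivity) (by positivity), Real.mul_rpow (by norm_num) (by positivity), h5]
    _ ≤ 2 * (m:ℝ) ^ ((5:ℝ) / 6) / (a:ℝ) ^ 10 := by gcongr
    _ = _ := by ring

lemma step_blocks {d a m : ℕ} (ha : 2 ≤ a) {Q C0 : ℝ} (hQ : 0 ≤ Q) (hC0 : 0 ≤ C0)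
    (IH : ∀ J : Finset ι, J.card < m → ∀ c : Finset ι → ℝ, dg d c → sens c J ≤ C0 * gg J.card * mn Q c)
    (J : Finset ι) (hJ : J.card ≤ m) (hb : a ^ 12 ≤ J.card) {c : Finset ι → ℝ} (hc : dg d c) :
    ∃ kk : ι → Fin (a ^ 12), sens c J ≤ C0 * (2 / a ^ 10 * gg J.card) *
      ∑ k, ex (fun x : ι → Bool => mn Q (restr c (J.filter (kk · = k)) (sv x))) := by
  obtain ⟨kk, hkk⟩ := exists_blocks (b := a ^ 12) (by positivity) J
  refine ⟨kk, ?_⟩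
  rw [sens_blocks c J kk, Finset.mul_sum]
  refine Finset.sum_le_sum fun k _ => ?_
  rw [← ex_mul_left]
  refine ex_mono fun x => ?_
  have hlt : (J.filter (kk · = k)).card < m := by
    have h1 := hkk k
    have h2 : 4 ≤ a ^ 12 := by
      calc 4 ≤ 2 ^ 12 := by norm_num
        _ ≤ a ^ 12 := by gcongr
    have h3 : J.card / a ^ 12 ≤ J.card / 4 := Nat.div_le_div_left h2 (by norm_num)
    omega
  refine (IH _ hlt _ (dg_restr hc _ _)).trans ?_
  have := gg_block (by omega) (hkk k) hb
  have := mn_nonneg hQ (restr c (J.filter (kk · = k)) (sv x))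
  gcongr

lemma step_biased {d a m : ℕ} (ha : 2 ≤ a) (had : 32 * d ≤ a ^ 10) {Q C0 : ℝ} (hQ : Q = 32 * a ^ 2) (hC0 : 0 ≤ C0)
    (IH : ∀ J : Finset ι, J.card < m → ∀ c : Finset ι → ℝ, dg d c → sens c J ≤ C0 * gg J.card * mn Q c)
    (J : Finset ι) (hJ : J.card = m) (hb : a ^ 12 ≤ m) {c : Finset ι → ℝ} (hc : dg d c)
    (hr : Q * rr c < 1) : sens c J ≤ C0 * gg m * mn Q c := by
  have ha' : (2:ℝ) ≤ a := by exact_mod_cast ha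
  have hQ2 : 2 ≤ Q := by rw [hQ]; nlinarith
  have hmn : mn Q c = Q * rr c := min_eq_right hr.le
  have hr0 := rr_nonneg c
  have hg := gg_nonneg m
  rcases (E2_nonneg c).eq_or_lt with h | hE
  · have h0 : rr c = 0 := by unfold rr; rw [← h]; simp
    have := sens_le_rr c J
    rw [hmn]; rw [h0] at this ⊢; linarith
  have hr2 : rr c ≤ 1 / 2 := by nlinarith
  obtain ⟨kk, hkk⟩ := step_blocks ha (by linarith) hC0 IH J hJ.le (hJ ▸ hb) hc
  refine hkk.trans ?_
  rw [hJ, hmn]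
  have h1 := biased hc J kk (by linarith : 0 ≤ Q) hE hr2
  calc _ ≤ C0 * (2 / a ^ 10 * gg m) * ((8 * d * Q + 8 * (a ^ 12 : ℕ)) * rr c) := by gcongr
    _ = C0 * gg m * (2 / a ^ 10 * (8 * d * Q + 8 * (a ^ 12 : ℕ)) * rr c) := by ring
    _ ≤ C0 * gg m * (Q * rr c) := by
      gcongr
      rw [hQ]
      push_cast
      rw [div_mul_eq_mul_div, div_le_iff₀ (by positivity)]
      have h3 : 32 * (d:ℝ) ≤ a ^ 10 := by exact_mod_cast had
      have h4 : 32 * (d:ℝ) * (16 * a ^ 2) ≤ a ^ 10 * (16 * a ^ 2) := by gcongr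
      nlinarith [h4]

lemma leaf_avg {κ : ℝ} {M : ℝ} (hM : 0 ≤ M) (f : (ι → Bool) → ℝ) (hf : ∀ x, f x ≤ M)
    (G : (ι → Bool) → Prop) (hG : κ ≤ pr G) (hfG : ∀ x, G x → f x ≤ M / 2) :
    ex f ≤ M - κ * M / 2 := by
  have h1 : ∀ x, f x ≤ M - M / 2 * ind (G x) := by
    intro x
    by_cases h : G x
    · rw [ind_of h]; linarith [hfG x h]
    · rw [ind_not h]; linarith [hf x]
  have h2 := ex_mono h1
  rw [ex_sub, ex_const, ex_mul_left] at h2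
  have : M / 2 * κ ≤ M / 2 * ex (fun x => ind (G x)) := mul_le_mul_of_nonneg_left hG (by positivity)
  linarith

lemma two_events {d : ℕ} {P : (ι → Bool) → Prop} (hP : 1 / (4 * 9 ^ d) ≤ pr P) {f : (ι → Bool) → ℝ}
    (hf : ∀ x, 0 ≤ f x) : 1 / tt d ≤ pr (fun x => P x ∧ f x ≤ tt d * ex f) := by
  have p2 := markov' hf (tt_pos d)
  have p3 := pr_and_ge P (fun x => ¬ tt d * ex f < f x)
  simp only [not_not] at p3
  have p4 : 1 / (4 * 9 ^ d) = 2 * (1 / tt d) := by unfold tt; field_simp; norm_num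
  simp only [not_lt] at p3
  rw [p4] at hP; linarith

lemma step_unbiased {d a m L : ℕ} (ha : 2 ≤ a) {Q C0 τ τ0 ε δ : ℝ} (hQ1 : 1 ≤ Q)
    (hτ0 : 0 < τ) (hτ1 : τ ≤ 1) (hτ2 : τ * (4 * tt d * 9 ^ d * (d + 1) ^ 2) ≤ τ0)
    (hε : (1 - τ) ^ L ≤ ε) (hε0 : 0 < ε) (hε1 : ε * (8 * tt d * (d + 1) * Q) ≤ 1)
    (hnum : 2 / a ^ 10 * (4 * tt d ^ 2 * (a ^ 12 : ℕ) * (144 * (CD d * Real.sqrt (Q / (a ^ 12 : ℕ))) + δ)) ≤ 1 / 2)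
    (hRL : ∀ c : Finset ι → ℝ, dg d c → 0 < E2 c →
      N4 c ≤ τ0 * E2 c ^ 2 → ∀ (J : Finset ι) (kk : ι → Fin (a ^ 12)),
      ∑ k, ex (fun x : ι → Bool => mn Q (restr c (J.filter (kk · = k)) (sv x)))
      ≤ 4 * tt d ^ 2 * (a ^ 12 : ℕ) * (144 * (CD d * Real.sqrt (Q / (a ^ 12 : ℕ))) + δ))
    (hC1 : 2 * (L + 1) * tt d ≤ C0) (hC2 : 2 * (a ^ 12 : ℕ) ≤ C0)
    (IH : ∀ J : Finset ι, J.card < m → ∀ c : Finset ι → ℝ, dg d c → sens c J ≤ C0 * gg J.card * mn Q c)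
    (J : Finset ι) (hJ : J.card = m) (hb : a ^ 12 ≤ m) {c : Finset ι → ℝ} (hc : dg d c)
    (hE : 0 < E2 c) : sens c J ≤ C0 * gg m := by
  have ht := tt_pos d
  have ht1 := tt_ge d
  have hC0 : 0 ≤ C0 := le_trans (by positivity) hC1
  have hm1 : 1 ≤ m := le_trans (Nat.one_le_pow _ _ (by omega)) hb
  have hg1 := gg_one hm1
  have hJne : J.Nonempty := by rw [← Finset.card_pos]; omega
  obtain ⟨H, hHJ, hHne, hHc, hH⟩ := comb (Inf c) (Inf_nonneg c) hτ0 hτ1 L J hJne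
  set T := J \ H with hT
  have hTm : T.card < m := by
    rw [← hJ]; apply Finset.card_lt_card
    rw [hT]; exact Finset.sdiff_ssubset hHJ hHne
  set M := C0 * gg m with hM
  have hM0 : 0 ≤ M := by positivity
  have hMC : C0 ≤ M := by rw [hM]; nlinarith
  have hgT : C0 * gg T.card ≤ M := by rw [hM]; exact mul_le_mul_of_nonneg_left (gg_mono hTm.le) hC0
  have hsplit : sens c J = sens c H + sens c T := by
    unfold sens; rw [hT, add_comm]; exact (Finset.sum_sdiff hHJ).symm
  have hsH : sens c H ≤ L + 1 := (sens_le_card c H).trans (by exact_mod_cast hHc)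
  have hsT := sens_restr c T
  have hall : ∀ x : ι → Bool, sens (restr c T (sv x)) T ≤ M := by
    intro x
    refine (IH T hTm _ (dg_restr hc _ _)).trans (le_trans ?_ hgT)
    have := mn_le_one Q (restr c T (sv x))
    have h0 : 0 ≤ C0 * gg T.card := mul_nonneg hC0 (gg_nonneg _)
    nlinarith
  suffices hG : ∃ G : (ι → Bool) → Prop, 1 / tt d ≤ pr G ∧ ∀ x, G x → sens (restr c T (sv x)) T ≤ M / 2 by
    obtain ⟨G, hG1, hG2⟩ := hG
    have h1 := leaf_avg hM0 _ hall G hG1 hG2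
    rw [hsT] at h1
    have h2 : (L:ℝ) + 1 ≤ 1 / tt d * M / 2 := by
      have : 2 * (L + 1) * tt d ≤ M := hC1.trans hMC
      rw [one_div, le_div_iff₀ (by norm_num), ← div_eq_inv_mul, le_div_iff₀ ht]
      linarith
    linarith
  have hS0 : 0 ≤ ∑ i ∈ T, Inf c i := Finset.sum_nonneg fun i _ => Inf_nonneg c i
  have hSJ0 : 0 ≤ ∑ i ∈ J, Inf c i := Finset.sum_nonneg fun i _ => Inf_nonneg c i
  have hSJ : ∑ i ∈ J, Inf c i ≤ d * E2 c := by
    refine le_trans ?_ (N2_le_E2 hc)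
    exact Finset.sum_le_sum_of_subset_of_nonneg (Finset.subset_univ _) fun i _ _ => Inf_nonneg c i
  by_cases hsmall : ∑ i ∈ T, Inf c i ≤ ε * ∑ i ∈ J, Inf c i
  · -- small tail
    have hS : ∑ i ∈ T, Inf c i ≤ ε * ((d + 1) * E2 c) := by
      refine hsmall.trans ?_
      gcongr
      nlinarith
    have hS2 : tt d * (∑ i ∈ T, Inf c i) * (8 * Q) ≤ E2 c := by
      calc tt d * (∑ i ∈ T, Inf c i) * (8 * Q) ≤ tt d * (ε * ((d + 1) * E2 c)) * (8 * Q) := by gcongr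
        _ = ε * (8 * tt d * (d + 1) * Q) * E2 c := by ring
        _ ≤ 1 * E2 c := by gcongr
        _ = E2 c := one_mul _
    have hS3 : ∑ i ∈ T, Inf c i ≤ E2 c / 2 := by
      have : 1 * (∑ i ∈ T, Inf c i) * (8 * 1) ≤ tt d * (∑ i ∈ T, Inf c i) * (8 * Q) := by gcongr
      linarith
    refine ⟨_, two_events (pz_mu_restr hc T) (fun x => Vr_nonneg (restr c T (sv x))), ?_⟩
    rintro x ⟨h1, h2⟩
    set q := restr c T (sv x) with hq
    have h3 : E2 c / 4 ≤ E2 q := by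
      have := E2_eq q; have := Vr_nonneg q; linarith
    have h4 : Vr q * (8 * Q) ≤ E2 c := by
      have h5 : Vr q ≤ tt d * ∑ i ∈ T, Inf c i := h2.trans (mul_le_mul_of_nonneg_left (ex_Vr_restr c T) ht.le)
      calc Vr q * (8 * Q) ≤ (tt d * ∑ i ∈ T, Inf c i) * (8 * Q) := by gcongr
        _ ≤ _ := hS2
    have h6 : mn Q q ≤ 1 / 2 := by
      refine (min_le_right _ _).trans ?_
      unfold rr
      rw [← mul_div_assoc, div_le_iff₀ (by linarith)]
      linarith
    refine (IH T hTm q (dg_restr hc _ _)).trans ?_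
    have h0 : 0 ≤ C0 * gg T.card := mul_nonneg hC0 (gg_nonneg _)
    nlinarith
  · -- regular tail
    have hreg : ∑ i ∈ T, Inf c i ^ 2 ≤ τ * (∑ i ∈ T, Inf c i) ^ 2 := by
      refine hH.resolve_right fun hcon => hsmall (hcon.trans ?_)
      gcongr
    have hSpos : 0 < ∑ i ∈ T, Inf c i := by
      refine lt_of_le_of_lt ?_ (not_le.1 hsmall); positivity
    set S := ∑ i ∈ T, Inf c i with hSdef
    refine ⟨_, two_events (pz_N2_restr hc T) (fun x => N4_nonneg (restr c T (sv x))), ?_⟩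
    rintro x ⟨h1, h2⟩
    by_cases hTb : T.card < a ^ 12
    · refine (sens_le_card _ _).trans ?_
      have : (T.card : ℝ) ≤ (a ^ 12 : ℕ) := by exact_mod_cast hTb.le
      linarith
    push Not at hTb
    set q := restr c T (sv x) with hq
    have hqd : dg d q := dg_restr hc _ _
    have h3 : S ≤ 2 * ((d + 1) * E2 q) := by
      have := N2_le_E2 hqd
      have := E2_nonneg q
      linarith
    have hEq : 0 < E2 q := by
      by_contra hcon
      have : E2 q = 0 := le_antisymm (not_lt.1 hcon) (E2_nonneg q)
      rw [this] at h3; linarith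
    have h4 : N4 q ≤ τ0 * E2 q ^ 2 := by
      have h5 := ex_N4_restr hc T
      calc N4 q ≤ tt d * (9 ^ d * ∑ i ∈ T, Inf c i ^ 2) := h2.trans (mul_le_mul_of_nonneg_left h5 ht.le)
        _ ≤ tt d * (9 ^ d * (τ * S ^ 2)) := by gcongr
        _ ≤ tt d * (9 ^ d * (τ * (2 * ((d + 1) * E2 q)) ^ 2)) := by gcongr
        _ = τ * (4 * tt d * 9 ^ d * (d + 1) ^ 2) * E2 q ^ 2 := by ring
        _ ≤ τ0 * E2 q ^ 2 := by gcongr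
    obtain ⟨kk, hkk⟩ := step_blocks ha (by linarith) hC0 IH T hTm.le hTb hqd
    refine hkk.trans ?_
    have h6 := hRL q hqd hEq h4 T kk
    have hgT0 := gg_nonneg T.card
    calc _ ≤ C0 * (2 / a ^ 10 * gg T.card) * (4 * tt d ^ 2 * (a ^ 12 : ℕ) * (144 * (CD d * Real.sqrt (Q / (a ^ 12 : ℕ))) + δ)) := by gcongr
      _ = (C0 * gg T.card) * (2 / a ^ 10 * (4 * tt d ^ 2 * (a ^ 12 : ℕ) * (144 * (CD d * Real.sqrt (Q / (a ^ 12 : ℕ))) + δ))) := by ring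
      _ ≤ (C0 * gg T.card) * (1 / 2) := by gcongr
      _ ≤ M / 2 := by linarith

end ind

set_option maxHeartbeats 1000000 in
theorem main_bound (d : ℕ) : ∃ C0 : ℝ, 0 < C0 ∧ ∀ (ι : Type) [Fintype ι] [DecidableEq ι] (J : Finset ι)
    (c : Finset ι → ℝ), dg d c → sens c J ≤ C0 * gg J.card := by
  have ht := tt_pos d
  have hCD := CD_pos d
  obtain ⟨a, ha⟩ := exists_nat_ge (32 * (d:ℝ) + 2 + 8 * tt d ^ 2 * (144 * (CD d * 6)) * 4)
  have hX : 0 ≤ 8 * tt d ^ 2 * (144 * (CD d * 6)) := by positivity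
  have ha2r : (2:ℝ) ≤ a := by have : (0:ℝ) ≤ d := by positivity
                              linarith
  have ha2 : 2 ≤ a := by exact_mod_cast ha2r
  have had : 32 * d ≤ a ^ 10 := by
    have h1 : 32 * d ≤ a := by
      have : 32 * (d:ℝ) ≤ a := by linarith
      exact_mod_cast this
    exact h1.trans (Nat.le_self_pow (by norm_num) a)
  set Q : ℝ := 32 * (a:ℝ) ^ 2 with hQ
  have ha0 : (0:ℝ) < a := by linarith
  set δ : ℝ := 1 / (32 * tt d ^ 2 * a ^ 2) with hδ
  have hδ0 : 0 < δ := by positivity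
  have hQb : Q ≤ ((a ^ 12 : ℕ) : ℝ) := by
    push_cast
    have : (2:ℝ) ^ 10 ≤ a ^ 10 := by gcongr
    have : (2:ℝ) ^ 10 * a ^ 2 ≤ a ^ 10 * a ^ 2 := by gcongr
    rw [hQ]; nlinarith [sq_nonneg (a:ℝ)]
  obtain ⟨τ0, hτ0, hRL⟩ := RL d (a ^ 12) (by positivity) Q (by positivity) hQb δ hδ0
  set A := 4 * tt d * 9 ^ d * ((d:ℝ) + 1) ^ 2 with hA
  have hA0 : 0 < A := by positivity
  set τ := min (1 / 2) (τ0 / A) with hτ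
  have hτpos : 0 < τ := by positivity
  have hτ1 : τ ≤ 1 / 2 := min_le_left _ _
  have hτ2 : τ * A ≤ τ0 := by
    have : τ ≤ τ0 / A := min_le_right _ _
    rwa [le_div_iff₀ hA0] at this
  set ε := 1 / (8 * tt d * ((d:ℝ) + 1) * Q) with hε
  have hε0 : 0 < ε := by positivity
  obtain ⟨L, hL⟩ := exists_pow_lt_of_lt_one hε0 (by linarith : 1 - τ < 1)
  set C0 := 2 * ((L:ℝ) + 1) * tt d + 2 * ((a ^ 12 : ℕ) : ℝ) with hC0
  have hC0pos : 0 < C0 := by positivity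
  have hC1 : 2 * ((L:ℝ) + 1) * tt d ≤ C0 := by rw [hC0]; linarith [show (0:ℝ) ≤ ((a ^ 12 : ℕ) : ℝ) by positivity]
  have hC2 : 2 * ((a ^ 12 : ℕ) : ℝ) ≤ C0 := by rw [hC0]; linarith [show (0:ℝ) ≤ 2 * ((L:ℝ) + 1) * tt d by positivity]
  have hnum : 2 / (a:ℝ) ^ 10 * (4 * tt d ^ 2 * (a ^ 12 : ℕ) * (144 * (CD d * Real.sqrt (Q / (a ^ 12 : ℕ))) + δ)) ≤ 1 / 2 := by
    have hsq : Real.sqrt (Q / (a ^ 12 : ℕ)) ≤ 6 / a ^ 5 := by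
      apply Real.sqrt_le_iff.2
      refine ⟨by positivity, ?_⟩
      rw [hQ, div_pow]
      push_cast
      rw [div_le_div_iff₀ (by positivity) (by positivity)]
      have : 0 ≤ (a:ℝ) ^ 12 := by positivity
      nlinarith
    have h1 : 2 / (a:ℝ) ^ 10 * (4 * tt d ^ 2 * (a ^ 12 : ℕ) * (144 * (CD d * Real.sqrt (Q / (a ^ 12 : ℕ))) + δ))
        ≤ 2 / (a:ℝ) ^ 10 * (4 * tt d ^ 2 * (a ^ 12 : ℕ) * (144 * (CD d * (6 / a ^ 5)) + δ)) := by gcongr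
    refine h1.trans ?_
    have h2 : 2 / (a:ℝ) ^ 10 * (4 * tt d ^ 2 * (a ^ 12 : ℕ) * (144 * (CD d * (6 / a ^ 5)) + δ))
        = 8 * tt d ^ 2 * (144 * (CD d * 6)) / a ^ 3 + 1 / 4 := by
      rw [hδ]; push_cast; field_simp; ring
    rw [h2]
    have h3 : 8 * tt d ^ 2 * (144 * (CD d * 6)) / a ^ 3 ≤ 1 / 4 := by
      rw [div_le_iff₀ (by positivity)]
      have h4 : (a:ℝ) ≤ a ^ 3 := le_self_pow₀ (by linarith) (by norm_num)
      have : (0:ℝ) ≤ d := by positivity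
      linarith
    linarith
  refine ⟨C0, hC0pos, fun ι _ _ => ?_⟩
  have hQ1 : 1 ≤ Q := by rw [hQ]; nlinarith
  have main : ∀ m : ℕ, ∀ J : Finset ι, J.card = m → ∀ c : Finset ι → ℝ, dg d c →
      sens c J ≤ C0 * gg J.card * mn Q c := by
    intro m
    induction m using Nat.strong_induction_on with
    | _ m ih =>
    intro J hJ c hc
    have IH : ∀ J : Finset ι, J.card < m → ∀ c : Finset ι → ℝ, dg d c → sens c J ≤ C0 * gg J.card * mn Q c :=
      fun J' hJ' c' hc' => ih _ hJ' J' rfl c' hc'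
    have hr0 := rr_nonneg c
    by_cases hb : a ^ 12 ≤ m
    · rw [hJ]
      by_cases hr : Q * rr c < 1
      · exact step_biased ha2 had hQ hC0pos.le IH J hJ hb hc hr
      · push Not at hr
        have : mn Q c = 1 := min_eq_left hr
        rw [this, mul_one]
        have hE : 0 < E2 c := by
          rcases (E2_nonneg c).eq_or_lt with h | h
          · exfalso
            have : rr c = 0 := by unfold rr; rw [← h]; simp
            rw [this] at hr; linarith
          · exact h
        refine step_unbiased (L := L) ha2 hQ1 hτpos (by linarith) hτ2 hL.le hε0 ?_ hnum (hRL ι) hC1 hC2 IH J hJ hb hc hE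
        rw [hε]; exact (one_div_mul_cancel (by positivity)).le
    · push Not at hb
      rcases Nat.eq_zero_or_pos m with h0 | h0
      · have h1 := sens_le_card c J
        rw [hJ, h0] at h1
        have h2 := mn_nonneg (by linarith : 0 ≤ Q) c
        have h3 := gg_nonneg J.card
        refine h1.trans ?_
        simp; positivity
      · have hg := gg_one h0
        have h1 := sens_le_card c J
        have h2 := sens_le_rr c J
        have hmb : (m:ℝ) ≤ (a ^ 12 : ℕ) := by exact_mod_cast hb.le
        rw [hJ] at h1 h2 ⊢
        have hm0 : (0:ℝ) ≤ m := by positivity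
        have h3 : sens c J ≤ m * mn Q c := by
          unfold mn
          rcases min_choice 1 (Q * rr c) with h | h
          · rw [h]; linarith
          · rw [h]
            have h4 : 4 * rr c ≤ Q * rr c := by
              have : 4 ≤ Q := by rw [hQ]; nlinarith
              gcongr
            calc _ ≤ _ := h2
              _ = m * (4 * rr c) := by ring
              _ ≤ _ := by gcongr
        refine h3.trans ?_
        have h5 := mn_nonneg (by linarith : 0 ≤ Q) c
        have h6 : (m:ℝ) ≤ C0 := by linarith
        have h7 : C0 * 1 ≤ C0 * gg m := mul_le_mul_of_nonneg_left hg hC0pos.le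
        exact mul_le_mul_of_nonneg_right (by linarith) h5
  intro J c hc
  refine (main _ J rfl c hc).trans ?_
  have h0 : 0 ≤ C0 * gg J.card := mul_nonneg hC0pos.le (gg_nonneg _)
  have := mn_le_one Q c
  nlinarith

end
end PTFas

namespace PTFas
noncomputable section

lemma bern_apply (s : Set ℝ) :
    bernoulliPM s = ∑ b : Bool, (1 / 2 : ℝ≥0∞) * s.indicator 1 (sg b) := by
  unfold bernoulliPM
  simp [sg]

instance : IsFiniteMeasure bernoulliPM := by
  refine ⟨?_⟩
  rw [bern_apply]
  refine ENNReal.sum_lt_top.2 fun b _ => ?_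
  simp

lemma cube_eq (n : ℕ) :
    bernoulliCube n = ∑ x : Fin n → Bool, ((1 / 2 : ℝ≥0∞) ^ n) • Measure.dirac (sv x) := by
  unfold bernoulliCube
  refine Measure.pi_eq (μ := fun _ => bernoulliPM) fun s hs => ?_
  simp only [bern_apply]
  rw [Finset.prod_univ_sum, Fintype.piFinset_univ]
  rw [Measure.finset_sum_apply]
  refine Finset.sum_congr rfl fun x _ => ?_
  rw [Finset.prod_mul_distrib]
  simp only [Finset.prod_const, Finset.card_univ, Fintype.card_fin, Measure.smul_apply, smul_eq_mul]
  congr 1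
  rw [Measure.dirac_apply]
  by_cases h : sv x ∈ Set.univ.pi s
  · rw [Set.indicator_of_mem h]
    symm
    apply Finset.prod_eq_one
    intro i _
    rw [Set.indicator_of_mem]; · rfl
    exact h i (Set.mem_univ i)
  · rw [Set.indicator_of_notMem h]
    simp only [Set.mem_pi, Set.mem_univ, true_imp_iff, not_forall] at h
    obtain ⟨i, hi⟩ := h
    symm
    apply Finset.prod_eq_zero (Finset.mem_univ i)
    rw [Set.indicator_of_notMem]; exact hi

lemma cube_real (n : ℕ) (s : Set (Fin n → ℝ)) :
    ((bernoulliCube n) s).toReal = pr (fun x : Fin n → Bool => sv x ∈ s) := by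
  rw [cube_eq, Measure.finset_sum_apply, ENNReal.toReal_sum]
  · unfold pr ex
    rw [Finset.sum_div]
    refine Finset.sum_congr rfl fun x _ => ?_
    rw [Measure.smul_apply, smul_eq_mul, ENNReal.toReal_mul, Measure.dirac_apply]
    have hcard : (Fintype.card (Fin n → Bool) : ℝ) = 2 ^ n := by simp
    rw [hcard]
    by_cases h : sv x ∈ s
    · rw [Set.indicator_of_mem h, ind_of h]; simp
    · rw [Set.indicator_of_notMem h, ind_not h]; simp
  · intro x _
    rw [Measure.smul_apply, smul_eq_mul, Measure.dirac_apply]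
    refine ENNReal.mul_ne_top (by simp) ?_
    by_cases h : sv x ∈ s
    · rw [Set.indicator_of_mem h]; simp
    · rw [Set.indicator_of_notMem h]; simp

lemma pow_prod_mem {n : ℕ} (s : Finset (Fin n)) (m : Fin n → ℕ) :
    (fun x : Fin n → Bool => ∏ i ∈ s, sv x i ^ m i) ∈ degSub (Fin n) (∑ i ∈ s, m i) := by
  induction s using Finset.induction_on with
  | empty => simpa using const_mem (κ := Fin n) 0 1
  | insert i s hi ih =>
    simp only [Finset.prod_insert hi, Finset.sum_insert hi]
    have h1 : (fun x : Fin n → Bool => sv x i ^ m i) ∈ degSub (Fin n) (m i) := by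
      generalize m i = k
      induction k with
      | zero => simpa using const_mem (κ := Fin n) 0 1
      | succ k ihk =>
        have := mul_mem ihk (coord_mem i)
        have e : (fun x : Fin n → Bool => sv x i ^ (k + 1))
            = (fun x => sv x i ^ k) * (fun x => sg (x i)) := by
          ext x; simp [pow_succ, sv]
        rw [e]; exact this
    exact mul_mem h1 ih

lemma poly_mem {n d : ℕ} (p : MvPolynomial (Fin n) ℝ) (hp : p.totalDegree ≤ d) :
    (fun x : Fin n → Bool => MvPolynomial.eval (sv x) p) ∈ degSub (Fin n) d := by
  have : (fun x : Fin n → Bool => MvPolynomial.eval (sv x) p)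
      = ∑ m ∈ p.support, p.coeff m • (fun x : Fin n → Bool => ∏ i ∈ m.support, sv x i ^ m i) := by
    ext x; rw [MvPolynomial.eval_eq]; simp [Finset.sum_apply]
  rw [this]
  refine Submodule.sum_mem _ fun m hm => Submodule.smul_mem _ _ ?_
  exact degSub_mono ((MvPolynomial.le_totalDegree hm).trans hp) (pow_prod_mem m.support m)

lemma psign_ne (u v : ℝ) : psign u ≠ psign v ↔ ¬ (0 ≤ u ↔ 0 ≤ v) := by
  unfold psign
  split_ifs with h1 h2 h2 <;> simp [h1, h2] <;> norm_num

lemma sv_flip {n : ℕ} (x : Fin n → Bool) (i : Fin n) :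
    Function.update (sv x) i (-(sv x i)) = sv (flip i x) := by
  ext j
  by_cases hj : j = i
  · subst hj; simp [sv, flip, sg_not]
  · simp [sv, flip, hj]

lemma avg_eq {n d : ℕ} (p : MvPolynomial (Fin n) ℝ) (hp : p.totalDegree ≤ d) :
    ∃ c : Finset (Fin n) → ℝ, dg d c ∧
      avgSensitivity n (fun x => psign (MvPolynomial.eval x p)) = sens c Finset.univ := by
  obtain ⟨c, hc, he⟩ := degSub_coef (poly_mem p hp)
  refine ⟨c, hc, ?_⟩
  unfold avgSensitivity sens
  refine Finset.sum_congr rfl fun i _ => ?_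
  rw [cube_real]
  unfold fl
  congr 1
  ext x
  rw [Set.mem_setOf_eq, psign_ne, sv_flip, ev_sv, ev_sv, ← he, ← he]

end
end PTFas

/-- **Average sensitivity bound.**  For every positive integer `d` and `c > 0` there is a
constant `C` depending only on `c` and `d` such that every degree-`d` polynomial threshold
function in `n` variables satisfies `as(f) ≤ C n^{5/6 + c}`. -/
theorem average_sensitivity_bound (d : ℕ) (hd : 0 < d) (c : ℝ) (hc : 0 < c) :
    ∃ C : ℝ, 0 < C ∧
      ∀ (n : ℕ) (p : MvPolynomial (Fin n) ℝ), p.totalDegree ≤ d →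
        avgSensitivity n (fun x => psign (MvPolynomial.eval x p)) ≤
          C * (n : ℝ) ^ ((5 : ℝ) / 6 + c) := by
  obtain ⟨C0, hC0, h⟩ := PTFas.main_bound d
  refine ⟨C0, hC0, fun n p hp => ?_⟩
  obtain ⟨e, he, hav⟩ := PTFas.avg_eq p hp
  rw [hav]
  refine (h (Fin n) Finset.univ e he).trans ?_
  unfold PTFas.gg
  rw [Finset.card_univ, Fintype.card_fin]
  refine mul_le_mul_of_nonneg_left ?_ hC0.le
  rcases Nat.eq_zero_or_pos n with h0 | h0
  · subst h0
    rw [Nat.cast_zero, Real.zero_rpow (by norm_num), Real.zero_rpow (by positivity)]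
  · exact Real.rpow_le_rpow_of_exponent_le (by exact_mod_cast h0) (by linarith)
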